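/- For every integer j with 0 ≤ j < 54 one has dim S_{j,2}(Γ₂) ≤ 1, and for every integer j with 0 ≤ j < 66 one has dim S_{j,2}(Γ₂) ≤ 2. -/

import Mathlib

noncomputable section

open Matrix Complex Filter Topology

/-- The standard symplectic form matrix of size 4. -/
def J4 : Matrix (Fin 4) (Fin 4) ℤ := !![0,0,1,0; 0,0,0,1; -1,0,0,0; 0,-1,0,0]

/-- The Siegel modular group `Γ₂ = Sp(4,ℤ)`, as a set of 4×4 integer matrices. -/
def Sp4Z : Set (Matrix (Fin 4) (Fin 4) ℤ) := {γ | γᵀ * J4 * γ = J4}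

/-- The principal congruence subgroup `Γ₂[2]` of level 2. -/
def Sp4Z2 : Set (Matrix (Fin 4) (Fin 4) ℤ) :=
  {γ | γ ∈ Sp4Z ∧ ∀ i j, ((γ i j : ZMod 2) = if i = j then 1 else 0)}

/-- The Siegel upper half space of degree 2: symmetric 2×2 complex matrices with
positive definite imaginary part (encoded as functions `Fin 2 → Fin 2 → ℂ`). -/
def H2 : Set (Fin 2 → Fin 2 → ℂ) :=
  {τ | (Matrix.of τ).IsSymm ∧ (Matrix.of fun i j => (τ i j).im).PosDef}

/-- The four 2×2 blocks of a 4×4 integer matrix, as complex matrices. -/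
def blk (γ : Matrix (Fin 4) (Fin 4) ℤ) (r s : Fin 2) : Matrix (Fin 2) (Fin 2) ℂ :=
  Matrix.of fun i j =>
    ((γ ⟨2 * (r : ℕ) + (i : ℕ), by have h1 := r.isLt; have h2 := i.isLt; omega⟩
        ⟨2 * (s : ℕ) + (j : ℕ), by have h1 := s.isLt; have h2 := j.isLt; omega⟩ : ℤ) : ℂ)

/-- The factor `cτ + d`. -/
def den (γ : Matrix (Fin 4) (Fin 4) ℤ) (τ : Fin 2 → Fin 2 → ℂ) : Matrix (Fin 2) (Fin 2) ℂ :=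
  blk γ 1 0 * Matrix.of τ + blk γ 1 1

/-- The action `γ·τ = (aτ+b)(cτ+d)⁻¹` of `Sp(4)` on the Siegel upper half space. -/
def moeb (γ : Matrix (Fin 4) (Fin 4) ℤ) (τ : Fin 2 → Fin 2 → ℂ) : Fin 2 → Fin 2 → ℂ :=
  fun i j => ((blk γ 0 0 * Matrix.of τ + blk γ 0 1) * (den γ τ)⁻¹) i j

/-- Matrix coefficients of the `j`-th symmetric power of the standard representation of
`GL(2,ℂ)`, in the basis `x₁^(j-i) x₂^i`. -/
def symCoeff (j : ℕ) (m : Matrix (Fin 2) (Fin 2) ℂ) (l i : Fin (j + 1)) : ℂ :=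
  (((Polynomial.C (m 0 0) + Polynomial.C (m 1 0) * Polynomial.X) ^ (j - (l : ℕ)) *
    (Polynomial.C (m 0 1) + Polynomial.C (m 1 1) * Polynomial.X) ^ (l : ℕ)).coeff i)

/-- The `j`-th symmetric power `Sym^j(m)` acting on coordinate vectors. -/
def symAct (j : ℕ) (m : Matrix (Fin 2) (Fin 2) ℂ) (v : Fin (j + 1) → ℂ) : Fin (j + 1) → ℂ :=
  fun i => ∑ l, symCoeff j m l i * v l

lemma symAct_add (j : ℕ) (m : Matrix (Fin 2) (Fin 2) ℂ) (v w : Fin (j + 1) → ℂ) :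
    symAct j m (v + w) = symAct j m v + symAct j m w := by
  funext i
  simp [symAct, mul_add, Finset.sum_add_distrib]

lemma symAct_smul (j : ℕ) (m : Matrix (Fin 2) (Fin 2) ℂ) (a : ℂ) (v : Fin (j + 1) → ℂ) :
    symAct j m (a • v) = a • symAct j m v := by
  funext i
  simp only [symAct, Pi.smul_apply, smul_eq_mul, Finset.mul_sum]
  exact Finset.sum_congr rfl fun l _ => by ring

lemma symAct_zero (j : ℕ) (m : Matrix (Fin 2) (Fin 2) ℂ) : symAct j m 0 = 0 := by
  funext i; simp [symAct]

/-- The weight `(j,k)` automorphy action `Sym^j(m) ⊗ det(m)^k`. -/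
def wt (j : ℕ) (k : ℤ) (m : Matrix (Fin 2) (Fin 2) ℂ) (v : Fin (j + 1) → ℂ) :
    Fin (j + 1) → ℂ :=
  (m.det ^ k) • symAct j m v

lemma wt_add (j : ℕ) (k : ℤ) (m : Matrix (Fin 2) (Fin 2) ℂ) (v w : Fin (j + 1) → ℂ) :
    wt j k m (v + w) = wt j k m v + wt j k m w := by
  simp [wt, symAct_add, smul_add]

lemma wt_smul (j : ℕ) (k : ℤ) (m : Matrix (Fin 2) (Fin 2) ℂ) (a : ℂ) (v : Fin (j + 1) → ℂ) :
    wt j k m (a • v) = a • wt j k m v := by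
  rw [wt, wt, symAct_smul, smul_comm]

lemma wt_zero (j : ℕ) (k : ℤ) (m : Matrix (Fin 2) (Fin 2) ℂ) : wt j k m 0 = 0 := by
  simp [wt, symAct_zero]

/-- The slash operation `(F|γ)(τ) = Sym^j(cτ+d)⁻¹ det(cτ+d)⁻ᵏ F(γ·τ)`. -/
def slashS (j : ℕ) (k : ℤ) (γ : Matrix (Fin 4) (Fin 4) ℤ)
    (F : (Fin 2 → Fin 2 → ℂ) → (Fin (j + 1) → ℂ)) (τ : Fin 2 → Fin 2 → ℂ) :
    Fin (j + 1) → ℂ :=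
  ((den γ τ).det ^ (-k)) • symAct j ((den γ τ)⁻¹) (F (moeb γ τ))

lemma slashS_add (j : ℕ) (k : ℤ) (γ : Matrix (Fin 4) (Fin 4) ℤ)
    (F G : (Fin 2 → Fin 2 → ℂ) → (Fin (j + 1) → ℂ)) (τ : Fin 2 → Fin 2 → ℂ) :
    slashS j k γ (F + G) τ = slashS j k γ F τ + slashS j k γ G τ := by
  simp [slashS, symAct_add, smul_add]

lemma slashS_smul (j : ℕ) (k : ℤ) (γ : Matrix (Fin 4) (Fin 4) ℤ) (a : ℂ)
    (F : (Fin 2 → Fin 2 → ℂ) → (Fin (j + 1) → ℂ)) (τ : Fin 2 → Fin 2 → ℂ) :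
    slashS j k γ (a • F) τ = a • slashS j k γ F τ := by
  simp only [slashS, Pi.smul_apply, symAct_smul]
  rw [smul_comm]

lemma slashS_zero (j : ℕ) (k : ℤ) (γ : Matrix (Fin 4) (Fin 4) ℤ) (τ : Fin 2 → Fin 2 → ℂ) :
    slashS j k γ (0 : (Fin 2 → Fin 2 → ℂ) → (Fin (j + 1) → ℂ)) τ = 0 := by
  simp [slashS, symAct_zero]

/-- The diagonal point `diag(τ₁,τ₂)` of the Siegel upper half space. -/
def diagH (τ₁ τ₂ : ℂ) : Fin 2 → Fin 2 → ℂ :=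
  fun i j => if i = j then (if i = 0 then τ₁ else τ₂) else 0

/-- `F` is a Siegel cusp form of degree 2 and weight `(j,k)` on `Γ`, with character `χ`:
holomorphic on `ℍ₂`, transforming by `F(γ·τ) = χ(γ) Sym^j(cτ+d) det(cτ+d)^k F(τ)` for `γ ∈ Γ`,
with `(F|γ)(diag(τ₁,it)) → 0` as `t → ∞` for every `γ ∈ Γ₂`, and (normalization) vanishing
off `ℍ₂`. -/
def IsSiegelCuspForm (j : ℕ) (k : ℤ) (Γ : Set (Matrix (Fin 4) (Fin 4) ℤ))
    (χ : Matrix (Fin 4) (Fin 4) ℤ → ℂ)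
    (F : (Fin 2 → Fin 2 → ℂ) → (Fin (j + 1) → ℂ)) : Prop :=
  DifferentiableOn ℂ F H2 ∧
  (∀ γ ∈ Γ, ∀ τ ∈ H2, F (moeb γ τ) = χ γ • wt j k (den γ τ) (F τ)) ∧
  (∀ γ ∈ Sp4Z, ∀ τ₁ : ℂ, 0 < τ₁.im →
    Tendsto (fun t : ℝ => slashS j k γ F (diagH τ₁ (t * Complex.I))) atTop (𝓝 0)) ∧
  (∀ τ, τ ∉ H2 → F τ = 0)

/-- The space `S_{j,k}(Γ, χ)` of Siegel cusp forms of degree 2 and weight `(j,k)` on `Γ`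
with character `χ`, as a complex vector space. -/
def SiegelCusp (j : ℕ) (k : ℤ) (Γ : Set (Matrix (Fin 4) (Fin 4) ℤ))
    (χ : Matrix (Fin 4) (Fin 4) ℤ → ℂ) :
    Submodule ℂ ((Fin 2 → Fin 2 → ℂ) → (Fin (j + 1) → ℂ)) where
  carrier := {F | IsSiegelCuspForm j k Γ χ F}
  add_mem' := by
    rintro F G hF hG
    refine ⟨hF.1.add hG.1, ?_, ?_, ?_⟩
    · intro γ hγ τ hτ
      show F (moeb γ τ) + G (moeb γ τ) = χ γ • wt j k (den γ τ) (F τ + G τ)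
      rw [wt_add, smul_add, hF.2.1 γ hγ τ hτ, hG.2.1 γ hγ τ hτ]
    · intro γ hγ τ₁ hτ
      have h := (hF.2.2.1 γ hγ τ₁ hτ).add (hG.2.2.1 γ hγ τ₁ hτ)
      rw [add_zero] at h
      exact h.congr fun t => (slashS_add j k γ F G _).symm
    · intro τ hτ
      show F τ + G τ = 0
      rw [hF.2.2.2 τ hτ, hG.2.2.2 τ hτ, add_zero]
  zero_mem' := by
    refine ⟨?_, ?_, ?_, ?_⟩
    · exact differentiableOn_const 0
    · intro γ hγ τ hτ
      show (0 : Fin (j + 1) → ℂ) = χ γ • wt j k (den γ τ) 0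
      rw [wt_zero, smul_zero]
    · intro γ hγ τ₁ hτ
      have : (fun t : ℝ => slashS j k γ (0 : (Fin 2 → Fin 2 → ℂ) → (Fin (j + 1) → ℂ))
          (diagH τ₁ (t * Complex.I))) = fun _ => 0 := by
        funext t; exact slashS_zero j k γ _
      rw [this]
      exact tendsto_const_nhds
    · intro τ _; rfl
  smul_mem' := by
    rintro a F hF
    refine ⟨hF.1.const_smul a, ?_, ?_, ?_⟩
    · intro γ hγ τ hτ
      show a • F (moeb γ τ) = χ γ • wt j k (den γ τ) (a • F τ)
      rw [hF.2.1 γ hγ τ hτ, wt_smul, smul_comm]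
    · intro γ hγ τ₁ hτ
      have h := (hF.2.2.1 γ hγ τ₁ hτ).const_smul a
      rw [smul_zero] at h
      exact h.congr fun t => (slashS_smul j k γ a F _).symm
    · intro τ hτ
      show a • F τ = 0
      rw [hF.2.2.2 τ hτ, smul_zero]

/-- `ε` is (on `Γ₂`) the unique nontrivial homomorphism `Γ₂ → {±1}`. -/
def IsEps (ε : Matrix (Fin 4) (Fin 4) ℤ → ℂ) : Prop :=
  (∀ γ ∈ Sp4Z, ε γ = 1 ∨ ε γ = -1) ∧
  (∀ γ ∈ Sp4Z, ∀ δ ∈ Sp4Z, ε (γ * δ) = ε γ * ε δ) ∧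
  (∃ γ ∈ Sp4Z, ε γ ≠ 1)

/-!
The Fourier coefficient `a(n, r, m)` of a Siegel cusp form of weight `(j, 2)` is a binary form of
degree `j`, and `GL₂(ℤ)` acts compatibly on the forms `[n, r, m]` and on the variables. Hence, if
the `m`-th Fourier–Jacobi coefficient vanishes to order `i`, in the sense that its top `i`
components vanish, then every `a(T)` with `T(p) = m` has a zero of order `i` at the point `p` of the
projective line, and `a(T) = 0` as soon as the orders over several `p` add up to more than `j`.

Orders come from Jacobi forms: when the top `i` components vanish, the next one is a Jacobi cusp
form of weight `2 + i` and index `m`. Its heat-corrected Taylor coefficients at `z = 0`, and the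
squared products of those at the three half-periods, are modular of level one. If such a function
has a small weight but a high order at the cusp, it is zero. This imposes linear equations on the
first row `(a(n, r, m))_r` that is not yet known to vanish, and together with the symmetry
`r ↦ -r`, periodicity and known zeros these often force that row to vanish as well.

Starting from `a(1, 1, 1) = 0` the two mechanisms feed each other: zeros of coefficients raise the
orders, and higher orders kill further coefficients, until the whole form vanishes. So a form is
determined by `a(1, 1, 1)`. The orders known in advance give `54` zeros of this binary form, and
each linear condition imposed on it gives six more, because the automorphism group of
`x² + xy + y²` acts on the projective line through a group of order six.
-/

/-! ### Fourier expansions on tube domains -/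

/-- The exponential `e(z) = exp(2πiz)`. -/
def expTwoPiI (z : ℂ) : ℂ := exp (2 * Real.pi * I * z)

local notation "𝐞" => expTwoPiI

lemma expTwoPiI_add (z w : ℂ) : 𝐞 (z + w) = 𝐞 z * 𝐞 w := by
  simp only [expTwoPiI, mul_add, Complex.exp_add]

lemma expTwoPiI_zero : 𝐞 0 = 1 := by simp [expTwoPiI]

lemma expTwoPiI_ne_zero (z : ℂ) : 𝐞 z ≠ 0 := Complex.exp_ne_zero _

lemma expTwoPiI_intCast (n : ℤ) : 𝐞 n = 1 := by
  rw [expTwoPiI, mul_comm]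
  exact Complex.exp_int_mul_two_pi_mul_I n

lemma expTwoPiI_add_intCast (z : ℂ) (n : ℤ) : 𝐞 (z + n) = 𝐞 z := by
  rw [expTwoPiI_add, expTwoPiI_intCast, mul_one]

lemma norm_expTwoPiI (z : ℂ) : ‖𝐞 z‖ = Real.exp (-2 * Real.pi * z.im) := by
  rw [expTwoPiI, Complex.norm_exp]
  congr 1
  simp

lemma differentiable_expTwoPiI : Differentiable ℂ expTwoPiI := by
  unfold expTwoPiI
  fun_prop

lemma expTwoPiI_one_half : 𝐞 (1 / 2) = -1 := by
  rw [expTwoPiI, ← Complex.exp_pi_mul_I]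
  ring_nf

lemma expTwoPiI_zpow (z : ℂ) (n : ℤ) : 𝐞 z ^ n = 𝐞 (n * z) := by
  rw [expTwoPiI, expTwoPiI, ← Complex.exp_int_mul]
  ring_nf

section Torus

open MeasureTheory UnitAddTorus Set Metric

variable {ι : Type*}

/-- The representative in `(0, 1]^ι` of a point of the torus `(ℝ/ℤ)^ι`. -/
def torusRep (x : UnitAddTorus ι) : ι → ℝ := fun i => (AddCircle.equivIoc 1 0 (x i)).1

lemma torusRep_mem_Icc (x : UnitAddTorus ι) : torusRep x ∈ Icc (0 : ι → ℝ) 1 :=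
  ⟨fun i => (AddCircle.equivIoc 1 0 (x i)).2.1.le,
    fun i => (AddCircle.equivIoc 1 0 (x i)).2.2.trans_eq (zero_add 1)⟩

lemma coe_torusRep (x : UnitAddTorus ι) : (fun i => (torusRep x i : UnitAddCircle)) = x :=
  funext fun i => (AddCircle.equivIoc 1 0).symm_apply_apply (x i)

lemma exists_int_torusRep_eq {x : UnitAddTorus ι} {y : ι → ℝ}
    (h : (fun i => (y i : UnitAddCircle)) = x) : ∃ n : ι → ℤ, ∀ i, torusRep x i = y i + n i := by
  have hi (i : ι) : ∃ n : ℤ, torusRep x i = y i + n := by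
    have h0 : ((torusRep x i - y i : ℝ) : UnitAddCircle) = 0 := by
      rw [AddCircle.coe_sub, sub_eq_zero]
      exact (congrFun (coe_torusRep x) i).trans (congrFun h i).symm
    obtain ⟨n, hn⟩ := (AddCircle.coe_eq_zero_iff 1).1 h0
    exact ⟨n, by linarith [hn, zsmul_one (R := ℝ) n]⟩
  choose n hn using hi
  exact ⟨n, hn⟩

lemma measurable_torusRep : Measurable (torusRep (ι := ι)) :=
  measurable_pi_iff.2 fun i => measurable_subtype_coe.comp
    ((AddCircle.measurableEquivIoc 1 0).measurable.comp (measurable_pi_apply i))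

/-- A real vector, regarded as a complex one. -/
def ofRealVec (x : ι → ℝ) : ι → ℂ := fun i => x i

lemma continuous_ofRealVec : Continuous (ofRealVec (ι := ι)) := by
  unfold ofRealVec
  fun_prop

/-- The character `p ↦ e(∑ Tᵢ pᵢ)` of `ℂ^ι` attached to an integer vector `T`. -/
def latticeChar [Fintype ι] (T : ι → ℤ) (p : ι → ℂ) : ℂ := 𝐞 (∑ i, T i * p i)

section

variable [Fintype ι]

lemma latticeChar_ne_zero (T : ι → ℤ) (p : ι → ℂ) : latticeChar T p ≠ 0 := expTwoPiI_ne_zero _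

lemma latticeChar_add (T : ι → ℤ) (p q : ι → ℂ) :
    latticeChar T (p + q) = latticeChar T p * latticeChar T q := by
  simp only [latticeChar, Pi.add_apply, mul_add, Finset.sum_add_distrib, expTwoPiI_add]

lemma latticeChar_neg_mul_self (T : ι → ℤ) (p : ι → ℂ) :
    latticeChar (-T) p * latticeChar T p = 1 := by
  simp [latticeChar, ← expTwoPiI_add, expTwoPiI_zero]

lemma latticeChar_intCast (T n : ι → ℤ) : latticeChar T (fun i => n i) = 1 := by
  rw [latticeChar, ← expTwoPiI_intCast (∑ i, T i * n i)]
  push_cast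
  rfl

lemma norm_latticeChar (T : ι → ℤ) (p : ι → ℂ) :
    ‖latticeChar T p‖ = Real.exp (-2 * Real.pi * ∑ i, T i * (p i).im) := by
  simp [latticeChar, norm_expTwoPiI]

lemma differentiable_latticeChar (T : ι → ℤ) : Differentiable ℂ (latticeChar T) :=
  differentiable_expTwoPiI.comp (by fun_prop)

lemma mFourier_coe_eq_latticeChar (T : ι → ℤ) (x : ι → ℝ) :
    mFourier T (fun i => (x i : UnitAddCircle)) = latticeChar T (ofRealVec x) := by
  simp only [mFourier, ContinuousMap.coe_mk, fourier_coe_apply, latticeChar, expTwoPiI, ofRealVec]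
  rw [← Complex.exp_sum, Finset.mul_sum]
  congr 1
  refine Finset.sum_congr rfl fun i _ => ?_
  push_cast
  ring

end

local instance : MeasureSpace UnitAddCircle := ⟨AddCircle.haarAddCircle⟩

local instance : Measure.IsAddHaarMeasure (volume : Measure UnitAddCircle) :=
  inferInstanceAs (Measure.IsAddHaarMeasure AddCircle.haarAddCircle)

local instance : IsProbabilityMeasure (volume : Measure UnitAddCircle) :=
  inferInstanceAs (IsProbabilityMeasure AddCircle.haarAddCircle)

lemma mFourier_coeff_eq_zero [Fintype ι] {b : (ι → ℤ) → ℂ}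
    (h : HasSum (fun T => b T • (mFourier T : C(UnitAddTorus ι, ℂ))) 0) : b = 0 := by
  funext S
  have hL2 := (h.mapL (ContinuousMap.toLp (E := ℂ) 2 (volume : Measure (UnitAddTorus ι)) ℂ)).mapL
    (innerSL ℂ (mFourierLp (d := ι) 2 S))
  have horth (T : ι → ℤ) : innerSL ℂ (mFourierLp (d := ι) 2 S)
      (ContinuousMap.toLp (E := ℂ) 2 (volume : Measure (UnitAddTorus ι)) ℂ (mFourier T)) =
        if S = T then 1 else 0 :=
    orthonormal_iff_ite.1 (orthonormal_mFourier (d := ι)) S T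
  simp only [map_zero, map_smul, horth] at hL2
  have hS := hasSum_single (f := fun T => b T • if S = T then (1 : ℂ) else 0) S
    fun T hT => by simp [hT.symm]
  simpa using hS.unique hL2

theorem latticeChar_coeff_eq_zero [Fintype ι] {b : (ι → ℤ) → ℂ} {p : ι → ℂ}
    (h : ∀ x : ι → ℝ, HasSum (fun T => b T * latticeChar T (p + ofRealVec x)) 0) : b = 0 := by
  have hx (x : ι → ℝ) :
      HasSum (fun T => b T * latticeChar T p * latticeChar T (ofRealVec x)) 0 := by
    simpa only [latticeChar_add, mul_assoc] using h x
  have hb : Summable fun T => b T * latticeChar T p := by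
    simpa [latticeChar, ofRealVec, expTwoPiI_zero] using (hx 0).summable
  obtain ⟨g, hg⟩ : Summable fun T =>
      (b T * latticeChar T p) • (mFourier T : C(UnitAddTorus ι, ℂ)) :=
    Summable.of_norm (by simpa only [norm_smul, mFourier_norm, mul_one] using hb.norm)
  obtain rfl : g = 0 := by
    ext x
    refine (ContinuousMap.hasSum_apply hg x).unique ?_
    rw [← coe_torusRep x]
    simpa only [ContinuousMap.smul_apply, mFourier_coe_eq_latticeChar, smul_eq_mul,
      ContinuousMap.zero_apply] using hx (torusRep x)
  funext T
  simpa [latticeChar_ne_zero] using congrFun (mFourier_coeff_eq_zero hg) T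

/-- Tube domains `ℝ^ι + iC`: connected open sets stable under real translations. -/
structure IsTubeDomain (U : Set (ι → ℂ)) : Prop where
  isOpen : IsOpen U
  isPreconnected : IsPreconnected U
  add_ofRealVec_mem : ∀ p ∈ U, ∀ x : ι → ℝ, p + ofRealVec x ∈ U

variable {U : Set (ι → ℂ)} {f : (ι → ℂ) → ℂ}

lemma apply_add_torusRep (hper : ∀ p ∈ U, ∀ n : ι → ℤ, f (p + fun i => (n i : ℂ)) = f p)
    {p : ι → ℂ} {y : ι → ℝ} (hp : p + ofRealVec y ∈ U) {x : UnitAddTorus ι}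
    (hx : (fun i => (y i : UnitAddCircle)) = x) :
    f (p + ofRealVec (torusRep x)) = f (p + ofRealVec y) := by
  obtain ⟨n, hn⟩ := exists_int_torusRep_eq hx
  rw [← hper _ hp n, add_assoc]
  congr 2
  funext i
  simp [ofRealVec, hn]

lemma continuous_comp_torusRep (hU : IsTubeDomain U) (hf : ContinuousOn f U)
    (hper : ∀ p ∈ U, ∀ n : ι → ℤ, f (p + fun i => (n i : ℂ)) = f p) {p : ι → ℂ} (hp : p ∈ U) :
    Continuous fun x : UnitAddTorus ι => f (p + ofRealVec (torusRep x)) := by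
  have hquot : IsOpenQuotientMap fun (y : ι → ℝ) (i : ι) => (y i : UnitAddCircle) :=
    IsOpenQuotientMap.piMap fun _ => QuotientAddGroup.isOpenQuotientMap_mk
  refine hquot.isQuotientMap.continuous_iff.2 ?_
  have : (fun x : UnitAddTorus ι => f (p + ofRealVec (torusRep x))) ∘
      (fun (y : ι → ℝ) (i : ι) => (y i : UnitAddCircle)) = fun y => f (p + ofRealVec y) :=
    funext fun y => apply_add_torusRep hper (hU.add_ofRealVec_mem p hp y) rfl
  rw [this]
  exact hf.comp_continuous (continuous_const.add continuous_ofRealVec) (hU.add_ofRealVec_mem p hp)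

variable [Fintype ι]

/-- The mean value of a `ℤ^ι`-periodic function `f` over the real torus through `p`. -/
def torusMean (f : (ι → ℂ) → ℂ) (p : ι → ℂ) : ℂ :=
  ∫ x : UnitAddTorus ι, f (p + ofRealVec (torusRep x))

lemma torusMean_add_ofRealVec (hU : IsTubeDomain U)
    (hper : ∀ p ∈ U, ∀ n : ι → ℤ, f (p + fun i => (n i : ℂ)) = f p) {p : ι → ℂ} (hp : p ∈ U)
    (y : ι → ℝ) : torusMean f (p + ofRealVec y) = torusMean f p := by
  unfold torusMean
  rw [← integral_add_right_eq_self (fun x : UnitAddTorus ι => f (p + ofRealVec (torusRep x)))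
    (fun i => (y i : UnitAddCircle))]
  congr 1
  funext x
  have hcoe : (fun i => ((y i + torusRep x i : ℝ) : UnitAddCircle)) =
      x + fun i => (y i : UnitAddCircle) := by
    funext i
    rw [AddCircle.coe_add, add_comm, Pi.add_apply]
    congr 1
    exact congrFun (coe_torusRep x) i
  rw [apply_add_torusRep hper (hU.add_ofRealVec_mem p hp _) hcoe, add_assoc]
  congr 2
  funext i
  simp [ofRealVec]

lemma exists_ball_torusRep_bound (hU : IsTubeDomain U) (hf : ContinuousOn f U)
    {p : ι → ℂ} (hp : p ∈ U) :
    ∃ r > 0, closedBall p r ⊆ U ∧ ∃ M, ∀ q ∈ closedBall p r, ∀ x : UnitAddTorus ι,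
      ‖f (q + ofRealVec (torusRep x))‖ ≤ M := by
  obtain ⟨r, hr, hrU⟩ := nhds_basis_closedBall.mem_iff.1 (hU.isOpen.mem_nhds hp)
  have hcont : ContinuousOn (fun q : (ι → ℂ) × (ι → ℝ) => f (q.1 + ofRealVec q.2))
      (closedBall p r ×ˢ Icc 0 1) :=
    hf.comp (continuous_fst.add (continuous_ofRealVec.comp continuous_snd)).continuousOn
      fun q hq => hU.add_ofRealVec_mem _ (hrU hq.1) _
  obtain ⟨M, hM⟩ :=
    ((isCompact_closedBall p r).prod isCompact_Icc).exists_bound_of_continuousOn hcont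
  exact ⟨r, hr, hrU, M, fun q hq x => hM (q, torusRep x) ⟨hq, torusRep_mem_Icc x⟩⟩

lemma differentiableAt_torusMean (hU : IsTubeDomain U) (hf : DifferentiableOn ℂ f U)
    (hper : ∀ p ∈ U, ∀ n : ι → ℤ, f (p + fun i => (n i : ℂ)) = f p) {p : ι → ℂ} (hp : p ∈ U) :
    DifferentiableAt ℂ (torusMean f) p := by
  obtain ⟨r, hr, hrU, M, hM⟩ := exists_ball_torusRep_bound hU hf.continuousOn hp
  have hcont {q : ι → ℂ} (hq : q ∈ U) :=
    continuous_comp_torusRep hU hf.continuousOn hper hq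
  have hdiff (x : UnitAddTorus ι) {q : ι → ℂ} (hq : q ∈ U) :
      HasFDerivAt (fun q => f (q + ofRealVec (torusRep x)))
        (fderiv ℂ f (q + ofRealVec (torusRep x))) q := by
    have hmem := hU.isOpen.mem_nhds (hU.add_ofRealVec_mem q hq (torusRep x))
    exact (hf.differentiableAt hmem).hasFDerivAt.comp q ((hasFDerivAt_id q).add_const _)
  have hbound (x : UnitAddTorus ι) {q : ι → ℂ} (hq : q ∈ ball p (r / 2)) :
      ‖fderiv ℂ f (q + ofRealVec (torusRep x))‖ ≤ (2 * M) / (r / 2) := by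
    have hsub : ball q (r / 2) ⊆ closedBall p r :=
      (ball_subset_ball' (by linarith [mem_ball.1 hq])).trans ball_subset_closedBall
    have hqr : q ∈ closedBall p r := hsub (mem_ball_self (by positivity))
    rw [← (hdiff x (hrU hqr)).fderiv]
    refine norm_fderiv_le_div_of_mapsTo_ball (fun z hz => ?_) (fun z hz => ?_) (by positivity)
    · exact (hdiff x (hrU (hsub hz))).differentiableAt.differentiableWithinAt
    · rw [mem_closedBall, dist_eq_norm]
      exact (norm_sub_le _ _).trans (by linarith [hM z (hsub hz) x, hM q hqr x])
  refine (hasFDerivAt_integral_of_dominated_of_fderiv_le (ball_mem_nhds p (half_pos hr))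
    (F' := fun q x => fderiv ℂ f (q + ofRealVec (torusRep x)))
    (bound := fun _ => (2 * M) / (r / 2)) ?_ ?_ ?_ ?_ ?_ ?_).differentiableAt
  · filter_upwards [hU.isOpen.mem_nhds hp] with q hq using (hcont hq).aestronglyMeasurable
  · exact (hcont hp).integrable_of_hasCompactSupport (.of_compactSpace _)
  · exact ((measurable_fderiv ℂ f).comp (measurable_const.add
      (continuous_ofRealVec.measurable.comp measurable_torusRep))).aestronglyMeasurable
  · exact .of_forall fun x q hq => hbound x hq
  · exact integrable_const _
  · exact .of_forall fun x q hq => hdiff x (hrU (ball_subset_closedBall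
      (ball_subset_ball (by linarith) hq)))

lemma fderiv_eq_zero_of_add_ofRealVec {κ : Type*} [Finite κ] {g : (κ → ℂ) → ℂ} {p : κ → ℂ}
    (hg : DifferentiableAt ℂ g p) (h : ∀ x : κ → ℝ, g (p + ofRealVec x) = g p) :
    fderiv ℂ g p = 0 := by
  have := Fintype.ofFinite κ
  have hreal (x : κ → ℝ) : fderiv ℂ g p (ofRealVec x) = 0 := by
    have hline : HasDerivAt (fun t : ℝ => g (p + (t : ℂ) • ofRealVec x))
        (fderiv ℂ g p (ofRealVec x)) 0 := by
      have hg' : HasFDerivAt g (fderiv ℂ g p) (p + ((0 : ℝ) : ℂ) • ofRealVec x) := by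
        simpa using hg.hasFDerivAt
      have hlin : HasDerivAt (fun t : ℝ => p + (t : ℂ) • ofRealVec x) (ofRealVec x) 0 := by
        simpa using (Complex.ofRealCLM.hasDerivAt.smul_const (ofRealVec x)).const_add p
      exact (hg'.restrictScalars ℝ).comp_hasDerivAt 0 hlin
    have hconst : (fun t : ℝ => g (p + (t : ℂ) • ofRealVec x)) = fun _ => g p := by
      funext t
      rw [← h (t • x)]
      congr 2
      funext i
      simp [ofRealVec]
    exact (hconst ▸ hline).unique (hasDerivAt_const _ _)
  ext1 v
  have hv : v = ofRealVec (fun i => (v i).re) + I • ofRealVec (fun i => (v i).im) := by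
    funext i
    simp [ofRealVec, mul_comm I]
  rw [hv, map_add, map_smul, hreal, hreal, smul_zero, add_zero, _root_.zero_apply]

theorem torusMean_eq_torusMean (hU : IsTubeDomain U) (hf : DifferentiableOn ℂ f U)
    (hper : ∀ p ∈ U, ∀ n : ι → ℤ, f (p + fun i => (n i : ℂ)) = f p)
    {p q : ι → ℂ} (hp : p ∈ U) (hq : q ∈ U) : torusMean f p = torusMean f q :=
  hU.isOpen.is_const_of_fderiv_eq_zero hU.isPreconnected
    (fun _ hx => (differentiableAt_torusMean hU hf hper hx).differentiableWithinAt)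
    (fun _ hx => fderiv_eq_zero_of_add_ofRealVec (differentiableAt_torusMean hU hf hper hx)
      fun _ => torusMean_add_ofRealVec hU hper hx _) hp hq

lemma norm_torusMean_le {p : ι → ℂ} {M : ℝ}
    (h : ∀ x : UnitAddTorus ι, ‖f (p + ofRealVec (torusRep x))‖ ≤ M) : ‖torusMean f p‖ ≤ M := by
  simpa [torusMean] using norm_integral_le_of_norm_le_const (μ := volume) (.of_forall h)

/-- The Fourier coefficient of index `T` of a `ℤ^ι`-periodic function, normalised at `p`. -/
def tubeCoeff (f : (ι → ℂ) → ℂ) (p : ι → ℂ) (T : ι → ℤ) : ℂ :=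
  torusMean (fun q => latticeChar (-T) q * f q) p

lemma tubeCoeff_eq_tubeCoeff (hU : IsTubeDomain U) (hf : DifferentiableOn ℂ f U)
    (hper : ∀ p ∈ U, ∀ n : ι → ℤ, f (p + fun i => (n i : ℂ)) = f p)
    {p q : ι → ℂ} (hp : p ∈ U) (hq : q ∈ U) (T : ι → ℤ) : tubeCoeff f p T = tubeCoeff f q T := by
  refine torusMean_eq_torusMean hU ((differentiable_latticeChar _).differentiableOn.mul hf) ?_ hp hq
  intro p hp n
  simp only [Pi.mul_apply]
  rw [latticeChar_add, latticeChar_intCast, mul_one, hper p hp]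

lemma mFourierCoeff_torusRep (f : (ι → ℂ) → ℂ) (p : ι → ℂ) (T : ι → ℤ) :
    mFourierCoeff (fun x => f (p + ofRealVec (torusRep x))) T =
      tubeCoeff f p T * latticeChar T p := by
  rw [mFourierCoeff, tubeCoeff, torusMean, ← integral_mul_const]
  congr 1
  funext x
  rw [latticeChar_add, smul_eq_mul, ← mFourier_coe_eq_latticeChar, coe_torusRep]
  linear_combination -(mFourier (-T) x * f (p + ofRealVec (torusRep x))) *
    latticeChar_neg_mul_self T p

lemma summable_prod_apply {β : Type*} {g : ι → β → ℝ} (h0 : ∀ i b, 0 ≤ g i b)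
    (hg : ∀ i, Summable (g i)) : Summable fun T : ι → β => ∏ i, g i (T i) := by
  classical
  refine summable_of_sum_le (c := ∏ i, ∑' b, g i b)
    (fun T => Finset.prod_nonneg fun i _ => h0 i (T i)) fun u => ?_
  calc ∑ T ∈ u, ∏ i, g i (T i)
      ≤ ∑ T ∈ Fintype.piFinset fun i => u.image (· i), ∏ i, g i (T i) :=
        Finset.sum_le_sum_of_subset_of_nonneg
          (fun T hT => Fintype.mem_piFinset.2 fun i => Finset.mem_image_of_mem _ hT)
          fun T _ _ => Finset.prod_nonneg fun i _ => h0 i (T i)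
    _ = ∏ i, ∑ b ∈ u.image (· i), g i b := (Finset.prod_univ_sum _ _).symm
    _ ≤ ∏ i, ∑' b, g i b :=
        Finset.prod_le_prod (fun i _ => Finset.sum_nonneg fun b _ => h0 i b)
          fun i _ => (hg i).sum_le_tsum _ fun b _ => h0 i b

lemma summable_exp_neg_mul_sum_abs {c : ℝ} (hc : 0 < c) :
    Summable fun T : ι → ℤ => Real.exp (-c * ∑ i, |(T i : ℝ)|) := by
  have hnat : Summable fun n : ℕ => Real.exp (-c * n) := by
    simpa only [mul_comm] using Real.summable_exp_nat_mul_iff.2 (neg_lt_zero.2 hc)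
  have hint : Summable fun n : ℤ => Real.exp (-c * |(n : ℝ)|) :=
    .of_nat_of_neg (by simpa using hnat) (by simpa using hnat)
  refine (summable_prod_apply (fun _ n => (Real.exp_pos _).le) fun _ : ι => hint).congr fun T => ?_
  rw [Finset.mul_sum, Real.exp_sum]

-- Shifting the imaginary part of `p` by `-ε sign T` gains the factor `exp (-2πε ∑ |Tᵢ|)`.
lemma summable_norm_tubeCoeff_mul_latticeChar (hU : IsTubeDomain U) (hf : DifferentiableOn ℂ f U)
    (hper : ∀ p ∈ U, ∀ n : ι → ℤ, f (p + fun i => (n i : ℂ)) = f p) {p : ι → ℂ} (hp : p ∈ U) :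
    Summable fun T => ‖tubeCoeff f p T * latticeChar T p‖ := by
  obtain ⟨r, hr, hrU, M, hM⟩ := exists_ball_torusRep_bound hU hf.continuousOn hp
  refine .of_nonneg_of_le (fun _ => norm_nonneg _) (fun T => ?_)
    ((summable_exp_neg_mul_sum_abs (c := 2 * Real.pi * r) (by positivity)).mul_left M)
  set q : ι → ℂ := fun i => p i - I * (r * SignType.sign (T i : ℝ) : ℝ) with hq
  have hqr : q ∈ closedBall p r := by
    refine mem_closedBall.2 ((dist_pi_le_iff hr.le).2 fun i => ?_)
    rw [dist_eq_norm, hq, sub_sub_cancel_left, norm_neg, norm_mul, norm_I, one_mul,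
      Complex.norm_real, norm_mul, Real.norm_of_nonneg hr.le]
    refine mul_le_of_le_one_right hr.le ?_
    cases SignType.sign (T i : ℝ) <;> simp
  have him : ∑ i, T i * (q i).im = ∑ i, T i * (p i).im - r * ∑ i, |(T i : ℝ)| := by
    rw [Finset.mul_sum, ← Finset.sum_sub_distrib]
    refine Finset.sum_congr rfl fun i _ => ?_
    rw [← self_mul_sign (T i : ℝ), hq]
    simp
    ring
  have hcoeff : ‖tubeCoeff f q T‖ ≤ ‖latticeChar (-T) q‖ * M := by
    refine norm_torusMean_le fun x => ?_
    have hnorm : ‖latticeChar (-T) (ofRealVec (torusRep x))‖ = 1 := by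
      simp [norm_latticeChar, ofRealVec]
    rw [latticeChar_add, norm_mul, norm_mul, hnorm, mul_one]
    exact mul_le_mul_of_nonneg_left (hM q hqr x) (norm_nonneg _)
  calc ‖tubeCoeff f p T * latticeChar T p‖
      ≤ ‖latticeChar (-T) q‖ * M * ‖latticeChar T p‖ := by
        rw [norm_mul, tubeCoeff_eq_tubeCoeff hU hf hper hp (hrU hqr)]
        exact mul_le_mul_of_nonneg_right hcoeff (norm_nonneg _)
    _ = M * Real.exp (-(2 * Real.pi * r) * ∑ i, |(T i : ℝ)|) := by
        rw [mul_comm _ M, mul_assoc, norm_latticeChar, norm_latticeChar, ← Real.exp_add]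
        simp only [Pi.neg_apply, Int.cast_neg, neg_mul, Finset.sum_neg_distrib, him]
        ring_nf

theorem hasSum_tubeCoeff_mul_latticeChar (hU : IsTubeDomain U) (hf : DifferentiableOn ℂ f U)
    (hper : ∀ p ∈ U, ∀ n : ι → ℤ, f (p + fun i => (n i : ℂ)) = f p) {p : ι → ℂ} (hp : p ∈ U) :
    HasSum (fun T => tubeCoeff f p T * latticeChar T p) (f p) := by
  let g : C(UnitAddTorus ι, ℂ) := ⟨_, continuous_comp_torusRep hU hf.continuousOn hper hp⟩
  have hg : mFourierCoeff g = fun T => tubeCoeff f p T * latticeChar T p :=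
    funext fun T => mFourierCoeff_torusRep f p T
  have hsum : Summable (mFourierCoeff g) :=
    hg ▸ (summable_norm_tubeCoeff_mul_latticeChar hU hf hper hp).of_norm
  have := hasSum_mFourier_series_apply_of_summable hsum (fun i => ((0 : ι → ℝ) i : UnitAddCircle))
  simp only [hg, mFourier_coe_eq_latticeChar] at this
  have h0 : ofRealVec (0 : ι → ℝ) = 0 := funext fun _ => Complex.ofReal_zero
  have hg0 : g (fun i => ((0 : ι → ℝ) i : UnitAddCircle)) = f p := by
    have hp0 : p + ofRealVec 0 ∈ U := hU.add_ofRealVec_mem p hp 0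
    exact (apply_add_torusRep hper hp0 rfl).trans (by rw [h0, add_zero])
  rw [hg0] at this
  simpa [h0, latticeChar, expTwoPiI_zero] using this

theorem exists_hasSum_latticeChar (hU : IsTubeDomain U) (hf : DifferentiableOn ℂ f U)
    (hper : ∀ p ∈ U, ∀ n : ι → ℤ, f (p + fun i => (n i : ℂ)) = f p) :
    ∃ a : (ι → ℤ) → ℂ, ∀ p ∈ U, HasSum (fun T => a T * latticeChar T p) (f p) := by
  obtain rfl | ⟨p₀, hp₀⟩ := U.eq_empty_or_nonempty
  · simp
  refine ⟨tubeCoeff f p₀, fun p hp => ?_⟩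
  rw [funext (tubeCoeff_eq_tubeCoeff hU hf hper hp₀ hp)]
  exact hasSum_tubeCoeff_mul_latticeChar hU hf hper hp

end Torus

/-! ### Symmetric powers as binary forms -/

section BinaryForms

variable {j : ℕ}

/-- The value at `(x, y)` of the binary form of degree `j` whose coefficient vector in the basis
`x^(j-l) y^l` is `v`, as a linear functional of `v`. -/
def binForm (x y : ℂ) : (Fin (j + 1) → ℂ) →ₗ[ℂ] ℂ where
  toFun v := ∑ l, v l * (x ^ (j - (l : ℕ)) * y ^ (l : ℕ))
  map_add' v w := by simp only [Pi.add_apply, add_mul, Finset.sum_add_distrib]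
  map_smul' c v := by simp [Finset.mul_sum, mul_assoc]

lemma binForm_apply (x y : ℂ) (v : Fin (j + 1) → ℂ) :
    binForm x y v = ∑ l, v l * (x ^ (j - (l : ℕ)) * y ^ (l : ℕ)) := rfl

lemma continuous_binForm (x y : ℂ) : Continuous (binForm (j := j) x y) :=
  LinearMap.continuous_of_finiteDimensional _

lemma sum_symCoeff_mul (m : Matrix (Fin 2) (Fin 2) ℂ) (l : Fin (j + 1)) (x y : ℂ) :
    ∑ i : Fin (j + 1), symCoeff j m l i * (x ^ (j - (i : ℕ)) * y ^ (i : ℕ)) =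
      (m 0 0 * x + m 1 0 * y) ^ (j - (l : ℕ)) * (m 0 1 * x + m 1 1 * y) ^ (l : ℕ) := by
  have hlin (a b : ℂ) :
      (MvPolynomial.C a * MvPolynomial.X 1 + MvPolynomial.C b * MvPolynomial.X 0 :
        MvPolynomial (Fin 2) ℂ).IsHomogeneous 1 :=
    (MvPolynomial.isHomogeneous_C_mul_X a 1).add (MvPolynomial.isHomogeneous_C_mul_X b 0)
  have hhom := Polynomial.homogenize_eq_of_isHomogeneous
    (((hlin (m 0 0) (m 1 0)).pow (j - (l : ℕ))).mul ((hlin (m 0 1) (m 1 1)).pow (l : ℕ))) rfl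
  have hdeg : 1 * (j - (l : ℕ)) + 1 * (l : ℕ) = j := by omega
  have heval := congrArg (MvPolynomial.eval ![y, x]) hhom
  simp only [hdeg, Polynomial.homogenize, Finset.Nat.sum_antidiagonal_eq_sum_range_succ_mk,
    Finset.sum_range, Polynomial.algebraMap_eq, map_sum, map_mul, map_pow, map_add,
    MvPolynomial.eval_C, MvPolynomial.eval_X, MvPolynomial.aeval_C, MvPolynomial.aeval_X,
    Matrix.cons_val_zero, Matrix.cons_val_one, mul_one] at heval
  rw [← heval]
  refine Finset.sum_congr rfl fun i _ => ?_
  rw [symCoeff, Finsupp.update_eq_add_single (by simp), MvPolynomial.monomial_single_add,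
    map_mul, MvPolynomial.eval_monomial]
  simp
  ring

lemma binForm_symAct (m : Matrix (Fin 2) (Fin 2) ℂ) (v : Fin (j + 1) → ℂ) (x y : ℂ) :
    binForm x y (symAct j m v) = binForm (m 0 0 * x + m 1 0 * y) (m 0 1 * x + m 1 1 * y) v := by
  simp only [binForm_apply, symAct, Finset.sum_mul, ← sum_symCoeff_mul, Finset.mul_sum]
  rw [Finset.sum_comm]
  exact Finset.sum_congr rfl fun l _ => Finset.sum_congr rfl fun i _ => by ring

/-- The dehomogenization `v(1, t)` of the binary form attached to `v`. -/
def dehomogenize (v : Fin (j + 1) → ℂ) : Polynomial ℂ :=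
  ∑ l : Fin (j + 1), Polynomial.monomial (l : ℕ) (v l)

lemma coeff_dehomogenize (v : Fin (j + 1) → ℂ) (l : Fin (j + 1)) :
    (dehomogenize v).coeff l = v l := by
  simp [dehomogenize, Polynomial.finsetSum_coeff, Polynomial.coeff_monomial, Fin.val_inj]

lemma eval_dehomogenize (v : Fin (j + 1) → ℂ) (t : ℂ) :
    (dehomogenize v).eval t = binForm 1 t v := by
  simp [dehomogenize, binForm_apply, Polynomial.eval_finsetSum]

lemma eq_of_binForm_eq {v w : Fin (j + 1) → ℂ} (h : ∀ x y, binForm x y v = binForm x y w) :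
    v = w := by
  have hp : dehomogenize v = dehomogenize w :=
    Polynomial.funext fun t => by rw [eval_dehomogenize, eval_dehomogenize, h]
  funext l
  rw [← coeff_dehomogenize v, hp, coeff_dehomogenize]

lemma eq_zero_of_binForm_eq_zero {v : Fin (j + 1) → ℂ} (h : ∀ x y, binForm x y v = 0) : v = 0 :=
  eq_of_binForm_eq fun x y => by rw [h, map_zero]

lemma symAct_one (v : Fin (j + 1) → ℂ) : symAct j 1 v = v :=
  eq_of_binForm_eq fun x y => by simp [binForm_symAct]

lemma binForm_mul_mul (c x y : ℂ) (v : Fin (j + 1) → ℂ) :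
    binForm (c * x) (c * y) v = c ^ j * binForm x y v := by
  simp only [binForm_apply, Finset.mul_sum]
  refine Finset.sum_congr rfl fun l _ => ?_
  have hc : c ^ j = c ^ (j - (l : ℕ)) * c ^ (l : ℕ) := by
    rw [← pow_add, Nat.sub_add_cancel (Nat.lt_succ_iff.1 l.2)]
  rw [hc]
  ring

lemma norm_binForm_le (v : Fin (j + 1) → ℂ) {x y : ℂ} {B : ℝ} (hx : ‖x‖ ≤ B) (hy : ‖y‖ ≤ B) :
    ‖binForm x y v‖ ≤ (j + 1) * (‖v‖ * B ^ j) := by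
  have hB : 0 ≤ B := (norm_nonneg x).trans hx
  rw [binForm_apply]
  refine (norm_sum_le_of_le _ (n := fun _ => ‖v‖ * B ^ j) fun l _ => ?_).trans_eq (by simp)
  rw [norm_mul, norm_mul, norm_pow, norm_pow]
  calc ‖v l‖ * (‖x‖ ^ (j - (l : ℕ)) * ‖y‖ ^ (l : ℕ))
      ≤ ‖v‖ * (B ^ (j - (l : ℕ)) * B ^ (l : ℕ)) := by gcongr; exact norm_le_pi_norm v l
    _ = ‖v‖ * B ^ j := by rw [← pow_add, Nat.sub_add_cancel (Nat.lt_succ_iff.1 l.2)]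

lemma symAct_upperTriangular (b c d : ℂ) {v : Fin (j + 1) → ℂ} {l : Fin (j + 1)}
    (hv : ∀ l', l < l' → v l' = 0) :
    symAct j !![b, c; 0, d] v l = b ^ (j - (l : ℕ)) * d ^ (l : ℕ) * v l := by
  have hdeg : (Polynomial.C c + Polynomial.C d * Polynomial.X).natDegree ≤ 1 := by
    rw [add_comm]
    exact Polynomial.natDegree_linear_le
  have hsym (l' : Fin (j + 1)) : symCoeff j !![b, c; 0, d] l' l = b ^ (j - (l' : ℕ)) *
      ((Polynomial.C c + Polynomial.C d * Polynomial.X) ^ (l' : ℕ)).coeff l := by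
    rw [← Polynomial.coeff_C_mul, map_pow, symCoeff]
    simp
  rw [symAct, Finset.sum_eq_single l ?_ (by simp)]
  · have hcoeff := Polynomial.coeff_pow_of_natDegree_le (m := (l : ℕ)) hdeg
    rw [mul_one] at hcoeff
    simp [hsym, hcoeff]
  · intro l' _ hne
    rcases lt_or_gt_of_ne hne with hlt | hgt
    · have hcoeff : ((Polynomial.C c + Polynomial.C d * Polynomial.X) ^ (l' : ℕ)).coeff l = 0 :=
        Polynomial.coeff_eq_zero_of_natDegree_lt
          ((Polynomial.natDegree_pow_le_of_le _ hdeg).trans_lt (by simpa using hlt))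
      simp [hsym, hcoeff]
    · rw [hv l' hgt, mul_zero]

end BinaryForms

/-! ### Siegel cusp forms of level one -/

section SiegelUpperHalfSpace

/-- The symmetric matrix with rows `(p₀, p₁)` and `(p₁, p₂)`. -/
def symMatrix (p : Fin 3 → ℂ) : Fin 2 → Fin 2 → ℂ := ![![p 0, p 1], ![p 1, p 2]]

/-- The Siegel upper half space in the coordinates of `symMatrix`. -/
def siegelTube : Set (Fin 3 → ℂ) := symMatrix ⁻¹' H2

lemma differentiable_symMatrix : Differentiable ℂ symMatrix := by
  refine differentiable_pi.2 fun i => differentiable_pi.2 fun k => ?_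
  fin_cases i <;> fin_cases k <;> exact differentiable_apply _

lemma eq_symMatrix_of_mem_H2 {τ : Fin 2 → Fin 2 → ℂ} (hτ : τ ∈ H2) :
    τ = symMatrix ![τ 0 0, τ 0 1, τ 1 1] := by
  have hsymm : τ 1 0 = τ 0 1 := by simpa using hτ.1.apply 0 1
  funext i k
  fin_cases i <;> fin_cases k <;> simp [symMatrix, hsymm]

lemma mem_siegelTube {p : Fin 3 → ℂ} : p ∈ siegelTube ↔ ∀ u v : ℝ, u ≠ 0 ∨ v ≠ 0 →
    0 < u ^ 2 * (p 0).im + 2 * u * v * (p 1).im + v ^ 2 * (p 2).im := by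
  have hsymm : (Matrix.of (symMatrix p)).IsSymm := by
    ext i k; fin_cases i <;> fin_cases k <;> simp [symMatrix]
  have hherm : (Matrix.of fun i k => (symMatrix p i k).im).IsHermitian := by
    ext i k; fin_cases i <;> fin_cases k <;> simp [symMatrix]
  have hform (x : Fin 2 → ℝ) :
      star x ⬝ᵥ ((Matrix.of fun i k => (symMatrix p i k).im) *ᵥ x) =
        x 0 ^ 2 * (p 0).im + 2 * x 0 * x 1 * (p 1).im + x 1 ^ 2 * (p 2).im := by
    simp [dotProduct, Matrix.mulVec, Fin.sum_univ_two, symMatrix]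
    ring
  simp only [siegelTube, H2, Set.mem_preimage, Set.mem_ofPred_eq, hsymm, true_and,
    Matrix.posDef_iff_dotProduct_mulVec, hherm, hform]
  refine ⟨fun h u v huv => h (x := ![u, v]) ?_, fun h x hx => h _ _ ?_⟩
  · rintro h0
    rcases huv with hu | hv
    · exact hu (congrFun h0 0)
    · exact hv (congrFun h0 1)
  · by_contra! hcon
    exact hx (funext fun i => by fin_cases i <;> simp [hcon])

lemma mem_siegelTube_iff_im {p : Fin 3 → ℂ} :
    p ∈ siegelTube ↔ 0 < (p 0).im ∧ (p 1).im ^ 2 < (p 0).im * (p 2).im := by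
  have key (u v : ℝ) : (p 0).im * (u ^ 2 * (p 0).im + 2 * u * v * (p 1).im + v ^ 2 * (p 2).im) =
      ((p 0).im * u + (p 1).im * v) ^ 2 + ((p 0).im * (p 2).im - (p 1).im ^ 2) * v ^ 2 := by ring
  rw [mem_siegelTube]
  constructor
  · intro h
    have h0 : 0 < (p 0).im := by simpa using h 1 0 (Or.inl one_ne_zero)
    have h1 := mul_pos h0 (h (-(p 1).im) (p 0).im (Or.inr h0.ne'))
    exact ⟨h0, sub_pos.1 (pos_of_mul_pos_left (b := (p 0).im ^ 2) (by rw [key] at h1; nlinarith)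
      (sq_nonneg _))⟩
  · rintro ⟨h0, h1⟩ u v huv
    refine pos_of_mul_pos_right (a := (p 0).im) ?_ h0.le
    rw [key]
    rcases eq_or_ne v 0 with rfl | hv
    · have hu : u ≠ 0 := by simpa using huv
      have := h0.ne'
      simp only [mul_zero, add_zero, ne_eq, OfNat.ofNat_ne_zero, not_false_eq_true, zero_pow]
      positivity
    · have := mul_pos (sub_pos.2 h1) (pow_pos (abs_pos.2 hv) 2)
      rw [sq_abs] at this
      positivity

lemma im_pos_of_mem_siegelTube {p : Fin 3 → ℂ} (hp : p ∈ siegelTube) : 0 < (p 0).im :=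
  (mem_siegelTube_iff_im.1 hp).1

lemma isTubeDomain_siegelTube : IsTubeDomain siegelTube where
  isOpen := by
    have hset : siegelTube = {p | 0 < (p 0).im} ∩ {p | (p 1).im ^ 2 < (p 0).im * (p 2).im} :=
      Set.ext fun _ => mem_siegelTube_iff_im
    rw [hset]
    exact (isOpen_lt (by fun_prop) (by fun_prop)).inter (isOpen_lt (by fun_prop) (by fun_prop))
  isPreconnected := by
    have hconvex : Convex ℝ siegelTube := convex_iff_forall_pos.2 fun p hp q hq s t hs ht _ => by
      rw [mem_siegelTube] at hp hq ⊢
      intro u v huv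
      have h := add_pos (mul_pos hs (hp u v huv)) (mul_pos ht (hq u v huv))
      simp only [Pi.add_apply, Pi.smul_apply, add_im, smul_im, smul_eq_mul]
      linarith
    exact hconvex.isPreconnected
  add_ofRealVec_mem p hp x := by
    simpa [mem_siegelTube, ofRealVec] using hp

/-- The coordinates of `U p Uᵀ` for the integer matrix `U` with rows `(a, b)` and `(c, d)`. -/
def congrAct (a b c d : ℤ) (p : Fin 3 → ℂ) : Fin 3 → ℂ :=
  ![a ^ 2 * p 0 + 2 * a * b * p 1 + b ^ 2 * p 2,
    a * c * p 0 + (a * d + b * c) * p 1 + b * d * p 2,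
    c ^ 2 * p 0 + 2 * c * d * p 1 + d ^ 2 * p 2]

/-- The coordinates of the image of `p` under the involution of `Γ₂` inverting `p₀`. -/
def invAct (p : Fin 3 → ℂ) : Fin 3 → ℂ := ![-1 / p 0, p 1 / p 0, p 2 - p 1 ^ 2 / p 0]

lemma congrAct_mem_siegelTube {a b c d : ℤ} (h : (a * d - b * c) ^ 2 = 1) {p : Fin 3 → ℂ}
    (hp : p ∈ siegelTube) : congrAct a b c d p ∈ siegelTube := by
  rw [mem_siegelTube] at hp ⊢
  intro u v huv
  have hR : ((a * d - b * c) ^ 2 : ℝ) = 1 := by exact_mod_cast h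
  have hne : u * a + v * c ≠ 0 ∨ u * b + v * d ≠ 0 := by
    by_contra! hcon
    have hu : u = 0 := by
      linear_combination (-u) * hR + (a * d - b * c) * (d * hcon.1 - c * hcon.2)
    have hv : v = 0 := by
      linear_combination (-v) * hR + (a * d - b * c) * (a * hcon.2 - b * hcon.1)
    exact huv.elim (· hu) (· hv)
  convert hp _ _ hne using 1
  simp [congrAct, pow_two]
  ring

-- With `s = (u - v p₁) / p₀`, the form of the image at `(u, v)` is the form of `p` at `(re s, v)`
-- plus `(im s)² im p₀`.
lemma invAct_mem_siegelTube {p : Fin 3 → ℂ} (hp : p ∈ siegelTube) : invAct p ∈ siegelTube := by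
  have h0 : 0 < (p 0).im := im_pos_of_mem_siegelTube hp
  have hp0 : p 0 ≠ 0 := fun h => by simp [h] at h0
  rw [mem_siegelTube] at hp ⊢
  intro u v huv
  obtain ⟨s, hs⟩ : ∃ s : ℂ, (u : ℂ) = v * p 1 + s * p 0 :=
    ⟨(u - v * p 1) / p 0, by field_simp; ring⟩
  have hre := congrArg Complex.re hs
  have him := congrArg Complex.im hs
  simp only [ofReal_re, ofReal_im, add_re, add_im, mul_re, mul_im, zero_mul, add_zero,
    sub_zero] at hre him
  have hform : u ^ 2 * (invAct p 0).im + 2 * u * v * (invAct p 1).im + v ^ 2 * (invAct p 2).im =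
      (v ^ 2 * p 2 - s ^ 2 * p 0 : ℂ).im := by
    have h : (v ^ 2 * p 2 - s ^ 2 * p 0 : ℂ) =
        u ^ 2 * invAct p 0 + 2 * u * v * invAct p 1 + v ^ 2 * invAct p 2 := by
      simp only [invAct, hs, Matrix.cons_val]
      field_simp
      ring
    rw [h]
    simp [pow_two]
  have hsum : (v ^ 2 * p 2 - s ^ 2 * p 0 : ℂ).im = s.im ^ 2 * (p 0).im +
      (s.re ^ 2 * (p 0).im + 2 * s.re * v * (p 1).im + v ^ 2 * (p 2).im) := by
    simp only [pow_two, sub_im, mul_im, mul_re, ofReal_re, ofReal_im]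
    linear_combination 2 * s.re * him
  rw [hform, hsum]
  by_cases hsv : s.re ≠ 0 ∨ v ≠ 0
  · have := hp _ _ hsv
    positivity
  · push Not at hsv
    have hs_im : s.im ≠ 0 := fun h => by
      have hu : u = 0 := by simpa [hsv, h] using hre
      exact huv.elim (· hu) (· hsv.2)
    have hpos : 0 < s.im ^ 2 * (p 0).im := by positivity
    simpa [hsv] using hpos

end SiegelUpperHalfSpace

section TransformationLaws

variable {j : ℕ} {k : ℤ} {F : (Fin 2 → Fin 2 → ℂ) → (Fin (j + 1) → ℂ)}

lemma IsSiegelCuspForm.apply_symMatrix (hF : IsSiegelCuspForm j k Sp4Z (fun _ => 1) F)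
    {γ : Matrix (Fin 4) (Fin 4) ℤ} (hγ : γ ∈ Sp4Z) {p q : Fin 3 → ℂ} (hp : p ∈ siegelTube)
    {D : Matrix (Fin 2) (Fin 2) ℂ} (hD : den γ (symMatrix p) = D) (hdet : D.det ≠ 0)
    (hq : blk γ 0 0 * Matrix.of (symMatrix p) + blk γ 0 1 = Matrix.of (symMatrix q) * D) :
    F (symMatrix q) = wt j k D (F (symMatrix p)) := by
  have hmoeb : moeb γ (symMatrix p) = symMatrix q := by
    funext i l
    rw [moeb, hD, hq, Matrix.mul_assoc, Matrix.mul_nonsing_inv _ hdet.isUnit, Matrix.mul_one]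
    rfl
  simpa [hmoeb, hD] using hF.2.1 γ hγ (symMatrix p) hp

lemma IsSiegelCuspForm.apply_add_intCast (hF : IsSiegelCuspForm j k Sp4Z (fun _ => 1) F)
    {p : Fin 3 → ℂ} (hp : p ∈ siegelTube) (n : Fin 3 → ℤ) :
    F (symMatrix (p + fun i => (n i : ℂ))) = F (symMatrix p) := by
  rw [hF.apply_symMatrix (γ := !![1, 0, n 0, n 1; 0, 1, n 1, n 2; 0, 0, 1, 0; 0, 0, 0, 1])
    (D := 1) ?_ hp ?_ (by simp) ?_]
  · simp [wt, symAct_one]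
  · simp only [Sp4Z, J4, Set.mem_ofPred_eq]
    ext i l
    fin_cases i <;> fin_cases l <;> simp [Matrix.mul_apply, Fin.sum_univ_four]
  · ext i l
    fin_cases i <;> fin_cases l <;> simp [den, blk, Matrix.mul_apply]
  · ext i l
    fin_cases i <;> fin_cases l <;> simp [symMatrix, blk, Matrix.mul_apply]

lemma IsSiegelCuspForm.binForm_congrAct (hF : IsSiegelCuspForm j k Sp4Z (fun _ => 1) F)
    {a b c d e : ℤ} (he : a * d - b * c = e) (he2 : e ^ 2 = 1) {p : Fin 3 → ℂ}
    (hp : p ∈ siegelTube) (x y : ℂ) :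
    binForm (a * x + b * y) (c * x + d * y) (F (symMatrix (congrAct a b c d p))) =
      (e : ℂ) ^ k * binForm x y (F (symMatrix p)) := by
  have heC : (a * d - b * c : ℂ) = e := by exact_mod_cast he
  have he2C : (e : ℂ) ^ 2 = 1 := by exact_mod_cast he2
  have hinv : (e * (a * d - b * c) : ℂ) = 1 := by rw [heC, ← sq, he2C]
  have hdet : (!![(e * d : ℂ), -(e * c); -(e * b), e * a]).det = e := by
    rw [Matrix.det_fin_two_of]
    linear_combination (e : ℂ) * hinv
  rw [hF.apply_symMatrix (γ := !![a, b, 0, 0; c, d, 0, 0; 0, 0, e * d, -(e * c);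
    0, 0, -(e * b), e * a]) (D := !![(e * d : ℂ), -(e * c); -(e * b), e * a]) ?_ hp ?_ ?_ ?_]
  · rw [wt, map_smul, binForm_symAct, hdet, smul_eq_mul]
    have hx : (e * d * (a * x + b * y) + -(e * b * (c * x + d * y)) : ℂ) = x := by
      linear_combination x * hinv
    have hy : (-(e * c * (a * x + b * y)) + e * a * (c * x + d * y) : ℂ) = y := by
      linear_combination y * hinv
    simp [hx, hy]
  · simp only [Sp4Z, J4, Set.mem_ofPred_eq]
    ext i l
    fin_cases i <;> fin_cases l <;>
      simp only [Matrix.mul_apply, Matrix.transpose_apply, Matrix.of_apply, Fin.sum_univ_four,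
        Fin.zero_eta, Fin.mk_one, Fin.reduceFinMk, Matrix.cons_val]
    all_goals first
      | ring1
      | linear_combination e * he + he2
      | linear_combination -e * he - he2
  · ext i l
    fin_cases i <;> fin_cases l <;> simp [den, blk, Matrix.mul_apply]
  · rw [hdet]
    intro h
    simp [h] at he2C
  · ext i l
    fin_cases i <;> fin_cases l <;>
      simp [symMatrix, congrAct, blk, Matrix.mul_apply, Fin.sum_univ_two]
    · linear_combination -(a * p 0 + b * p 1) * hinv
    · linear_combination -(a * p 1 + b * p 2) * hinv
    · linear_combination -(c * p 0 + d * p 1) * hinv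
    · linear_combination -(c * p 1 + d * p 2) * hinv

lemma IsSiegelCuspForm.apply_invAct (hF : IsSiegelCuspForm j k Sp4Z (fun _ => 1) F)
    {p : Fin 3 → ℂ} (hp : p ∈ siegelTube) :
    F (symMatrix (invAct p)) = p 0 ^ k • symAct j !![p 0, p 1; 0, 1] (F (symMatrix p)) := by
  have h0 : p 0 ≠ 0 := fun h => by simpa [h] using im_pos_of_mem_siegelTube hp
  rw [hF.apply_symMatrix (γ := !![0, 0, -1, 0; 0, 1, 0, 0; 1, 0, 0, 0; 0, 0, 0, 1])
    (D := !![p 0, p 1; 0, 1]) ?_ hp ?_ (by simpa [Matrix.det_fin_two_of] using h0) ?_]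
  · simp [wt, Matrix.det_fin_two_of]
  · simp only [Sp4Z, J4, Set.mem_ofPred_eq]
    ext i l
    fin_cases i <;> fin_cases l <;> simp [Matrix.mul_apply, Fin.sum_univ_four]
  · ext i l
    fin_cases i <;> fin_cases l <;> simp [den, blk, symMatrix, Matrix.mul_apply]
  · ext i l
    fin_cases i <;> fin_cases l <;>
      simp [symMatrix, invAct, blk, Matrix.mul_apply, Fin.sum_univ_two] <;> field_simp <;> ring

lemma IsSiegelCuspForm.tendsto_diagonal (hF : IsSiegelCuspForm j k Sp4Z (fun _ => 1) F) {τ : ℂ}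
    (hτ : 0 < τ.im) :
    Tendsto (fun s : ℝ => F (symMatrix ![τ, 0, s * I])) atTop (𝓝 0) := by
  have hden (τ : Fin 2 → Fin 2 → ℂ) : den 1 τ = 1 := by
    ext i l
    fin_cases i <;> fin_cases l <;> simp [den, blk, Matrix.mul_apply, Matrix.one_apply]
  have hmoeb (τ : Fin 2 → Fin 2 → ℂ) : moeb 1 τ = τ := by
    funext i l
    rw [moeb, hden]
    fin_cases i <;> fin_cases l <;> simp [blk, Matrix.mul_apply, Matrix.one_apply]
  refine (hF.2.2.1 1 (by simp [Sp4Z]) τ hτ).congr fun s => ?_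
  have hdiag : diagH τ (s * I) = symMatrix ![τ, 0, s * I] := by
    funext i l
    fin_cases i <;> fin_cases l <;> simp [diagH, symMatrix]
  simp [slashS, hden, hmoeb, hdiag, symAct_one]

end TransformationLaws

/-! ### Fourier coefficients -/

section FourierCoefficients

/-- The character `e(nτ + rz + mτ')` attached to the index `t = (m, n, r)`. The outer index `m` is
the first one, so that the Fourier–Jacobi coefficients are sums over fibres of `Prod.fst`. -/
def siegelChar (t : ℤ × ℤ × ℤ) (p : Fin 3 → ℂ) : ℂ :=
  𝐞 (t.2.1 * p 0 + t.2.2 * p 1 + t.1 * p 2)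

/-- The reindexing of `(m, n, r)` as the vector of exponents of `siegelChar`. -/
def siegelIndexEquiv : ℤ × ℤ × ℤ ≃ (Fin 3 → ℤ) where
  toFun t := ![t.2.1, t.2.2, t.1]
  invFun T := (T 2, T 0, T 1)
  left_inv _ := rfl
  right_inv T := by
    funext i
    fin_cases i <;> rfl

lemma siegelChar_eq_latticeChar (t : ℤ × ℤ × ℤ) :
    siegelChar t = latticeChar (siegelIndexEquiv t) := by
  funext p
  rw [siegelChar, latticeChar, Fin.sum_univ_three]
  rfl

lemma siegelChar_coeff_eq_zero {b : ℤ × ℤ × ℤ → ℂ}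
    (h : ∀ p ∈ siegelTube, HasSum (fun t => b t * siegelChar t p) 0) : b = 0 := by
  have hI : ![I, 0, I] ∈ siegelTube := by simp [mem_siegelTube_iff_im]
  have hb : b ∘ siegelIndexEquiv.symm = 0 := by
    refine latticeChar_coeff_eq_zero (p := ![I, 0, I]) fun x => ?_
    rw [← siegelIndexEquiv.hasSum_iff]
    simpa [Function.comp_def, siegelChar_eq_latticeChar] using
      h _ (isTubeDomain_siegelTube.add_ofRealVec_mem _ hI x)
  funext t
  simpa using congrFun hb (siegelIndexEquiv t)

variable {j : ℕ} {k : ℤ} {F : (Fin 2 → Fin 2 → ℂ) → (Fin (j + 1) → ℂ)}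
  {a : ℤ → ℤ → ℤ → Fin (j + 1) → ℂ}

/-- `a n r m` is the Fourier coefficient of `F` at the binary quadratic form `[n, r, m]`, that is
`nX² + rXY + mY²`. -/
def IsFourierCoeff (F : (Fin 2 → Fin 2 → ℂ) → (Fin (j + 1) → ℂ))
    (a : ℤ → ℤ → ℤ → Fin (j + 1) → ℂ) : Prop :=
  ∀ p ∈ siegelTube,
    HasSum (fun t : ℤ × ℤ × ℤ => siegelChar t p • a t.2.1 t.2.2 t.1) (F (symMatrix p))

theorem IsSiegelCuspForm.exists_isFourierCoeff
    (hF : IsSiegelCuspForm j k Sp4Z (fun _ => 1) F) : ∃ a, IsFourierCoeff F a := by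
  have hdiff : DifferentiableOn ℂ (F ∘ symMatrix) siegelTube :=
    hF.1.comp differentiable_symMatrix.differentiableOn fun _ hp => hp
  choose a ha using fun l => exists_hasSum_latticeChar isTubeDomain_siegelTube
    (differentiableOn_pi.1 hdiff l) fun p hp n => congrFun (hF.apply_add_intCast hp n) l
  refine ⟨fun n r m l => a l (siegelIndexEquiv (m, n, r)), fun p hp => Pi.hasSum.2 fun l => ?_⟩
  simpa [Function.comp_def, siegelChar_eq_latticeChar, mul_comm] using
    siegelIndexEquiv.hasSum_iff.2 (ha l p hp)

lemma hasSum_binForm_smul {ι : Type*} {f : ι → ℂ} {v : ι → Fin (j + 1) → ℂ} {s : Fin (j + 1) → ℂ}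
    (h : HasSum (fun i => f i • v i) s) (x y : ℂ) :
    HasSum (fun i => binForm x y (v i) * f i) (binForm x y s) := by
  simpa [Function.comp_def, mul_comm] using h.map (binForm x y) (continuous_binForm x y)

lemma IsFourierCoeff.hasSum_binForm (ha : IsFourierCoeff F a) {p : Fin 3 → ℂ}
    (hp : p ∈ siegelTube) (x y : ℂ) :
    HasSum (fun t : ℤ × ℤ × ℤ => binForm x y (a t.2.1 t.2.2 t.1) * siegelChar t p)
      (binForm x y (F (symMatrix p))) :=
  hasSum_binForm_smul (ha p hp) x y

lemma IsFourierCoeff.unique {b : ℤ → ℤ → ℤ → Fin (j + 1) → ℂ} (ha : IsFourierCoeff F a)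
    (hb : IsFourierCoeff F b) : a = b := by
  funext n r m
  refine eq_of_binForm_eq fun x y => sub_eq_zero.1 ?_
  refine congrFun (siegelChar_coeff_eq_zero (b := fun t => binForm x y (a t.2.1 t.2.2 t.1) -
    binForm x y (b t.2.1 t.2.2 t.1)) fun p hp => ?_) (m, n, r)
  simpa [sub_mul] using (ha.hasSum_binForm hp x y).sub (hb.hasSum_binForm hp x y)

/-- The index of the form `t` composed with the substitution `(X, Y) ↦ (αX + βY, γX + δY)`. -/
def substIndex (α β γ δ : ℤ) (t : ℤ × ℤ × ℤ) : ℤ × ℤ × ℤ :=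
  (t.2.1 * β ^ 2 + t.2.2 * β * δ + t.1 * δ ^ 2,
    t.2.1 * α ^ 2 + t.2.2 * α * γ + t.1 * γ ^ 2,
    2 * t.2.1 * α * β + t.2.2 * (α * δ + β * γ) + 2 * t.1 * γ * δ)

lemma substIndex_substIndex {α β γ δ : ℤ} (h : (α * δ - β * γ) ^ 2 = 1) (t : ℤ × ℤ × ℤ) :
    substIndex δ (-β) (-γ) α (substIndex α β γ δ t) = t := by
  obtain ⟨m, n, r⟩ := t
  simp only [substIndex, Prod.mk.injEq]
  exact ⟨by linear_combination m * h, by linear_combination n * h, by linear_combination r * h⟩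

/-- `substIndex` as a permutation, for a substitution in `GL₂(ℤ)`. -/
def substIndexEquiv {α β γ δ : ℤ} (h : (α * δ - β * γ) ^ 2 = 1) : ℤ × ℤ × ℤ ≃ ℤ × ℤ × ℤ where
  toFun := substIndex α β γ δ
  invFun := substIndex δ (-β) (-γ) α
  left_inv := substIndex_substIndex h
  right_inv t := by
    simpa using substIndex_substIndex (α := δ) (β := -β) (γ := -γ) (δ := α) (by rw [← h]; ring) t

lemma siegelChar_congrAct (α β γ δ : ℤ) (t : ℤ × ℤ × ℤ) (p : Fin 3 → ℂ) :
    siegelChar t (congrAct α β γ δ p) = siegelChar (substIndex α β γ δ t) p := by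
  simp only [siegelChar, congrAct, substIndex, Matrix.cons_val]
  push_cast
  ring_nf

lemma IsFourierCoeff.binForm_subst (ha : IsFourierCoeff F a)
    (hF : IsSiegelCuspForm j k Sp4Z (fun _ => 1) F) {α β γ δ e : ℤ} (he : α * δ - β * γ = e)
    (he2 : e ^ 2 = 1) (n r m : ℤ) (x y : ℂ) :
    (e : ℂ) ^ k * binForm x y (a (n * α ^ 2 + r * α * γ + m * γ ^ 2)
      (2 * n * α * β + r * (α * δ + β * γ) + 2 * m * γ * δ) (n * β ^ 2 + r * β * δ + m * δ ^ 2)) =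
      binForm (α * x + β * y) (γ * x + δ * y) (a n r m) := by
  have hdet : (α * δ - β * γ) ^ 2 = 1 := by rw [he, he2]
  let σ := substIndexEquiv hdet
  have h := siegelChar_coeff_eq_zero (b := fun t =>
    binForm (α * x + β * y) (γ * x + δ * y) (a (σ.symm t).2.1 (σ.symm t).2.2 (σ.symm t).1) -
      (e : ℂ) ^ k * binForm x y (a t.2.1 t.2.2 t.1)) fun p hp => ?_
  · have hσ := congrFun h (σ (m, n, r))
    simp only [Equiv.symm_apply_apply] at hσ
    exact (sub_eq_zero.1 hσ).symm
  · have hsubst := ha.hasSum_binForm (congrAct_mem_siegelTube hdet hp)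
      (α * x + β * y) (γ * x + δ * y)
    rw [hF.binForm_congrAct he he2 hp, ← σ.symm.hasSum_iff] at hsubst
    have hdiff := hsubst.sub ((ha.hasSum_binForm hp x y).mul_left ((e : ℂ) ^ k))
    rw [sub_self] at hdiff
    refine hdiff.congr_fun fun t => ?_
    obtain ⟨s, rfl⟩ := σ.surjective t
    simp only [Function.comp, Equiv.symm_apply_apply, siegelChar_congrAct]
    change _ = _ * siegelChar (σ s) p - _
    ring

lemma IsFourierCoeff.eq_zero_of_subst (ha : IsFourierCoeff F a)
    (hF : IsSiegelCuspForm j k Sp4Z (fun _ => 1) F) {α β γ δ : ℤ}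
    (hdet : (α * δ - β * γ) ^ 2 = 1) {n r m : ℤ}
    (h : a (n * α ^ 2 + r * α * γ + m * γ ^ 2)
      (2 * n * α * β + r * (α * δ + β * γ) + 2 * m * γ * δ)
      (n * β ^ 2 + r * β * δ + m * δ ^ 2) = 0) : a n r m = 0 := by
  refine eq_zero_of_binForm_eq_zero fun X Z => ?_
  set e := α * δ - β * γ with he
  have hinv : (e * (α * δ - β * γ) : ℂ) = 1 := by exact_mod_cast (by rw [← he, ← sq, hdet])
  have hX : (α * (e * (δ * X - β * Z)) + β * (e * (α * Z - γ * X)) : ℂ) = X := by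
    linear_combination X * hinv
  have hZ : (γ * (e * (δ * X - β * Z)) + δ * (e * (α * Z - γ * X)) : ℂ) = Z := by
    linear_combination Z * hinv
  simpa [h, hX, hZ] using
    (ha.binForm_subst hF he.symm hdet n r m (e * (δ * X - β * Z)) (e * (α * Z - γ * X))).symm

lemma IsFourierCoeff.exists_norm_le (ha : IsFourierCoeff F a) :
    ∃ M : ℝ, ∀ n r m : ℤ, ‖a n r m‖ ≤ M * Real.exp (2 * Real.pi * (n + m)) := by
  have hI : ![I, 0, I] ∈ siegelTube := by simp [mem_siegelTube_iff_im]
  refine ⟨∑' t : ℤ × ℤ × ℤ, ‖siegelChar t ![I, 0, I] • a t.2.1 t.2.2 t.1‖, fun n r m => ?_⟩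
  have h := (ha _ hI).summable.norm.le_tsum (m, n, r) fun _ _ => norm_nonneg _
  rw [norm_smul, siegelChar, norm_expTwoPiI] at h
  have him : (n * ![I, 0, I] 0 + r * ![I, 0, I] 1 + m * ![I, 0, I] 2 : ℂ).im = n + m := by simp
  rw [him] at h
  calc ‖a n r m‖ = Real.exp (-2 * Real.pi * (n + m)) * ‖a n r m‖ *
        Real.exp (2 * Real.pi * (n + m)) := by
        rw [mul_right_comm, ← Real.exp_add]
        simp
    _ ≤ _ := by gcongr

lemma exists_sign_forall_quadratic_le {m r : ℤ} (h : m < 0 ∨ m = 0 ∧ r ≠ 0) :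
    ∃ s : ℤ, |s| = 1 ∧ ∀ N : ℕ, r * (s * N) + m * (s * N) ^ 2 ≤ -N := by
  have hmain {s : ℤ} (hs : s ^ 2 = 1) (hrs : r * s = -|r|) (N : ℕ) :
      r * (s * N) + m * (s * N) ^ 2 ≤ -N := by
    have hexpand : r * (s * N) + m * (s * N) ^ 2 = -|r| * N + m * N ^ 2 := by
      linear_combination (N : ℤ) * hrs + m * N ^ 2 * hs
    have hN : (N : ℤ) ≤ N ^ 2 := by exact_mod_cast Nat.le_self_pow two_ne_zero N
    rw [hexpand]
    rcases h with h | ⟨rfl, h⟩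
    · nlinarith [abs_nonneg r]
    · nlinarith [Int.one_le_abs h]
  rcases le_total r 0 with hr | hr
  · exact ⟨1, by simp, hmain (by norm_num) (by rw [abs_of_nonpos hr]; ring)⟩
  · exact ⟨-1, by simp, hmain (by norm_num) (by rw [abs_of_nonneg hr]; ring)⟩

lemma exp_substituted_le (n : ℤ) {r m s : ℤ} {N : ℕ}
    (hle : r * (s * N) + m * (s * N) ^ 2 ≤ -N) :
    Real.exp (2 * Real.pi * ((n + r * (s * N) + m * (s * N) ^ 2 : ℤ) + m)) ≤
      Real.exp (2 * Real.pi * (n + m)) * Real.exp 1 * Real.exp (-((N : ℝ) + 1)) := by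
  rw [← Real.exp_add, ← Real.exp_add]
  have hle' : (r * (s * N) + m * (s * N) ^ 2 : ℝ) ≤ -N := by exact_mod_cast hle
  gcongr
  push_cast
  nlinarith [Real.pi_gt_three]

lemma IsFourierCoeff.exists_norm_binForm_le (ha : IsFourierCoeff F a)
    (hF : IsSiegelCuspForm j k Sp4Z (fun _ => 1) F) (n : ℤ) {r m : ℤ}
    (h : m < 0 ∨ m = 0 ∧ r ≠ 0) (x y : ℂ) :
    ∃ C : ℝ, ∀ N : ℕ,
      ‖binForm x y (a n r m)‖ ≤ C * (((N : ℝ) + 1) ^ j * Real.exp (-((N : ℝ) + 1))) := by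
  obtain ⟨M, hM⟩ := ha.exists_norm_le
  obtain ⟨s, hs, hle⟩ := exists_sign_forall_quadratic_le h
  set B := ‖x‖ + ‖y‖
  refine ⟨(j + 1) * (M * Real.exp (2 * Real.pi * (n + m))) * B ^ j * Real.exp 1, fun N => ?_⟩
  have hM0 : 0 ≤ M :=
    nonneg_of_mul_nonneg_left ((norm_nonneg _).trans (hM 0 0 0)) (Real.exp_pos _)
  have hsN : ‖((s * N : ℤ) : ℂ)‖ = N := by
    rw [Complex.norm_intCast]
    exact_mod_cast (by rw [abs_mul, hs, one_mul, Nat.abs_cast] : |s * (N : ℤ)| = N)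
  have hx : ‖x‖ ≤ B * (N + 1) := by nlinarith [norm_nonneg x, norm_nonneg y]
  have hy : ‖y - (s * N : ℤ) * x‖ ≤ B * (N + 1) := by
    refine (norm_sub_le _ _).trans ?_
    rw [norm_mul, hsN]
    nlinarith [norm_nonneg x, norm_nonneg y]
  have hexp := exp_substituted_le n (hle N)
  have hsubst : binForm x (y - (s * N : ℤ) * x)
      (a (n + r * (s * N) + m * (s * N) ^ 2) (r + 2 * m * (s * N)) m) =
        binForm x y (a n r m) := by
    simpa using ha.binForm_subst hF (α := 1) (β := 0) (γ := s * N) (δ := 1) (e := 1)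
      (by ring) (by norm_num) n r m x (y - (s * N : ℤ) * x)
  calc ‖binForm x y (a n r m)‖
      ≤ (j + 1) * (M * Real.exp (2 * Real.pi * ((n + r * (s * N) + m * (s * N) ^ 2 : ℤ) + m)) *
          (B * (N + 1)) ^ j) := by
        rw [← hsubst]
        exact (norm_binForm_le _ hx hy).trans (by gcongr; exact hM _ _ _)
    _ ≤ (j + 1) * (M * (Real.exp (2 * Real.pi * (n + m)) * Real.exp 1 *
          Real.exp (-((N : ℝ) + 1))) * (B * (N + 1)) ^ j) := by gcongr
    _ = _ := by
        rw [mul_pow]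
        ring

-- The substitutions `Y ↦ Y + NX` move `[n, r, m]` to forms whose coefficients decay exponentially
-- in `N`, while they act on the coefficients with polynomial growth.
lemma IsFourierCoeff.eq_zero_of_neg_or (ha : IsFourierCoeff F a)
    (hF : IsSiegelCuspForm j k Sp4Z (fun _ => 1) F) (n : ℤ) {r m : ℤ}
    (h : m < 0 ∨ m = 0 ∧ r ≠ 0) : a n r m = 0 := by
  refine eq_zero_of_binForm_eq_zero fun x y => ?_
  obtain ⟨C, hC⟩ := ha.exists_norm_binForm_le hF n h x y
  have hlim : Tendsto (fun N : ℕ => C * (((N : ℝ) + 1) ^ j * Real.exp (-((N : ℝ) + 1)))) atTop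
      (𝓝 (C * 0)) :=
    ((Real.tendsto_pow_mul_exp_neg_atTop_nhds_zero j).comp
      (tendsto_atTop_add_const_right _ _ tendsto_natCast_atTop_atTop)).const_mul C
  exact norm_le_zero_iff.1 (ge_of_tendsto' (by simpa using hlim) hC)

lemma tendsto_tsum_exp_neg_mul {β : Type*} {c : β → ℂ} {w : β → ℝ} (hw : ∀ t, c t ≠ 0 → 0 ≤ w t)
    (hc : Summable fun t => Real.exp (-w t) * c t) :
    Tendsto (fun s : ℝ => ∑' t, (Real.exp (-w t * s) * c t : ℂ)) atTop
      (𝓝 (∑' t, if w t = 0 then c t else 0)) := by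
  refine tendsto_tsum_of_dominated_convergence hc.norm (fun t => ?_) ?_
  · rcases eq_or_ne (c t) 0 with hct | hct
    · simp [hct]
    rcases (hw t hct).eq_or_lt with ht | ht
    · simp [← ht]
    · have hexp : Tendsto (fun s : ℝ => Real.exp (-w t * s)) atTop (𝓝 0) :=
        Real.tendsto_exp_atBot.comp (tendsto_id.const_mul_atTop_of_neg (by linarith))
      simpa [ht.ne'] using ((continuous_ofReal.tendsto 0).comp hexp).mul_const (c t)
  · filter_upwards [eventually_ge_atTop (1 : ℝ)] with s hs t
    rcases eq_or_ne (c t) 0 with hct | hct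
    · simp [hct]
    · rw [norm_mul, norm_mul, Complex.norm_real, Complex.norm_real, Real.norm_eq_abs,
        Real.norm_eq_abs, Real.abs_exp, Real.abs_exp]
      gcongr
      nlinarith [hw t hct]

lemma siegelChar_diagonal (t : ℤ × ℤ × ℤ) (τ : ℂ) (s : ℝ) :
    siegelChar t ![τ, 0, s * I] = Real.exp (-(2 * Real.pi * t.1) * s) * 𝐞 (t.2.1 * τ) := by
  simp only [siegelChar, Matrix.cons_val, mul_zero, add_zero, expTwoPiI_add]
  rw [mul_comm]
  congr 1
  rw [expTwoPiI, Complex.ofReal_exp]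
  congr 1
  push_cast
  linear_combination (2 * Real.pi * t.1 * s : ℂ) * I_sq

lemma IsFourierCoeff.coeff_constant_eq_zero (ha : IsFourierCoeff F a)
    (hF : IsSiegelCuspForm j k Sp4Z (fun _ => 1) F) (n : ℤ) : a n 0 0 = 0 := by
  funext l
  refine congrFun (siegelChar_coeff_eq_zero
    (b := fun t => if t.1 = 0 then a t.2.1 t.2.2 t.1 l else 0) fun p hp => ?_) (0, n, 0)
  set τ := p 0
  have hτ : 0 < τ.im := im_pos_of_mem_siegelTube hp
  let c (t : ℤ × ℤ × ℤ) : ℂ := 𝐞 (t.2.1 * τ) * a t.2.1 t.2.2 t.1 l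
  let w (t : ℤ × ℤ × ℤ) : ℝ := 2 * Real.pi * t.1
  have hsum (s : ℝ) (hs : 0 < s) :
      HasSum (fun t => (Real.exp (-w t * s) * c t : ℂ)) (F (symMatrix ![τ, 0, s * I]) l) := by
    simpa [siegelChar_diagonal, c, w, mul_assoc] using
      Pi.hasSum.1 (ha ![τ, 0, s * I] (by simp [mem_siegelTube_iff_im, hτ, hs])) l
  have hw (t : ℤ × ℤ × ℤ) (ht : c t ≠ 0) : 0 ≤ w t := by
    by_contra! hneg
    have ht1 : t.1 < 0 := by
      by_contra! hpos
      have : (0 : ℝ) ≤ t.1 := by exact_mod_cast hpos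
      exact absurd hneg (not_lt.2 (by positivity))
    exact ht (by simp [c, ha.eq_zero_of_neg_or hF _ (Or.inl ht1)])
  have hc := (hsum 1 one_pos).summable
  simp only [mul_one] at hc
  have hlim : Tendsto (fun s : ℝ => ∑' t, (Real.exp (-w t * s) * c t : ℂ)) atTop (𝓝 0) := by
    refine ((tendsto_pi_nhds.1 (hF.tendsto_diagonal hτ) l)).congr' ?_
    filter_upwards [eventually_gt_atTop (0 : ℝ)] with s hs
    exact (hsum s hs).tsum_eq.symm
  have hconst : HasSum (fun t => if w t = 0 then c t else 0) 0 := by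
    have hsummable : Summable fun t => if w t = 0 then c t else 0 :=
      Summable.of_norm_bounded hc.norm fun t => by split_ifs with ht <;> simp [ht]
    exact hsummable.hasSum_iff.2 (tendsto_nhds_unique (tendsto_tsum_exp_neg_mul hw hc) hlim)
  refine hconst.congr_fun fun t => ?_
  obtain ⟨m, n, r⟩ := t
  rcases eq_or_ne m 0 with rfl | hm
  · rcases eq_or_ne r 0 with rfl | hr
    · simp [siegelChar, c, w, τ, mul_comm]
    · simp [c, ha.eq_zero_of_neg_or hF n (Or.inr ⟨rfl, hr⟩)]
  · simp [w, hm, Real.pi_ne_zero]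

lemma IsFourierCoeff.eq_zero_of_nonpos (ha : IsFourierCoeff F a)
    (hF : IsSiegelCuspForm j k Sp4Z (fun _ => 1) F) (n r : ℤ) {m : ℤ} (hm : m ≤ 0) :
    a n r m = 0 := by
  by_cases h : m < 0 ∨ m = 0 ∧ r ≠ 0
  · exact ha.eq_zero_of_neg_or hF n h
  · obtain ⟨rfl, rfl⟩ : m = 0 ∧ r = 0 := by grind
    exact ha.coeff_constant_eq_zero hF n

lemma exists_isCoprime_quadratic_nonpos {n r m : ℤ} (hm : 0 < m) (h : 4 * n * m ≤ r ^ 2) :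
    ∃ β δ : ℤ, IsCoprime β δ ∧ n * β ^ 2 + r * β * δ + m * δ ^ 2 ≤ 0 := by
  have hgcd : 0 < Int.gcd (2 * m) (-r) := Int.gcd_pos_of_ne_zero_left _ (by lia)
  obtain ⟨β, δ, hβδ, h1, h2⟩ := Int.exists_gcd_one hgcd
  set g : ℤ := (Int.gcd (2 * m) (-r) : ℤ)
  refine ⟨β, δ, Int.isCoprime_iff_gcd_eq_one.2 hβδ, ?_⟩
  have hscale : g ^ 2 * (n * β ^ 2 + r * β * δ + m * δ ^ 2) = m * (4 * n * m - r ^ 2) := by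
    linear_combination (-n * (2 * m + β * g) - r * δ * g) * h1 +
      (-2 * m * r + m * (r - δ * g)) * h2
  have hg : 0 < g ^ 2 := by positivity
  by_contra! hpos
  nlinarith [mul_pos hg hpos]

theorem IsFourierCoeff.pos_of_ne_zero (ha : IsFourierCoeff F a)
    (hF : IsSiegelCuspForm j k Sp4Z (fun _ => 1) F) {n r m : ℤ} (hne : a n r m ≠ 0) :
    0 < m ∧ 0 < n ∧ r ^ 2 < 4 * n * m := by
  have hm : 0 < m := by
    by_contra! hm
    exact hne (ha.eq_zero_of_nonpos hF n r hm)
  have hdisc : r ^ 2 < 4 * n * m := by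
    by_contra! hle
    obtain ⟨β, δ, ⟨u, v, huv⟩, hval⟩ := exists_isCoprime_quadratic_nonpos hm hle
    exact hne (ha.eq_zero_of_subst hF (α := v) (γ := -u) (β := β) (δ := δ)
      (by linear_combination (u * β + v * δ + 1) * huv) (ha.eq_zero_of_nonpos hF _ _ hval))
  exact ⟨hm, by nlinarith [sq_nonneg r], hdisc⟩

lemma IsFourierCoeff.eq_zero_of_odd (ha : IsFourierCoeff F a)
    (hF : IsSiegelCuspForm j k Sp4Z (fun _ => 1) F) (hj : Odd j) (n r m : ℤ) : a n r m = 0 := by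
  refine eq_zero_of_binForm_eq_zero fun x y => ?_
  have hneg := ha.binForm_subst hF (α := -1) (β := 0) (γ := 0) (δ := -1) (e := 1)
    (by ring) (by norm_num) n r m x y
  have hodd := binForm_mul_mul (-1) x y (a n r m)
  rw [hj.neg_one_pow] at hodd
  simp only [neg_mul, one_mul] at hodd
  simp [hodd] at hneg
  linear_combination hneg / 2

lemma IsFourierCoeff.eq_zero (ha : IsFourierCoeff F a)
    (hF : IsSiegelCuspForm j k Sp4Z (fun _ => 1) F) (h : ∀ n r m, a n r m = 0) : F = 0 := by
  funext τ
  by_cases hτ : τ ∈ H2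
  · obtain ⟨p, rfl⟩ : ∃ p, τ = symMatrix p := ⟨_, eq_symMatrix_of_mem_H2 hτ⟩
    refine (ha p hτ).unique ?_
    simp [h]
  · rw [hF.2.2.2 τ hτ, Pi.zero_apply]

end FourierCoefficients

section FourierJacobi

variable {j : ℕ} {k : ℤ} {F : (Fin 2 → Fin 2 → ℂ) → (Fin (j + 1) → ℂ)}
  {a : ℤ → ℤ → ℤ → Fin (j + 1) → ℂ}

lemma expTwoPiI_coeff_eq_zero {b : ℤ → ℂ} {w : ℂ}
    (h : ∀ x : ℝ, HasSum (fun n : ℤ => b n * 𝐞 (n * (w + x))) 0) : b = 0 := by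
  let σ : (Fin 1 → ℤ) ≃ ℤ := Equiv.funUnique (Fin 1) ℤ
  have hb : b ∘ σ = 0 := by
    refine latticeChar_coeff_eq_zero (p := fun _ => w) fun x => ?_
    simpa [σ, Function.comp_def, latticeChar, ofRealVec] using σ.hasSum_iff.2 (h (x 0))
  funext n
  simpa using congrFun hb (σ.symm n)

/-- The `m`-th Fourier–Jacobi coefficient `φₘ(τ, z)`, so that `F = ∑ φₘ(τ, z) e(mτ')`. -/
def jacobiCoeff (a : ℤ → ℤ → ℤ → Fin (j + 1) → ℂ) (m : ℤ) (τ z : ℂ) : Fin (j + 1) → ℂ :=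
  ∑' q : ℤ × ℤ, 𝐞 (q.1 * τ + q.2 * z) • a q.1 q.2 m

lemma mem_siegelTube_of_im_pos {τ : ℂ} (hτ : 0 < τ.im) (z : ℂ) (x : ℝ) :
    ![τ, z, ((z.im ^ 2 + 1) / τ.im : ℝ) * I + x] ∈ siegelTube := by
  rw [mem_siegelTube_iff_im]
  generalize hy : (z.im ^ 2 + 1) / τ.im = y
  have : τ.im * y = z.im ^ 2 + 1 := by rw [← hy, mul_div_cancel₀ _ hτ.ne']
  simp [hτ, this]

lemma siegelChar_eq_mul (t : ℤ × ℤ × ℤ) (τ z w : ℂ) :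
    siegelChar t ![τ, z, w] = 𝐞 (t.2.1 * τ + t.2.2 * z) * 𝐞 (t.1 * w) := by
  simp [siegelChar, expTwoPiI_add]

lemma IsFourierCoeff.hasSum_jacobiCoeff (ha : IsFourierCoeff F a) (m : ℤ) {τ : ℂ}
    (hτ : 0 < τ.im) (z : ℂ) :
    HasSum (fun q : ℤ × ℤ => 𝐞 (q.1 * τ + q.2 * z) • a q.1 q.2 m) (jacobiCoeff a m τ z) := by
  refine Summable.hasSum ?_
  set w : ℂ := ((z.im ^ 2 + 1) / τ.im : ℝ) * I + (0 : ℝ)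
  have h := ((ha _ (mem_siegelTube_of_im_pos hτ z 0)).summable.prod_factor m).const_smul
    (𝐞 (m * w))⁻¹
  refine h.congr fun q => ?_
  rw [siegelChar_eq_mul, smul_smul, mul_comm, mul_assoc, mul_inv_cancel₀ (expTwoPiI_ne_zero _),
    mul_one]

lemma im_neg_inv_pos {τ : ℂ} (hτ : 0 < τ.im) : 0 < (-1 / τ).im := by
  have hτ0 : τ ≠ 0 := fun h => by simp [h] at hτ
  rw [neg_div, one_div, Complex.neg_im, Complex.inv_im, neg_div, neg_neg]
  exact div_pos hτ (Complex.normSq_pos.2 hτ0)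

theorem IsFourierCoeff.jacobiCoeff_neg_inv (ha : IsFourierCoeff F a)
    (hF : IsSiegelCuspForm j k Sp4Z (fun _ => 1) F) (m : ℤ) {τ : ℂ} (hτ : 0 < τ.im) (z : ℂ) :
    jacobiCoeff a m (-1 / τ) (z / τ) =
      (τ ^ k * 𝐞 (m * z ^ 2 / τ)) • symAct j !![τ, z; 0, 1] (jacobiCoeff a m τ z) := by
  refine eq_of_binForm_eq fun x y => ?_
  let g (m : ℤ) : ℂ := 𝐞 (-(m * z ^ 2 / τ)) * binForm x y (jacobiCoeff a m (-1 / τ) (z / τ)) -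
    τ ^ k * binForm (τ * x) (z * x + y) (jacobiCoeff a m τ z)
  set w : ℂ := ((z.im ^ 2 + 1) / τ.im : ℝ) * I
  have hsum (s : ℝ) : HasSum (fun m : ℤ => g m * 𝐞 (m * (w + s))) 0 := by
    have hp := mem_siegelTube_of_im_pos hτ z s
    have hinv := ha.hasSum_binForm (invAct_mem_siegelTube hp) x y
    rw [hF.apply_invAct hp, map_smul, binForm_symAct] at hinv
    have hdiff := hinv.sub
      ((ha.hasSum_binForm hp (τ * x) (z * x + y)).mul_left (τ ^ k))
    simp only [Matrix.of_apply, Matrix.cons_val, zero_mul, add_zero, one_mul, smul_eq_mul,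
      sub_self] at hdiff
    refine hdiff.prod_fiberwise fun m => ?_
    have hlhs := hasSum_binForm_smul (ha.hasSum_jacobiCoeff m (im_neg_inv_pos hτ) (z / τ)) x y
    have hrhs := hasSum_binForm_smul (ha.hasSum_jacobiCoeff m hτ z) (τ * x) (z * x + y)
    refine (((hlhs.mul_left (𝐞 (-(m * z ^ 2 / τ)))).sub (hrhs.mul_left (τ ^ k))).mul_right
      (𝐞 (m * (w + s)))).congr_fun fun q => ?_
    have hexp : q.1 * (-1 / τ) + q.2 * (z / τ) + m * (w + s - z ^ 2 / τ) =
      -(m * z ^ 2 / τ) + (q.1 * (-1 / τ) + q.2 * (z / τ)) + m * (w + s) := by ring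
    simp only [siegelChar, invAct, Matrix.cons_val]
    rw [hexp, expTwoPiI_add, expTwoPiI_add, expTwoPiI_add _ (m * (w + s))]
    ring
  have hg := sub_eq_zero.1 (congrFun (expTwoPiI_coeff_eq_zero hsum) m)
  have hcancel : 𝐞 (m * z ^ 2 / τ) * 𝐞 (-(m * z ^ 2 / τ)) = 1 := by
    rw [← expTwoPiI_add, add_neg_cancel, expTwoPiI_zero]
  rw [map_smul, binForm_symAct, smul_eq_mul]
  simp only [Matrix.of_apply, Matrix.cons_val, zero_mul, add_zero, one_mul]
  linear_combination 𝐞 (m * z ^ 2 / τ) * hg -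
    binForm x y (jacobiCoeff a m (-1 / τ) (z / τ)) * hcancel

end FourierJacobi

/-! ### Level one modular functions -/

section LevelOne

open UpperHalfPlane hiding I
open ModularGroup
open scoped MatrixGroups ModularForm Manifold

lemma coe_S_smul (z : ℍ) : ((S • z : ℍ) : ℂ) = -1 / z := by
  rw [UpperHalfPlane.modular_S_smul]
  simp [neg_div]

lemma coe_T_smul (z : ℍ) : ((T • z : ℍ) : ℂ) = z + 1 := by
  rw [UpperHalfPlane.modular_T_smul]
  simp [add_comm]

lemma slash_S_eq (f : ℍ → ℂ) (k : ℤ) (z : ℍ) : (f ∣[k] S) z = f (S • z) * (z : ℂ) ^ (-k) := by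
  rw [ModularForm.SL_slash_apply, denom_S]

lemma slash_T_eq (f : ℍ → ℂ) (k : ℤ) (z : ℍ) : (f ∣[k] T) z = f (T • z) := by
  have hdenom : denom (T : GL (Fin 2) ℝ) z = 1 := by
    rw [ModularGroup.denom_apply]
    simp [T]
  rw [ModularForm.SL_slash_apply, hdenom, _root_.one_zpow, mul_one]

lemma levelOne_eq_zero_of_isBoundedAtImInfty {g : ℍ → ℂ} {k : ℤ} (hk : k < 0 ∨ k = 2)
    (hg : MDiff g) (hS : g ∣[k] S = g) (hT : g ∣[k] T = g) (hbd : IsBoundedAtImInfty g) :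
    g = 0 := by
  have hslash := SlashInvariantForm.slash_action_generators_SL2Z hS hT
  let G : ModularForm 𝒮ℒ k :=
    { toFun := g
      slash_action_eq' := fun _ ⟨γ, hγ⟩ => hγ ▸ hslash γ
      holo' := hg
      bdd_at_cusps' := fun {c} hc => by
        rw [Subgroup.IsArithmetic.isCusp_iff_isCusp_SL2Z] at hc
        rw [OnePoint.isBoundedAt_iff_forall_SL2Z hc]
        intro γ _
        rw [hslash γ]
        exact hbd }
  change ⇑G = 0
  rcases hk with hk | rfl
  · exact ModularFormClass.levelOne_neg_weight_eq_zero hk G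
  · rw [rank_zero_iff_forall_zero.1 ModularForm.levelOne_weight_two_rank_zero G, FunLike.coe_zero]

/-- A holomorphic function of level one and weight `w` vanishing to order `s` at the cusp is `Δ ^ s`
times a modular form of weight `w - 12 * s`, and there are none of negative weight or weight two. -/
theorem levelOne_eq_zero_of_isBigO {f : ℂ → ℂ} {w : ℤ} {s : ℕ}
    (hf : DifferentiableOn ℂ f upperHalfPlaneSet)
    (hT : ∀ τ : ℂ, 0 < τ.im → f (τ + 1) = f τ)
    (hS : ∀ τ : ℂ, 0 < τ.im → f (-1 / τ) = τ ^ w * f τ)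
    (hbd : f =O[comap Complex.im atTop] fun τ => Real.exp (-2 * Real.pi * (s * τ.im)))
    (hw : w < 12 * s ∨ w = 12 * s + 2) {τ : ℂ} (hτ : 0 < τ.im) : f τ = 0 := by
  let Δ := ModularForm.discriminant
  let g : ℍ → ℂ := fun z => f z / Δ z ^ s
  have hg : g = 0 := by
    refine levelOne_eq_zero_of_isBoundedAtImInfty (k := w - 12 * s) (by lia) ?_ ?_ ?_ ?_
    · have hmf : MDiff (fun z : ℍ => f z) := by
        rw [UpperHalfPlane.mdifferentiable_iff]
        exact hf.congr fun z hz => by simp [ofComplex_apply_of_im_pos hz]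
      exact hmf.div (CuspForm.discriminant.holo'.pow s)
        fun z => pow_ne_zero _ (ModularForm.discriminant_ne_zero z)
    · funext z
      have hz := z.ne_zero
      have hΔ : Δ z = Δ (S • z) * (z : ℂ) ^ (-12 : ℤ) := by
        rw [← slash_S_eq, ModularForm.discriminant_S_invariant]
      have hweight : (z : ℂ) ^ (-(w - 12 * s)) = ((z : ℂ) ^ (-12 : ℤ))⁻¹ ^ s / (z : ℂ) ^ w := by
        rw [neg_sub, zpow_sub₀ hz, _root_.zpow_mul, _root_.zpow_neg, inv_inv, zpow_natCast]
      have hne : Δ (S • z) ≠ 0 := ModularForm.discriminant_ne_zero _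
      simp only [slash_S_eq, g, coe_S_smul, hS z z.2, hweight, hΔ, mul_pow, inv_pow]
      field_simp
    · funext z
      have hΔ : Δ z = Δ (T • z) := by
        rw [← slash_T_eq Δ 12, ModularForm.discriminant_T_invariant]
      simp only [slash_T_eq, g, coe_T_smul, hT z z.2, ← hΔ]
    · have hO : (fun z : ℍ => f z) =O[atImInfty] fun z => Real.exp (-2 * Real.pi * z.im) ^ s := by
        simp only [← Real.exp_nat_mul, mul_left_comm (s : ℝ)]
        exact hbd.comp_tendsto (tendsto_comap_iff.2 tendsto_comap)
      exact (Asymptotics.div_isBoundedUnder_of_isBigO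
        (hO.trans (ModularForm.exp_isBigO_discriminant.pow s))).isBigO_one ℝ
  have hzero : f τ / Δ ⟨τ, hτ⟩ ^ s = 0 := congrFun hg ⟨τ, hτ⟩
  exact (div_eq_zero_iff.1 hzero).resolve_right
    (pow_ne_zero _ (ModularForm.discriminant_ne_zero _))

/-- The Eisenstein series `E₂`, extended to a function on `ℂ`. -/
def eisensteinTwo (τ : ℂ) : ℂ := EisensteinSeries.E2 (ofComplex τ)

lemma eisensteinTwo_coe (z : ℍ) : eisensteinTwo z = EisensteinSeries.E2 z := by
  simp [eisensteinTwo]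

lemma differentiableOn_eisensteinTwo : DifferentiableOn ℂ eisensteinTwo upperHalfPlaneSet :=
  UpperHalfPlane.mdifferentiable_iff.1 E2_mdifferentiable

lemma hasSum_eisensteinTwo {τ : ℂ} (hτ : 0 < τ.im) :
    HasSum (fun n : ℕ => (if n = 0 then 1 else -24 * (ArithmeticFunction.sigma 1 n : ℂ)) *
      𝐞 (n * τ)) (eisensteinTwo τ) := by
  have h := EisensteinSeries.hasSum_qExpansion_E2 (z := ⟨τ, hτ⟩)
  rw [← eisensteinTwo_coe] at h
  simpa [expTwoPiI, Complex.exp_nat_mul, mul_left_comm _ (_ : ℂ) τ, smul_eq_mul] using h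

lemma eisensteinTwo_add_one {τ : ℂ} (hτ : 0 < τ.im) :
    eisensteinTwo (τ + 1) = eisensteinTwo τ := by
  have hE : EisensteinSeries.E2 ∣[(2 : ℤ)] T = EisensteinSeries.E2 := by
    rw [EisensteinSeries.E2_slash_action, EisensteinSeries.D2_T, smul_zero, sub_zero]
  have h := congrFun hE ⟨τ, hτ⟩
  rwa [slash_T_eq, ← eisensteinTwo_coe, ← eisensteinTwo_coe, coe_T_smul] at h

lemma eisensteinTwo_neg_inv {τ : ℂ} (hτ : 0 < τ.im) :
    eisensteinTwo (-1 / τ) = τ ^ 2 * eisensteinTwo τ + 6 * τ / (Real.pi * I) := by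
  have hτ0 : τ ≠ 0 := fun h => by simp [h] at hτ
  have hpi : (Real.pi : ℂ) ≠ 0 := by exact_mod_cast Real.pi_ne_zero
  have h := congrFun (EisensteinSeries.E2_slash_action S) ⟨τ, hτ⟩
  rw [slash_S_eq, ← eisensteinTwo_coe, coe_S_smul, Pi.sub_apply, ← eisensteinTwo_coe,
    Pi.smul_apply, EisensteinSeries.D2_S, riemannZeta_two] at h
  simp only [smul_eq_mul] at h
  have h' : eisensteinTwo (-1 / τ) * τ ^ (-2 : ℤ) * τ ^ 2 = eisensteinTwo (-1 / τ) := by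
    rw [_root_.zpow_neg, mul_assoc]
    norm_cast
    rw [inv_mul_cancel₀ (pow_ne_zero 2 hτ0), mul_one]
  rw [← h', h]
  field_simp
  linear_combination -6 * I_sq

lemma eisensteinTwo_isBigO_one : eisensteinTwo =O[comap Complex.im atTop] fun _ => (1 : ℝ) := by
  obtain ⟨M, A, h⟩ := isBoundedAtImInfty_iff.1 EisensteinSeries.isBoundedAtImInfty_E2
  refine .of_bound M ?_
  filter_upwards [preimage_mem_comap (Ioi_mem_atTop 0), preimage_mem_comap (Ici_mem_atTop A)]
    with τ hτ hA
  simpa [← eisensteinTwo_coe] using h ⟨τ, hτ⟩ hA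

lemma tendsto_eisensteinTwo : Tendsto (fun t : ℝ => eisensteinTwo (t * I)) atTop (𝓝 1) := by
  have hexp (n : ℕ) (t : ℝ) : (Real.exp (-(2 * Real.pi * n) * t) : ℂ) = 𝐞 (n * (t * I)) := by
    rw [expTwoPiI, Complex.ofReal_exp]
    congr 1
    push_cast
    linear_combination -(2 * Real.pi * n * t : ℂ) * I_sq
  have hsum {t : ℝ} (ht : 0 < t) := hasSum_eisensteinTwo (τ := t * I) (by simpa using ht)
  have hlim := tendsto_tsum_exp_neg_mul (w := fun n : ℕ => 2 * Real.pi * n)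
    (c := fun n => if n = 0 then 1 else -24 * (ArithmeticFunction.sigma 1 n : ℂ))
    (fun n _ => by positivity) ((hsum one_pos).summable.congr fun n => by
      rw [← hexp, mul_one, mul_comm])
  have hlead (n : ℕ) : (if 2 * Real.pi * (n : ℝ) = 0 then
      (if n = 0 then 1 else -24 * (ArithmeticFunction.sigma 1 n : ℂ)) else 0) =
      if n = 0 then 1 else 0 := by
    split_ifs <;> simp_all
  simp only [hlead, tsum_ite_eq] at hlim
  refine hlim.congr' ?_
  filter_upwards [eventually_gt_atTop 0] with t ht
  rw [← (hsum ht).tsum_eq]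
  exact tsum_congr fun n => by rw [← hexp, mul_comm]

end LevelOne

/-! ### Heat-corrected Taylor coefficients -/

section HeatTaylor

/-- The coefficient of `y ^ b` in `exp (x * y ^ 2)`. -/
def expSqCoeff (x : ℂ) (b : ℕ) : ℂ := if Even b then x ^ (b / 2) / (b / 2).factorial else 0

lemma hasSum_expSqCoeff (x y : ℂ) :
    HasSum (fun b => expSqCoeff x b * y ^ b) (Complex.exp (x * y ^ 2)) := by
  have hinj : Function.Injective fun b : ℕ => 2 * b := fun a b h => by simpa using h
  rw [← hinj.hasSum_iff, Complex.exp_eq_exp_ℂ]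
  · refine (NormedSpace.expSeries_div_hasSum_exp (x * y ^ 2)).congr_fun fun b => ?_
    simp [expSqCoeff, mul_pow, pow_mul, div_mul_eq_mul_div]
  · intro b hb
    have hodd : ¬ Even b := fun ⟨c, hc⟩ => hb ⟨c, by simp only; lia⟩
    simp [expSqCoeff, hodd]

lemma expSqCoeff_succ_succ (x : ℂ) (b : ℕ) :
    (b + 2) * expSqCoeff x (b + 2) = 2 * x * expSqCoeff x b := by
  rcases Nat.even_or_odd' b with ⟨c, rfl | rfl⟩
  · have hc : (c : ℂ) + 1 ≠ 0 := by exact_mod_cast c.succ_ne_zero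
    have hhalf : (2 * c + 2) / 2 = c + 1 := by lia
    simp only [expSqCoeff, hhalf, Nat.factorial_succ, even_two_mul, if_true,
      (even_two_mul c).add even_two, Nat.mul_div_cancel_left c two_pos]
    push_cast
    field_simp
    ring
  · simp [expSqCoeff, Nat.even_add]

lemma differentiable_expSqCoeff (b : ℕ) : Differentiable ℂ fun x => expSqCoeff x b := by
  unfold expSqCoeff
  split_ifs <;> fun_prop

lemma expSqCoeff_comp_isBigO_one {α : Type*} {l : Filter α} {f : α → ℂ}
    (hf : f =O[l] fun _ => (1 : ℝ)) (b : ℕ) :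
    (fun x => expSqCoeff (f x) b) =O[l] fun _ => (1 : ℝ) := by
  unfold expSqCoeff
  split_ifs
  · simpa [div_eq_inv_mul] using (hf.pow (b / 2)).const_mul_left ((b / 2).factorial : ℂ)⁻¹
  · exact Asymptotics.isBigO_zero _ _

/-- For a Jacobi form `φ` of index `m` with `φ z = ∑ M a * (2πiz) ^ a / a!` and `E = E₂(τ)`, the
`N`-th Taylor coefficient, in the variable `πiz / 3`, of `exp (π² m E z² / 3) * φ z`. The
exponential turns the transformation law of `φ` into that of a modular form. -/
def heatTaylor (m : ℂ) (M : ℕ → ℂ) (E : ℂ) (N : ℕ) : ℂ :=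
  ∑ p ∈ Finset.HasAntidiagonal.antidiagonal N,
    6 ^ p.1 / p.1.factorial * M p.1 * expSqCoeff (-3 * m * E) p.2

lemma hasSum_heatTaylor {m E : ℂ} {M : ℕ → ℂ} {φ : ℂ → ℂ}
    (hφ : ∀ z, HasSum (fun a => M a * (2 * Real.pi * I * z) ^ a / a.factorial) (φ z)) (z : ℂ) :
    HasSum (fun N => heatTaylor m M E N * (Real.pi * I * z / 3) ^ N)
      (Complex.exp (-3 * m * E * (Real.pi * I * z / 3) ^ 2) * φ z) := by
  have hexp := hasSum_expSqCoeff (-3 * m * E) (Real.pi * I * z / 3)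
  have hnorm := summable_norm_sum_mul_antidiagonal_of_summable_norm
    (hφ z).summable.norm hexp.summable.norm
  have htsum := tsum_mul_tsum_eq_tsum_sum_antidiagonal_of_summable_norm
    (hφ z).summable.norm hexp.summable.norm
  rw [(hφ z).tsum_eq, hexp.tsum_eq, mul_comm] at htsum
  rw [htsum]
  refine hnorm.of_norm.hasSum.congr_fun fun N => ?_
  rw [heatTaylor, Finset.sum_mul]
  refine Finset.sum_congr rfl fun p hp => ?_
  rw [← Finset.HasAntidiagonal.mem_antidiagonal.1 hp, pow_add,
    show 2 * Real.pi * I * z = 6 * (Real.pi * I * z / 3) by ring, mul_pow]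
  ring

lemma coeff_eq_of_hasSum_mul_pow {a b : ℕ → ℂ} {f : ℂ → ℂ}
    (ha : ∀ y, HasSum (fun N => a N * y ^ N) (f y))
    (hb : ∀ y, HasSum (fun N => b N * y ^ N) (f y)) : a = b := by
  have hseries {c : ℕ → ℂ} (hc : ∀ y, HasSum (fun N => c N * y ^ N) (f y)) :
      HasFPowerSeriesAt f (FormalMultilinearSeries.ofScalars ℂ c) 0 := by
    rw [hasFPowerSeriesAt_iff]
    exact .of_forall fun y => by simpa [mul_comm] using hc y
  funext N
  simpa using congrArg (fun p => p.coeff N)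
    ((hseries ha).eq_formalMultilinearSeries (hseries hb))

lemma heatTaylor_eq_of_jacobi {m c τ E₁ E₂ : ℂ} {M₁ M₂ : ℕ → ℂ} {φ₁ φ₂ : ℂ → ℂ} (hτ : τ ≠ 0)
    (h₁ : ∀ z, HasSum (fun a => M₁ a * (2 * Real.pi * I * z) ^ a / a.factorial) (φ₁ z))
    (h₂ : ∀ z, HasSum (fun a => M₂ a * (2 * Real.pi * I * z) ^ a / a.factorial) (φ₂ z))
    (hE : E₁ = τ ^ 2 * E₂ + 6 * τ / (Real.pi * I))
    (hφ : ∀ z, φ₁ (z / τ) = c * 𝐞 (m * z ^ 2 / τ) * φ₂ z) (N : ℕ) :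
    heatTaylor m M₁ E₁ N = c * τ ^ N * heatTaylor m M₂ E₂ N := by
  have hpi : (Real.pi : ℂ) * I ≠ 0 := mul_ne_zero (by exact_mod_cast Real.pi_ne_zero) I_ne_zero
  have hfun (z : ℂ) : Complex.exp (-3 * m * E₁ * (Real.pi * I * (z / τ) / 3) ^ 2) * φ₁ (z / τ) =
      c * (Complex.exp (-3 * m * E₂ * (Real.pi * I * z / 3) ^ 2) * φ₂ z) := by
    have hexp : Complex.exp (-3 * m * E₁ * (Real.pi * I * (z / τ) / 3) ^ 2) * 𝐞 (m * z ^ 2 / τ) =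
        Complex.exp (-3 * m * E₂ * (Real.pi * I * z / 3) ^ 2) := by
      rw [expTwoPiI, ← Complex.exp_add, hE]
      congr 1
      field_simp
      ring
    rw [hφ, ← hexp]
    ring
  have hcoeff := congrFun (coeff_eq_of_hasSum_mul_pow
    (a := fun N => heatTaylor m M₁ E₁ N * (Real.pi * I / 3) ^ N / τ ^ N)
    (b := fun N => c * heatTaylor m M₂ E₂ N * (Real.pi * I / 3) ^ N)
    (fun z => (hasSum_heatTaylor h₁ (z / τ)).congr_fun fun N => by
      simp only [div_pow, mul_pow]
      ring)
    fun z => hfun z ▸ ((hasSum_heatTaylor h₂ z).mul_left c).congr_fun fun N => by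
      simp only [div_pow, mul_pow]
      ring) N
  rw [div_eq_iff (pow_ne_zero _ hτ)] at hcoeff
  refine mul_right_cancel₀ (pow_ne_zero N (div_ne_zero hpi three_ne_zero)) ?_
  rw [hcoeff]
  ring

open PowerSeries in
lemma derivative_mk_expSqCoeff (x : ℂ) :
    d⁄dX ℂ (PowerSeries.mk (expSqCoeff x)) = C (2 * x) * (X * PowerSeries.mk (expSqCoeff x)) := by
  ext b
  cases b with
  | zero => simp [expSqCoeff, coeff_derivative]
  | succ b =>
    simp only [coeff_derivative, coeff_mk, coeff_C_mul, coeff_succ_X_mul, ← expSqCoeff_succ_succ]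
    push_cast
    ring

open PowerSeries in
lemma heatTaylor_pow_succ (m r E : ℂ) (N : ℕ) :
    (N + 1) * heatTaylor m (fun a => r ^ a) E (N + 1) = 6 * r * heatTaylor m (fun a => r ^ a) E N +
      if N = 0 then 0 else -6 * m * E * heatTaylor m (fun a => r ^ a) E (N - 1) := by
  let U : ℂ⟦X⟧ := PowerSeries.mk fun a => (6 * r) ^ a / a.factorial
  let V : ℂ⟦X⟧ := PowerSeries.mk (expSqCoeff (-3 * m * E))
  have hcoeff (N : ℕ) : heatTaylor m (fun a => r ^ a) E N = coeff N (U * V) := by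
    simp only [heatTaylor, coeff_mul, U, V, coeff_mk, mul_pow, div_mul_eq_mul_div]
  have hU : d⁄dX ℂ U = C (6 * r) * U := by
    ext a
    have ha : (a : ℂ) + 1 ≠ 0 := by exact_mod_cast a.succ_ne_zero
    simp only [U, coeff_derivative, coeff_mk, coeff_C_mul, Nat.factorial_succ]
    push_cast
    field_simp
    ring
  have hderiv : d⁄dX ℂ (U * V) = C (6 * r) * (U * V) + C (-6 * m * E) * (X * (U * V)) := by
    rw [Derivation.leibniz, hU, derivative_mk_expSqCoeff,
      show 2 * (-3 * m * E) = -6 * m * E by ring]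
    simp only [smul_eq_mul]
    ring
  have hN := congrArg (coeff N) hderiv
  rw [coeff_derivative, map_add, coeff_C_mul, coeff_C_mul] at hN
  simp only [hcoeff, mul_comm (N + 1 : ℂ), hN]
  cases N <;> simp [coeff_succ_X_mul]

end HeatTaylor

/-! ### Vanishing of leading Taylor coefficients -/

/-- A rapidly convergent family of terms `coeff i * q ^ exponent i * ζ ^ freq i`, with `q = 𝐞 τ` and
`ζ = 𝐞 z`. The exponents are allowed to be real because translating `z` by a half-period `τ / 2`
makes them fractional. -/
structure EllipticSeries (ι : Type*) where
  coeff : ι → ℂ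
  exponent : ι → ℝ
  freq : ι → ℤ
  summable_norm : ∀ y : ℝ, 0 < y → ∀ R : ℝ, 0 ≤ R → Summable fun i =>
    ‖coeff i‖ * Real.exp (-2 * Real.pi * (exponent i * y)) * Real.exp (R * |(freq i : ℝ)|)

namespace EllipticSeries

open UpperHalfPlane (upperHalfPlaneSet)

variable {ι : Type*} (f g : EllipticSeries ι)

/-- The function of `(τ, z)` defined by an elliptic series. -/
def value (τ z : ℂ) : ℂ := ∑' i, f.coeff i * 𝐞 (f.exponent i * τ + f.freq i * z)

/-- The coefficients of `(2πiz) ^ a / a!` in the Taylor expansion at `z = 0`. -/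
def moment (τ : ℂ) (a : ℕ) : ℂ := ∑' i, f.coeff i * f.freq i ^ a * 𝐞 (f.exponent i * τ)

/-- The `q`-expansion starts at `q ^ s` or later. -/
def OrderGE (s : ℝ) : Prop := ∀ i, f.coeff i ≠ 0 → s ≤ f.exponent i

/-- The coefficient of `q ^ s` in the `a`-th moment. -/
def leadingMoment (s : ℝ) (a : ℕ) : ℂ :=
  ∑' i, if f.exponent i = s then f.coeff i * f.freq i ^ a else 0

/-- The Taylor coefficients corrected by `E₂`, so that they transform like modular forms. -/
def correctedTaylor (m : ℂ) (N : ℕ) (τ : ℂ) : ℂ := heatTaylor m (f.moment τ) (eisensteinTwo τ) N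

/-- The summable majorant in the definition of an elliptic series. -/
def majorant (y R : ℝ) (i : ι) : ℝ :=
  ‖f.coeff i‖ * Real.exp (-2 * Real.pi * (f.exponent i * y)) * Real.exp (R * |(f.freq i : ℝ)|)

variable {f g} {s : ℝ}

lemma OrderGE.mono {s' : ℝ} (hs : f.OrderGE s) (h : s' ≤ s) : f.OrderGE s' :=
  fun i hi => h.trans (hs i hi)

lemma OrderGE.majorant_le (hs : f.OrderGE s) {y₀ y : ℝ} (hy : y₀ ≤ y) (R : ℝ) (i : ι) :
    f.majorant y R i ≤ Real.exp (-2 * Real.pi * (s * (y - y₀))) * f.majorant y₀ R i := by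
  by_cases hi : f.coeff i = 0
  · simp [majorant, hi]
  have hexp : Real.exp (-2 * Real.pi * (f.exponent i * y)) ≤
      Real.exp (-2 * Real.pi * (s * (y - y₀))) *
        Real.exp (-2 * Real.pi * (f.exponent i * y₀)) := by
    rw [← Real.exp_add, Real.exp_le_exp]
    have := mul_nonneg Real.two_pi_pos.le
      (mul_nonneg (sub_nonneg.2 (hs i hi)) (sub_nonneg.2 hy))
    linarith
  calc f.majorant y R i ≤ ‖f.coeff i‖ * (Real.exp (-2 * Real.pi * (s * (y - y₀))) *
        Real.exp (-2 * Real.pi * (f.exponent i * y₀))) * Real.exp (R * |(f.freq i : ℝ)|) := by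
        unfold majorant
        gcongr
    _ = Real.exp (-2 * Real.pi * (s * (y - y₀))) * f.majorant y₀ R i := by
        unfold majorant
        ring

lemma norm_moment_term_le (f : EllipticSeries ι) (τ : ℂ) (a : ℕ) (i : ι) :
    ‖f.coeff i * f.freq i ^ a * 𝐞 (f.exponent i * τ)‖ ≤ a.factorial * f.majorant τ.im 1 i := by
  have hpow : |(f.freq i : ℝ)| ^ a ≤ a.factorial * Real.exp |(f.freq i : ℝ)| := by
    rw [← div_le_iff₀' (by positivity)]
    exact Real.pow_div_factorial_le_exp _ (abs_nonneg _) a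
  calc ‖f.coeff i * f.freq i ^ a * 𝐞 (f.exponent i * τ)‖
      = ‖f.coeff i‖ * |(f.freq i : ℝ)| ^ a * Real.exp (-2 * Real.pi * (f.exponent i * τ.im)) := by
        simp [norm_expTwoPiI]
    _ ≤ ‖f.coeff i‖ * (a.factorial * Real.exp |(f.freq i : ℝ)|) *
          Real.exp (-2 * Real.pi * (f.exponent i * τ.im)) := by gcongr
    _ = a.factorial * f.majorant τ.im 1 i := by
        rw [majorant, one_mul]
        ring

lemma summable_moment (f : EllipticSeries ι) {τ : ℂ} (hτ : 0 < τ.im) (a : ℕ) :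
    Summable fun i => f.coeff i * f.freq i ^ a * 𝐞 (f.exponent i * τ) :=
  .of_norm_bounded ((f.summable_norm τ.im hτ 1 zero_le_one).mul_left _)
    (f.norm_moment_term_le τ a)

lemma hasSum_moment (f : EllipticSeries ι) {τ : ℂ} (hτ : 0 < τ.im) (z : ℂ) :
    HasSum (fun a => f.moment τ a * (2 * Real.pi * I * z) ^ a / a.factorial) (f.value τ z) := by
  let t : ι × ℕ → ℂ := fun p => f.coeff p.1 * 𝐞 (f.exponent p.1 * τ) *
    ((f.freq p.1 * (2 * Real.pi * I * z)) ^ p.2 / p.2.factorial)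
  have hrow (i : ι) : HasSum (fun a => t (i, a))
      (f.coeff i * 𝐞 (f.exponent i * τ + f.freq i * z)) := by
    have h := (NormedSpace.expSeries_div_hasSum_exp (f.freq i * (2 * Real.pi * I * z))).mul_left
      (f.coeff i * 𝐞 (f.exponent i * τ))
    have hfreq : Complex.exp (f.freq i * (2 * Real.pi * I * z)) = 𝐞 (f.freq i * z) := by
      rw [expTwoPiI, mul_left_comm]
    rwa [← Complex.exp_eq_exp_ℂ, hfreq, mul_assoc (f.coeff i), ← expTwoPiI_add] at h
  have hrow_norm (i : ι) : HasSum (fun a => ‖t (i, a)‖)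
      (f.majorant τ.im ‖2 * Real.pi * I * z‖ i) := by
    have h := (NormedSpace.expSeries_div_hasSum_exp
      (‖2 * Real.pi * I * z‖ * |(f.freq i : ℝ)|)).mul_left
        (‖f.coeff i‖ * Real.exp (-2 * Real.pi * (f.exponent i * τ.im)))
    rw [← Real.exp_eq_exp_ℝ] at h
    refine h.congr_fun fun a => ?_
    rw [mul_comm _ |(f.freq i : ℝ)|]
    simp [t, norm_expTwoPiI]
  have ht : Summable t := by
    refine .of_norm ((summable_prod_of_nonneg fun _ => norm_nonneg _).2
      ⟨fun i => (hrow_norm i).summable, ?_⟩)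
    simp only [(hrow_norm _).tsum_eq]
    exact f.summable_norm τ.im hτ _ (norm_nonneg _)
  have hvalue : HasSum (fun p : ℕ × ι => t p.swap) (f.value τ z) := by
    rw [value, ← tsum_congr fun i => (hrow i).tsum_eq,
      ← ht.tsum_prod' fun i => (hrow i).summable]
    exact (Equiv.prodComm ℕ ι).hasSum_iff.2 ht.hasSum
  refine hvalue.prod_fiberwise fun a => ?_
  have h := (f.summable_moment hτ a).hasSum.mul_right ((2 * Real.pi * I * z) ^ a / a.factorial)
  rw [← mul_div_assoc] at h
  refine h.congr_fun fun i => ?_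
  simp only [t, Prod.swap, mul_pow]
  ring

lemma OrderGE.differentiableOn_moment (hf : f.OrderGE 0) (a : ℕ) :
    DifferentiableOn ℂ (fun τ => f.moment τ a) upperHalfPlaneSet := by
  intro τ (hτ : 0 < τ.im)
  have hopen : IsOpen {z : ℂ | τ.im / 2 < z.im} := isOpen_lt continuous_const continuous_im
  suffices DifferentiableOn ℂ (fun τ => f.moment τ a) {z : ℂ | τ.im / 2 < z.im} from
    (this.differentiableAt (hopen.mem_nhds (half_lt_self hτ))).differentiableWithinAt
  refine differentiableOn_tsum_of_summable_norm
    ((f.summable_norm _ (half_pos hτ) 1 zero_le_one).mul_left (a.factorial : ℝ))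
    (fun i => ?_) hopen fun i z (hz : τ.im / 2 < z.im) => ?_
  · exact ((differentiable_expTwoPiI.comp (differentiable_id.const_mul _)).const_mul
      _).differentiableOn
  · refine (f.norm_moment_term_le z a i).trans ?_
    have h := hf.majorant_le hz.le 1 i
    rw [zero_mul, mul_zero, Real.exp_zero, one_mul] at h
    exact mul_le_mul_of_nonneg_left h (by positivity)

lemma OrderGE.moment_isBigO (hs : f.OrderGE s) (a : ℕ) :
    (fun τ => f.moment τ a) =O[comap im atTop] fun τ => Real.exp (-2 * Real.pi * (s * τ.im)) := by
  refine .of_bound (∑' i, a.factorial * Real.exp (2 * Real.pi * s) * f.majorant 1 1 i) ?_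
  filter_upwards [preimage_mem_comap (Ici_mem_atTop 1)] with τ (hτ : 1 ≤ τ.im)
  rw [Real.norm_of_nonneg (Real.exp_pos _).le, ← tsum_mul_right]
  refine tsum_of_norm_bounded (((f.summable_norm 1 one_pos 1 zero_le_one).mul_left
    _).mul_right _).hasSum fun i => (f.norm_moment_term_le τ a i).trans ?_
  have hexp : Real.exp (-2 * Real.pi * (s * (τ.im - 1))) =
      Real.exp (2 * Real.pi * s) * Real.exp (-2 * Real.pi * (s * τ.im)) := by
    rw [← Real.exp_add]
    ring_nf
  have h := mul_le_mul_of_nonneg_left (hs.majorant_le hτ 1 i) (Nat.cast_nonneg a.factorial)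
  rw [hexp] at h
  exact h.trans_eq (by rw [majorant]; ring)

lemma OrderGE.tendsto_moment (hs : f.OrderGE s) (a : ℕ) :
    Tendsto (fun t : ℝ => Complex.exp (2 * Real.pi * s * t) * f.moment (t * I) a) atTop
      (𝓝 (f.leadingMoment s a)) := by
  have hterm (t : ℝ) (i : ι) : Complex.exp (2 * Real.pi * s * t) *
      (f.coeff i * f.freq i ^ a * 𝐞 (f.exponent i * (t * I))) =
        Real.exp (-(2 * Real.pi * (f.exponent i - s)) * t) * (f.coeff i * f.freq i ^ a) := by
    rw [expTwoPiI, mul_left_comm, ← Complex.exp_add, mul_comm, Complex.ofReal_exp]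
    congr 2
    push_cast
    linear_combination (2 * Real.pi * f.exponent i * t : ℂ) * I_sq
  have hlim := tendsto_tsum_exp_neg_mul (w := fun i => 2 * Real.pi * (f.exponent i - s))
    (c := fun i => f.coeff i * f.freq i ^ a)
    (fun i hi => mul_nonneg Real.two_pi_pos.le (sub_nonneg.2 (hs i (left_ne_zero_of_mul hi))))
    (((f.summable_moment (τ := (1 : ℝ) * I) (by simp) a).mul_left _).congr fun i => by
      rw [hterm 1, mul_one])
  have hzero (i : ι) : 2 * Real.pi * (f.exponent i - s) = 0 ↔ f.exponent i = s := by
    simp [Real.pi_ne_zero, sub_eq_zero]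
  simp only [hzero] at hlim
  refine hlim.congr fun t => ?_
  rw [moment, ← tsum_mul_left]
  exact tsum_congr fun i => (hterm t i).symm

lemma OrderGE.differentiableOn_correctedTaylor (hf : f.OrderGE 0) (m : ℂ) (N : ℕ) :
    DifferentiableOn ℂ (f.correctedTaylor m N) upperHalfPlaneSet := by
  unfold correctedTaylor heatTaylor
  exact .fun_sum fun p _ => ((hf.differentiableOn_moment p.1).const_mul _).mul
    ((differentiable_expSqCoeff p.2).comp_differentiableOn
      (differentiableOn_eisensteinTwo.const_mul _))

lemma OrderGE.correctedTaylor_isBigO (hs : f.OrderGE s) (m : ℂ) (N : ℕ) :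
    f.correctedTaylor m N =O[comap im atTop] fun τ => Real.exp (-2 * Real.pi * (s * τ.im)) := by
  unfold correctedTaylor heatTaylor
  refine .fun_sum fun p _ => ?_
  have h := ((hs.moment_isBigO p.1).const_mul_left (6 ^ p.1 / p.1.factorial)).mul
    (expSqCoeff_comp_isBigO_one (eisensteinTwo_isBigO_one.const_mul_left (-3 * m)) p.2)
  simpa only [mul_one] using h

lemma OrderGE.tendsto_correctedTaylor (hs : f.OrderGE s) (m : ℂ) (N : ℕ) :
    Tendsto (fun t : ℝ => Complex.exp (2 * Real.pi * s * t) * f.correctedTaylor m N (t * I)) atTop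
      (𝓝 (heatTaylor m (f.leadingMoment s) 1 N)) := by
  simp only [correctedTaylor, heatTaylor, Finset.mul_sum]
  refine tendsto_finsetSum _ fun p _ => ?_
  have hexp := ((differentiable_expSqCoeff p.2).continuous.tendsto _).comp
    (tendsto_eisensteinTwo.const_mul (-3 * m))
  refine (((hs.tendsto_moment p.1).const_mul _).mul hexp).congr fun t => ?_
  rw [Function.comp_apply]
  ring

lemma OrderGE.heatTaylor_leadingMoment_eq_zero (hs : f.OrderGE s) {m : ℂ} {N : ℕ}
    (h : ∀ τ : ℂ, 0 < τ.im → f.correctedTaylor m N τ = 0) :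
    heatTaylor m (f.leadingMoment s) 1 N = 0 := by
  refine tendsto_nhds_unique (hs.tendsto_correctedTaylor m N) (tendsto_const_nhds.congr' ?_)
  filter_upwards [eventually_gt_atTop 0] with t ht
  rw [h _ (by simpa using ht), mul_zero]

lemma correctedTaylor_neg_inv {c m τ : ℂ} (hτ : 0 < τ.im)
    (hfg : ∀ z, f.value (-1 / τ) (z / τ) = c * 𝐞 (m * z ^ 2 / τ) * g.value τ z) (N : ℕ) :
    f.correctedTaylor m N (-1 / τ) = c * τ ^ N * g.correctedTaylor m N τ :=
  heatTaylor_eq_of_jacobi (fun h => by simp [h] at hτ) (f.hasSum_moment (im_neg_inv_pos hτ))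
    (g.hasSum_moment hτ) (eisensteinTwo_neg_inv hτ) hfg N

lemma correctedTaylor_add_one {c m τ : ℂ} (hτ : 0 < τ.im)
    (hexponent : ∀ i, g.exponent i = f.exponent i) (hfreq : ∀ i, g.freq i = f.freq i)
    (hcoeff : ∀ i, f.coeff i * 𝐞 (f.exponent i) = c * g.coeff i) (N : ℕ) :
    f.correctedTaylor m N (τ + 1) = c * g.correctedTaylor m N τ := by
  have hmoment (a : ℕ) : f.moment (τ + 1) a = c * g.moment τ a := by
    rw [moment, moment, ← tsum_mul_left]
    refine tsum_congr fun i => ?_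
    rw [mul_add, expTwoPiI_add, mul_one, hexponent, hfreq]
    linear_combination (f.freq i : ℂ) ^ a * 𝐞 (f.exponent i * τ) * hcoeff i
  simp only [correctedTaylor, heatTaylor, eisensteinTwo_add_one hτ, hmoment, Finset.mul_sum]
  exact Finset.sum_congr rfl fun p _ => by ring

/-- All exponents that occur are integers. -/
def HasIntExponents (f : EllipticSeries ι) : Prop := ∀ i, ∃ n : ℤ, f.exponent i = n

/-- The law of a Jacobi form of weight `k` and index `m` under `τ ↦ -1 / τ`. -/
def IsJacobi (f : EllipticSeries ι) (k : ℕ) (m : ℤ) : Prop := ∀ τ : ℂ, 0 < τ.im → ∀ z,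
  f.value (-1 / τ) (z / τ) = τ ^ k * 𝐞 (m * z ^ 2 / τ) * f.value τ z

variable {k : ℕ} {m : ℤ}

lemma HasIntExponents.correctedTaylor_add_one (hf : f.HasIntExponents) {τ : ℂ} (hτ : 0 < τ.im)
    (m : ℂ) (N : ℕ) : f.correctedTaylor m N (τ + 1) = f.correctedTaylor m N τ := by
  refine (EllipticSeries.correctedTaylor_add_one (c := 1) hτ (fun _ => rfl) (fun _ => rfl)
    (fun i => ?_) N).trans (one_mul _)
  obtain ⟨n, hn⟩ := hf i
  rw [hn, Complex.ofReal_intCast, expTwoPiI_intCast, mul_one, one_mul]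

lemma IsJacobi.correctedTaylor_neg_inv (hf : f.IsJacobi k m) {τ : ℂ} (hτ : 0 < τ.im) (N : ℕ) :
    f.correctedTaylor m N (-1 / τ) = τ ^ (k + N) * f.correctedTaylor m N τ := by
  rw [EllipticSeries.correctedTaylor_neg_inv hτ (hf τ hτ), pow_add]

theorem IsJacobi.heatTaylor_leadingMoment_eq_zero (hf : f.IsJacobi k m) (hint : f.HasIntExponents)
    {s N : ℕ} (hs : f.OrderGE s) (hN : k + N < 12 * s ∨ k + N = 12 * s + 2) :
    heatTaylor m (f.leadingMoment s) 1 N = 0 :=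
  hs.heatTaylor_leadingMoment_eq_zero fun _ hτ => levelOne_eq_zero_of_isBigO
    (w := (k + N : ℕ)) (s := s)
    ((hs.mono s.cast_nonneg).differentiableOn_correctedTaylor m N)
    (fun _ hτ => hint.correctedTaylor_add_one hτ m N)
    (fun _ hτ => by exact_mod_cast hf.correctedTaylor_neg_inv hτ N)
    (hs.correctedTaylor_isBigO m N) (by exact_mod_cast hN) hτ

/-- The translate `z ↦ z + 1 / 2`. -/
def twist (f : EllipticSeries ι) : EllipticSeries ι where
  coeff i := f.coeff i * 𝐞 (f.freq i / 2)
  exponent := f.exponent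
  freq := f.freq
  summable_norm y hy R hR := by
    have hnorm (n : ℤ) : ‖𝐞 (n / 2)‖ = 1 := by simp [norm_expTwoPiI]
    simpa [hnorm] using f.summable_norm y hy R hR

/-- The translate `z ↦ z + τ / 2`, multiplied by the automorphy factor for index `m`. -/
def shift (f : EllipticSeries ι) (m : ℤ) : EllipticSeries ι where
  coeff := f.coeff
  exponent i := f.exponent i + f.freq i / 2 + m / 4
  freq i := f.freq i + m
  summable_norm y hy R hR := by
    have hpi := Real.pi_pos
    refine .of_nonneg_of_le (fun _ => by positivity) (fun i => ?_) <|
      (f.summable_norm y hy (R + Real.pi * y) (by positivity)).mul_left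
        (Real.exp (R * |(m : ℝ)| - 2 * Real.pi * (m / 4 * y)))
    rw [mul_assoc, mul_assoc ‖f.coeff i‖, mul_left_comm (Real.exp _) ‖f.coeff i‖, ← Real.exp_add,
      ← Real.exp_add, ← Real.exp_add]
    refine mul_le_mul_of_nonneg_left (Real.exp_le_exp.2 ?_) (norm_nonneg _)
    push_cast
    have hR := mul_le_mul_of_nonneg_left (abs_add_le (f.freq i : ℝ) m) hR
    have hy := mul_le_mul_of_nonneg_left (neg_abs_le (f.freq i : ℝ)) (mul_pos hpi hy).le
    linarith

lemma value_twist (f : EllipticSeries ι) (τ z : ℂ) :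
    f.twist.value τ z = f.value τ (z + 1 / 2) := by
  refine tsum_congr fun i => ?_
  rw [twist, mul_assoc, ← expTwoPiI_add]
  congr 2
  ring

lemma value_shift (f : EllipticSeries ι) (m : ℤ) (τ z : ℂ) :
    (f.shift m).value τ z = 𝐞 (m * τ / 4 + m * z) * f.value τ (z + τ / 2) := by
  rw [value, value, ← tsum_mul_left]
  refine tsum_congr fun i => ?_
  rw [shift, mul_left_comm, ← expTwoPiI_add]
  congr 2
  push_cast
  ring

lemma value_add_one (f : EllipticSeries ι) (τ z : ℂ) : f.value τ (z + 1) = f.value τ z := by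
  refine tsum_congr fun i => ?_
  rw [mul_add, mul_one, ← add_assoc, expTwoPiI_add_intCast]

lemma OrderGE.twist (hs : f.OrderGE s) : f.twist.OrderGE s :=
  fun i hi => hs i (left_ne_zero_of_mul hi)

lemma OrderGE.shift_twist (hs : (f.shift m).OrderGE s) : (f.twist.shift m).OrderGE s :=
  fun i hi => hs i (left_ne_zero_of_mul hi)

namespace IsJacobi

variable (hf : f.IsJacobi k m) {τ : ℂ} (hτ : 0 < τ.im) (N : ℕ)

include hf hτ

lemma correctedTaylor_shift_neg_inv :
    (f.shift m).correctedTaylor m N (-1 / τ) = τ ^ (k + N) * f.twist.correctedTaylor m N τ := by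
  have hτ0 : τ ≠ 0 := fun h => by simp [h] at hτ
  rw [EllipticSeries.correctedTaylor_neg_inv hτ (c := τ ^ k) fun z => ?_, pow_add]
  rw [value_shift, value_twist, show z / τ + -1 / τ / 2 = (z - 1 / 2) / τ by ring, hf τ hτ,
    ← f.value_add_one τ (z - 1 / 2), show z - 1 / 2 + 1 = z + 1 / 2 by ring]
  have hexp : 𝐞 (m * (-1 / τ) / 4 + m * (z / τ)) * 𝐞 (m * (z - 1 / 2) ^ 2 / τ) =
      𝐞 (m * z ^ 2 / τ) := by
    rw [← expTwoPiI_add]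
    congr 1
    field_simp
    ring
  rw [← hexp]
  ring

lemma correctedTaylor_twist_shift_neg_inv :
    (f.twist.shift m).correctedTaylor m N (-1 / τ) =
      𝐞 (-m / 2) * τ ^ (k + N) * (f.twist.shift m).correctedTaylor m N τ := by
  have hτ0 : τ ≠ 0 := fun h => by simp [h] at hτ
  rw [EllipticSeries.correctedTaylor_neg_inv hτ (c := 𝐞 (-m / 2) * τ ^ k) fun z => ?_, pow_add]
  · ring
  rw [value_shift, value_shift, value_twist, value_twist,
    show z / τ + -1 / τ / 2 + 1 / 2 = (z - 1 / 2 + τ / 2) / τ by field_simp; ring, hf τ hτ,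
    ← f.value_add_one τ (z - 1 / 2 + τ / 2),
    show z - 1 / 2 + τ / 2 + 1 = z + τ / 2 + 1 / 2 by ring]
  have hexp : 𝐞 (m * (-1 / τ) / 4 + m * (z / τ)) * 𝐞 (m * (z - 1 / 2 + τ / 2) ^ 2 / τ) =
      𝐞 (-m / 2) * 𝐞 (m * z ^ 2 / τ) * 𝐞 (m * τ / 4 + m * z) := by
    rw [← expTwoPiI_add, ← expTwoPiI_add, ← expTwoPiI_add]
    congr 1
    field_simp
    ring
  linear_combination τ ^ k * f.value τ (z + τ / 2 + 1 / 2) * hexp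

lemma correctedTaylor_twist_neg_inv (hN : Even (k + N)) :
    f.twist.correctedTaylor m N (-1 / τ) = τ ^ (k + N) * (f.shift m).correctedTaylor m N τ := by
  have hτ0 : τ ≠ 0 := fun h => by simp [h] at hτ
  have h := hf.correctedTaylor_shift_neg_inv (im_neg_inv_pos hτ) N
  have hτ' : -1 / (-1 / τ) = τ := by field_simp
  rw [hτ'] at h
  rw [h, ← mul_assoc, ← mul_pow, mul_div_cancel₀ _ hτ0, hN.neg_one_pow, one_mul]

end IsJacobi

section HalfPeriods

variable (hint : f.HasIntExponents) {τ : ℂ} (hτ : 0 < τ.im) (m : ℤ) (N : ℕ)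

include hint

lemma HasIntExponents.twist : f.twist.HasIntExponents := hint

include hτ

lemma HasIntExponents.correctedTaylor_shift_add_one :
    (f.shift m).correctedTaylor m N (τ + 1) =
      𝐞 (m / 4) * (f.twist.shift m).correctedTaylor m N τ := by
  refine EllipticSeries.correctedTaylor_add_one hτ (fun i => ?_) (fun i => ?_) (fun i => ?_) N
  · rfl
  · rfl
  obtain ⟨n, hn⟩ := hint i
  simp only [shift, EllipticSeries.twist, hn]
  push_cast
  rw [show (n + f.freq i / 2 + m / 4 : ℂ) = f.freq i / 2 + m / 4 + n by ring,
    expTwoPiI_add_intCast, expTwoPiI_add]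
  ring

lemma HasIntExponents.correctedTaylor_twist_shift_add_one :
    (f.twist.shift m).correctedTaylor m N (τ + 1) =
      𝐞 (m / 4) * (f.shift m).correctedTaylor m N τ := by
  refine EllipticSeries.correctedTaylor_add_one hτ (fun i => ?_) (fun i => ?_) (fun i => ?_) N
  · rfl
  · rfl
  obtain ⟨n, hn⟩ := hint i
  simp only [shift, EllipticSeries.twist, hn]
  push_cast
  rw [mul_assoc, ← expTwoPiI_add,
    show (f.freq i / 2 + (n + f.freq i / 2 + m / 4) : ℂ) = m / 4 + f.freq i + n by ring,
    expTwoPiI_add_intCast, expTwoPiI_add_intCast, mul_comm]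

end HalfPeriods

/-- The product of the corrected Taylor coefficients at the three half-periods `1 / 2`, `τ / 2` and
`(1 + τ) / 2`, which the modular group permutes up to scalars. -/
def halfPeriodProduct (f : EllipticSeries ι) (m : ℤ) (N : ℕ) (τ : ℂ) : ℂ :=
  f.twist.correctedTaylor m N τ * (f.shift m).correctedTaylor m N τ *
    (f.twist.shift m).correctedTaylor m N τ

lemma HasIntExponents.halfPeriodProduct_sq_add_one (hint : f.HasIntExponents) {τ : ℂ}
    (hτ : 0 < τ.im) (m : ℤ) (N : ℕ) :
    f.halfPeriodProduct m N (τ + 1) ^ 2 = f.halfPeriodProduct m N τ ^ 2 := by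
  have hroot : 𝐞 (m / 4) ^ 4 = 1 := by
    rw [expTwoPiI, ← Complex.exp_nat_mul, ← expTwoPiI_intCast m, expTwoPiI]
    congr 1
    push_cast
    ring
  simp only [halfPeriodProduct, hint.twist.correctedTaylor_add_one hτ,
    hint.correctedTaylor_shift_add_one hτ, hint.correctedTaylor_twist_shift_add_one hτ]
  linear_combination (f.twist.correctedTaylor m N τ * (f.shift m).correctedTaylor m N τ *
    (f.twist.shift m).correctedTaylor m N τ) ^ 2 * hroot

lemma IsJacobi.halfPeriodProduct_sq_neg_inv (hf : f.IsJacobi k m) {τ : ℂ} (hτ : 0 < τ.im) {N : ℕ}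
    (hN : Even (k + N)) : f.halfPeriodProduct m N (-1 / τ) ^ 2 =
      τ ^ (6 * (k + N)) * f.halfPeriodProduct m N τ ^ 2 := by
  have hroot : 𝐞 (-m / 2) ^ 2 = 1 := by
    rw [expTwoPiI, ← Complex.exp_nat_mul, ← expTwoPiI_intCast (-m), expTwoPiI]
    congr 1
    push_cast
    ring
  simp only [halfPeriodProduct, hf.correctedTaylor_twist_neg_inv hτ N hN,
    hf.correctedTaylor_shift_neg_inv hτ, hf.correctedTaylor_twist_shift_neg_inv hτ, mul_comm 6,
    pow_mul]
  linear_combination (τ ^ (k + N)) ^ 6 * (f.twist.correctedTaylor m N τ *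
    (f.shift m).correctedTaylor m N τ * (f.twist.shift m).correctedTaylor m N τ) ^ 2 * hroot

lemma differentiableOn_halfPeriodProduct (h₁ : f.OrderGE 0) (h₂ : (f.shift m).OrderGE 0) (N : ℕ) :
    DifferentiableOn ℂ (f.halfPeriodProduct m N) upperHalfPlaneSet :=
  ((h₁.twist.differentiableOn_correctedTaylor m N).mul
    (h₂.differentiableOn_correctedTaylor m N)).mul
    (h₂.shift_twist.differentiableOn_correctedTaylor m N)

lemma halfPeriodProduct_sq_isBigO {t : ℝ} (h₁ : f.OrderGE s) (h₂ : (f.shift m).OrderGE t) (N : ℕ) :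
    (fun τ => f.halfPeriodProduct m N τ ^ 2) =O[comap im atTop]
      fun τ => Real.exp (-2 * Real.pi * ((2 * s + 4 * t) * τ.im)) := by
  refine ((((h₁.twist.correctedTaylor_isBigO m N).mul (h₂.correctedTaylor_isBigO m N)).mul
    (h₂.shift_twist.correctedTaylor_isBigO m N)).pow 2).congr_right fun τ => ?_
  rw [← Real.exp_add, ← Real.exp_add, ← Real.exp_nat_mul]
  congr 1
  push_cast
  ring

theorem IsJacobi.halfPeriodProduct_eq_zero (hf : f.IsJacobi k m) (hint : f.HasIntExponents)
    {s e N : ℕ} (h₁ : f.OrderGE s) (h₂ : (f.shift m).OrderGE (e / 4)) (hN : Even (k + N))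
    (hlt : k + N < 4 * s + 2 * e) {τ : ℂ} (hτ : 0 < τ.im) : f.halfPeriodProduct m N τ = 0 := by
  refine pow_eq_zero_iff two_ne_zero |>.1 <| levelOne_eq_zero_of_isBigO
    (f := fun τ => f.halfPeriodProduct m N τ ^ 2) (w := (6 * (k + N) : ℕ)) (s := 2 * s + e)
    ((differentiableOn_halfPeriodProduct (h₁.mono s.cast_nonneg) (h₂.mono (by positivity)) N).pow 2)
    (fun _ hτ => hint.halfPeriodProduct_sq_add_one hτ m N)
    (fun _ hτ => by exact_mod_cast hf.halfPeriodProduct_sq_neg_inv hτ hN) ?_ (.inl (by omega)) hτ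
  refine (halfPeriodProduct_sq_isBigO h₁ h₂ N).congr_right fun τ => ?_
  congr 3
  push_cast
  ring

/-- The modular group permutes the three half-periods, so if the Taylor coefficient vanishes
identically at one of them, it does so at `1 / 2`. -/
theorem IsJacobi.correctedTaylor_twist_eq_zero (hf : f.IsJacobi k m) (hint : f.HasIntExponents)
    {s e N : ℕ} (h₁ : f.OrderGE s) (h₂ : (f.shift m).OrderGE (e / 4)) (hN : Even (k + N))
    (hlt : k + N < 4 * s + 2 * e) {τ : ℂ} (hτ : 0 < τ.im) : f.twist.correctedTaylor m N τ = 0 := by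
  have hs := h₁.mono s.cast_nonneg
  have he := h₂.mono (show (0 : ℝ) ≤ e / 4 by positivity)
  have hopen := UpperHalfPlane.isOpen_upperHalfPlaneSet
  have hconn : IsPreconnected upperHalfPlaneSet := (convex_halfSpace_im_gt 0).isPreconnected
  have hol₁ := (hs.twist.differentiableOn_correctedTaylor m N).analyticOnNhd hopen
  have hol₂ := (he.differentiableOn_correctedTaylor m N).analyticOnNhd hopen
  have hol₃ := (he.shift_twist.differentiableOn_correctedTaylor m N).analyticOnNhd hopen
  have of_shift (h : ∀ τ ∈ upperHalfPlaneSet, (f.shift m).correctedTaylor m N τ = 0) :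
      f.twist.correctedTaylor m N τ = 0 := by
    have h' := hf.correctedTaylor_shift_neg_inv hτ N
    rw [h _ (im_neg_inv_pos hτ)] at h'
    exact (mul_eq_zero.1 h'.symm).resolve_left
      (pow_ne_zero _ fun h => by simp [h] at hτ)
  have shift_of_twist_shift (h : ∀ τ ∈ upperHalfPlaneSet,
      (f.twist.shift m).correctedTaylor m N τ = 0) (τ : ℂ) (hτ : τ ∈ upperHalfPlaneSet) :
      (f.shift m).correctedTaylor m N τ = 0 := by
    have h' := hint.correctedTaylor_twist_shift_add_one hτ m N
    rw [h (τ + 1) (by simpa using hτ)] at h'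
    exact (mul_eq_zero.1 h'.symm).resolve_left (expTwoPiI_ne_zero _)
  rcases hol₁.eq_zero_or_eq_zero_of_smul_eq_zero (hol₂.smul hol₃) (fun τ hτ => by
    simpa only [smul_eq_mul, halfPeriodProduct, mul_assoc] using
      hf.halfPeriodProduct_eq_zero hint h₁ h₂ hN hlt hτ) hconn with h | h
  · exact h τ hτ
  rcases hol₂.eq_zero_or_eq_zero_of_smul_eq_zero hol₃ h hconn with h | h
  · exact of_shift h
  · exact of_shift (shift_of_twist_shift h)

theorem IsJacobi.heatTaylor_twist_leadingMoment_eq_zero (hf : f.IsJacobi k m)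
    (hint : f.HasIntExponents) {s e N : ℕ} (h₁ : f.OrderGE s) (h₂ : (f.shift m).OrderGE (e / 4))
    (hN : Even (k + N)) (hlt : k + N < 4 * s + 2 * e) :
    heatTaylor m (f.twist.leadingMoment s) 1 N = 0 :=
  h₁.twist.heatTaylor_leadingMoment_eq_zero fun _ hτ =>
    hf.correctedTaylor_twist_eq_zero hint h₁ h₂ hN hlt hτ

end EllipticSeries

/-! ### The first row of a Jacobi form -/

/-- The polynomials `N! · heatTaylor m (r ^ ·) 1 N`, which have integer coefficients: rescaled
Hermite polynomials in `r`. -/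
def heatPoly (m r : ℤ) : ℕ → ℤ
  | 0 => 1
  | 1 => 6 * r
  | N + 2 => 6 * r * heatPoly m r (N + 1) - 6 * m * (N + 1) * heatPoly m r N

lemma cast_heatPoly (m r : ℤ) (N : ℕ) :
    (heatPoly m r N : ℂ) = N.factorial * heatTaylor m (fun a => (r : ℂ) ^ a) 1 N := by
  have h0 : heatTaylor m (fun a => (r : ℂ) ^ a) 1 0 = 1 := by simp [heatTaylor, expSqCoeff]
  induction N using Nat.twoStepInduction with
  | zero => simp [heatPoly, h0]
  | one => simpa [heatPoly, h0] using (heatTaylor_pow_succ m r 1 0).symm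
  | more N ih₀ ih₁ =>
    have h := heatTaylor_pow_succ m r 1 (N + 1)
    simp only [Nat.add_eq_zero_iff, one_ne_zero, and_false, if_false, Nat.add_sub_cancel] at h
    rw [heatPoly, Nat.factorial_succ (N + 1)]
    push_cast at h ⊢
    rw [ih₀, ih₁, Nat.factorial_succ]
    push_cast
    linear_combination -((N : ℂ) + 1) * N.factorial * h

lemma heatPoly_neg (m r : ℤ) (N : ℕ) : heatPoly m (-r) N = (-1) ^ N * heatPoly m r N := by
  induction N using Nat.twoStepInduction with
  | zero => simp [heatPoly]
  | one => simp [heatPoly]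
  | more N ih₀ ih₁ =>
    rw [heatPoly, heatPoly, ih₀, ih₁]
    ring

lemma heatTaylor_sum {ι : Type*} (m E : ℂ) (s : Finset ι) (c : ι → ℂ) (x : ι → ℂ) (N : ℕ) :
    heatTaylor m (fun a => ∑ i ∈ s, c i * x i ^ a) E N =
      ∑ i ∈ s, c i * heatTaylor m (fun a => x i ^ a) E N := by
  simp only [heatTaylor, Finset.mul_sum, Finset.sum_mul]
  rw [Finset.sum_comm]
  exact Finset.sum_congr rfl fun i _ => Finset.sum_congr rfl fun p _ => by ring

lemma heatTaylor_eq_of_forall_lt_eq_zero {m E : ℂ} {M : ℕ → ℂ} {N : ℕ} (hM : ∀ a < N, M a = 0) :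
    heatTaylor m M E N = 6 ^ N / N.factorial * M N := by
  rw [heatTaylor, Finset.sum_eq_single (N, 0)]
  · simp [expSqCoeff]
  · rintro ⟨p, q⟩ hp hne
    have hp : p + q = N := Finset.HasAntidiagonal.mem_antidiagonal.1 hp
    have : p ≠ N := fun h => hne (by simp only [Prod.mk.injEq]; omega)
    simp [hM p (by omega)]
  · simp

/-- The number of integers with absolute value `r`. -/
def reflectionWeight (r : ℕ) : ℂ := if r = 0 then 1 else 2

lemma reflectionWeight_ne_zero (r : ℕ) : reflectionWeight r ≠ 0 := by
  unfold reflectionWeight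
  split_ifs <;> norm_num

lemma sum_Icc_eq_sum_reflectionWeight {f : ℤ → ℂ} (hf : f.Even) (m : ℕ) :
    ∑ r ∈ Finset.Icc (-m : ℤ) m, f r = ∑ r ∈ Finset.range (m + 1), reflectionWeight r * f r := by
  rw [Finset.sum_Icc_of_even_eq_range hf, Finset.sum_range_succ', Finset.sum_range_succ' (n := m)]
  simp only [reflectionWeight, if_true, Nat.add_eq_zero_iff, one_ne_zero, and_false, if_false,
    ← Finset.mul_sum]
  simp
  ring

/-- The Fourier coefficients `c n r` of a Jacobi cusp form `φ = ∑ c n r * q ^ n * ζ ^ r` of weight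
`k` and index `m`. The invariance under `z ↦ z + τ` and `z ↦ -z` is imposed on the coefficients, and
the transformation under `τ ↦ -1 / τ` on the function. -/
structure IsJacobiCuspCoeff (c : ℤ → ℤ → ℂ) (k m : ℕ) : Prop where
  summable_norm (y : ℝ) (hy : 0 < y) (R : ℝ) (hR : 0 ≤ R) : Summable fun q : ℤ × ℤ =>
    ‖c q.1 q.2‖ * Real.exp (-2 * Real.pi * (q.1 * y)) * Real.exp (R * |(q.2 : ℝ)|)
  neg_inv (τ : ℂ) (hτ : 0 < τ.im) (z : ℂ) :
    ∑' q : ℤ × ℤ, c q.1 q.2 * 𝐞 (q.1 * (-1 / τ) + q.2 * (z / τ)) =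
      τ ^ k * 𝐞 (m * z ^ 2 / τ) * ∑' q : ℤ × ℤ, c q.1 q.2 * 𝐞 (q.1 * τ + q.2 * z)
  lt_of_ne_zero (n r : ℤ) (h : c n r ≠ 0) : r ^ 2 < 4 * n * m
  neg (n r : ℤ) : c n (-r) = (-1) ^ k * c n r
  translate (n r : ℤ) : c (n - r + m) (r - 2 * m) = c n r

namespace IsJacobiCuspCoeff

variable {c : ℤ → ℤ → ℂ} {k m : ℕ} (hc : IsJacobiCuspCoeff c k m)

/-- The `q`-expansion of a Jacobi form as an elliptic series. -/
def series : EllipticSeries (ℤ × ℤ) where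
  coeff q := c q.1 q.2
  exponent q := q.1
  freq q := q.2
  summable_norm := hc.summable_norm

lemma isJacobi_series : hc.series.IsJacobi k m := fun τ hτ z => by
  simpa [EllipticSeries.value, series] using hc.neg_inv τ hτ z

lemma hasIntExponents_series : hc.series.HasIntExponents := fun q => ⟨q.1, rfl⟩

variable {n : ℕ}

lemma orderGE_series (hn : ∀ n' < (n : ℤ), ∀ r, c n' r = 0) : hc.series.OrderGE n := fun q hq => by
  by_contra! hlt
  exact hq (hn q.1 (Int.cast_lt.1 hlt) q.2)

include hc

lemma orderGE_shift_series {e : ℕ} (he : e = 1 ∨ e = 2 ∧ Even m) (hm : 0 < m) :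
    (hc.series.shift m).OrderGE (e / 4) := by
  rintro ⟨n, r⟩ hq
  have hlt := hc.lt_of_ne_zero n r hq
  have hpos : 0 < 4 * n + 2 * r + m :=
    pos_of_mul_pos_right (show 0 < (m : ℤ) * (4 * n + 2 * r + m) by nlinarith [sq_nonneg (r + m)])
      (Int.natCast_nonneg m)
  have he : (e : ℤ) ≤ 4 * n + 2 * r + m := by
    rcases he with rfl | ⟨rfl, b, rfl⟩ <;> omega
  simp only [EllipticSeries.shift, series]
  have : (e : ℝ) ≤ 4 * n + 2 * r + m := by exact_mod_cast he
  push_cast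
  linarith

lemma eq_zero_of_neg {r : ℤ} (h : c n (-r) = 0) : c n r = 0 := by
  rw [hc.neg] at h
  exact (mul_eq_zero.1 h).resolve_left (pow_ne_zero _ (by norm_num))

lemma eq_zero_of_odd (hk : Odd k) {r : ℤ} (hr : r = 0 ∨ r = m) : c n r = 0 := by
  have hanti : c n (-r) = -c n r := by rw [hc.neg, hk.neg_one_pow, neg_one_mul]
  have hsymm : c n (-r) = c n r := by
    rcases hr with rfl | rfl
    · rw [neg_zero]
    · rw [← hc.translate n m]
      congr 1 <;> ring
  exact self_eq_neg.1 (hsymm.symm.trans hanti)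

lemma first_row_eq_zero (hn : ∀ n' < (n : ℤ), ∀ r, c n' r = 0) {r : ℤ}
    (hr : r ∉ Finset.Icc (-m : ℤ) m) : c n r = 0 := by
  rw [Finset.mem_Icc, not_and_or, not_le, not_le] at hr
  rcases hr with hr | hr
  · exact hc.eq_zero_of_neg (hc.translate n (-r) ▸ hn _ (by omega) _)
  · exact hc.translate n r ▸ hn _ (by omega) _

lemma eq_zero_of_forall_le (hn : ∀ n' < (n : ℤ), ∀ r, c n' r = 0)
    (h : ∀ r : ℕ, r ≤ m → c n r = 0) (r : ℤ) : c n r = 0 := by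
  by_cases hr : r ∈ Finset.Icc (-m : ℤ) m
  · rw [Finset.mem_Icc] at hr
    obtain ⟨b, rfl | rfl⟩ := r.eq_nat_or_neg
    · exact h b (by omega)
    · exact hc.eq_zero_of_neg ((neg_neg (b : ℤ)).symm ▸ h b (by omega))
  · exact hc.first_row_eq_zero hn hr

lemma tsum_first_row (hn : ∀ n' < (n : ℤ), ∀ r, c n' r = 0) (g : ℤ → ℂ) :
    (∑' q : ℤ × ℤ, if (q.1 : ℝ) = n then c q.1 q.2 * g q.2 else 0) =
      ∑ r ∈ Finset.Icc (-m : ℤ) m, c n r * g r := by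
  rw [tsum_eq_sum (s := {(n : ℤ)} ×ˢ Finset.Icc (-m : ℤ) m), Finset.sum_product,
    Finset.sum_singleton]
  · simp
  · rintro ⟨n', r⟩ hq
    refine ite_eq_right_iff.2 fun h => ?_
    obtain rfl : n' = n := by exact_mod_cast h
    simp [hc.first_row_eq_zero hn (r := r) (by simpa using hq)]

lemma leadingMoment_series (hn : ∀ n' < (n : ℤ), ∀ r, c n' r = 0) :
    hc.series.leadingMoment n = fun a => ∑ r ∈ Finset.Icc (-m : ℤ) m, c n r * (r : ℂ) ^ a :=
  funext fun a => hc.tsum_first_row hn (fun r => (r : ℂ) ^ a)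

lemma leadingMoment_twist_series (hn : ∀ n' < (n : ℤ), ∀ r, c n' r = 0) :
    hc.series.twist.leadingMoment n =
      fun a => ∑ r ∈ Finset.Icc (-m : ℤ) m, c n r * (-1) ^ r * (r : ℂ) ^ a := by
  funext a
  have hsign (r : ℤ) : 𝐞 (r / 2) = (-1) ^ r := by
    rw [← expTwoPiI_one_half, expTwoPiI_zpow, mul_one_div]
  simpa [EllipticSeries.leadingMoment, EllipticSeries.twist, series, hsign, mul_assoc] using
    hc.tsum_first_row hn (fun r => (-1) ^ r * (r : ℂ) ^ a)

/-- Since `c n (-r) = (-1) ^ k * c n r`, an equation of even weight on a symmetric row is an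
equation on its half `0 ≤ r ≤ m`. -/
lemma sum_range_eq_zero_of_heatTaylor {ε : ℂ} (hε : ε⁻¹ = ε) {N : ℕ} (hN : Even (k + N))
    (h : heatTaylor m (fun a => ∑ r ∈ Finset.Icc (-m : ℤ) m, c n r * ε ^ r * (r : ℂ) ^ a) 1 N = 0) :
    ∑ r ∈ Finset.range (m + 1),
      ε ^ (r : ℤ) * heatPoly m r N * (reflectionWeight r * c n r) = 0 := by
  rw [heatTaylor_sum] at h
  have hsum : ∑ r ∈ Finset.Icc (-m : ℤ) m, c n r * ε ^ r * (heatPoly m r N : ℂ) = 0 := by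
    rw [← mul_eq_zero_of_right (N.factorial : ℂ) h, Finset.mul_sum]
    refine Finset.sum_congr rfl fun r _ => ?_
    rw [cast_heatPoly, mul_left_comm]
    rfl
  have heven : Function.Even fun r : ℤ => c n r * ε ^ r * (heatPoly m r N : ℂ) := fun r => by
    have hkN : (-1 : ℂ) ^ k * (-1) ^ N = 1 := by rw [← pow_add, hN.neg_one_pow]
    simp only [hc.neg, heatPoly_neg, _root_.zpow_neg, ← _root_.inv_zpow, hε]
    push_cast
    linear_combination c n r * ε ^ r * heatPoly m r N * hkN
  rw [sum_Icc_eq_sum_reflectionWeight heven] at hsum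
  rw [← hsum]
  exact Finset.sum_congr rfl fun r _ => by ring

theorem sum_heatPoly_eq_zero (hn : ∀ n' < (n : ℤ), ∀ r, c n' r = 0) {N : ℕ} (hN : Even (k + N))
    (hlt : k + N < 12 * n ∨ k + N = 12 * n + 2) :
    ∑ r ∈ Finset.range (m + 1), (heatPoly m r N : ℂ) * (reflectionWeight r * c n r) = 0 := by
  have h := hc.isJacobi_series.heatTaylor_leadingMoment_eq_zero hc.hasIntExponents_series
    (hc.orderGE_series hn) hlt
  rw [hc.leadingMoment_series hn] at h
  simpa using hc.sum_range_eq_zero_of_heatTaylor (ε := 1) inv_one hN (by simpa using h)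

theorem sum_neg_one_pow_mul_heatPoly_eq_zero (hn : ∀ n' < (n : ℤ), ∀ r, c n' r = 0) (hm : 0 < m)
    {N e : ℕ} (hN : Even (k + N)) (he : e = 1 ∨ e = 2 ∧ Even m) (hlt : k + N < 4 * n + 2 * e) :
    ∑ r ∈ Finset.range (m + 1),
      ((-1) ^ r * heatPoly m r N : ℂ) * (reflectionWeight r * c n r) = 0 := by
  have h := hc.isJacobi_series.heatTaylor_twist_leadingMoment_eq_zero hc.hasIntExponents_series
    (hc.orderGE_series hn) (hc.orderGE_shift_series he hm) hN hlt
  rw [hc.leadingMoment_twist_series hn] at h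
  simpa using hc.sum_range_eq_zero_of_heatTaylor (by norm_num) hN (by simpa using h)

lemma sum_pow_eq_zero (hn : ∀ n' < (n : ℤ), ∀ r, c n' r = 0) {N : ℕ} (hlt : k + N < 12 * n) :
    ∑ r ∈ Finset.Icc (-m : ℤ) m, c n r * (r : ℂ) ^ N = 0 := by
  induction N using Nat.strong_induction_on with
  | _ N ih =>
    have h := hc.isJacobi_series.heatTaylor_leadingMoment_eq_zero hc.hasIntExponents_series
      (hc.orderGE_series hn) (Or.inl hlt)
    rw [hc.leadingMoment_series hn,
      heatTaylor_eq_of_forall_lt_eq_zero fun a ha => ih a ha (by omega)] at h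
    exact (mul_eq_zero.1 h).resolve_left
      (div_ne_zero (by norm_num) (by exact_mod_cast N.factorial_ne_zero))

theorem first_row_eq_zero_of_lt (hn : ∀ n' < (n : ℤ), ∀ r, c n' r = 0) (hlt : k + 2 * m < 12 * n)
    (r : ℤ) : c n r = 0 := by
  by_cases hr : r ∈ Finset.Icc (-m : ℤ) m
  swap
  · exact hc.first_row_eq_zero hn hr
  let e : Fin (Fintype.card (Finset.Icc (-m : ℤ) m)) ≃ Finset.Icc (-m : ℤ) m :=
    (Fintype.equivFin _).symm
  have hinj : Function.Injective fun i => ((e i : ℤ) : ℂ) :=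
    Int.cast_injective.comp (Subtype.val_injective.comp e.injective)
  have hzero := Matrix.eq_zero_of_forall_pow_sum_mul_pow_eq_zero (v := fun i => c n (e i)) hinj
    fun N => ?_
  · simpa using congrFun hzero (e.symm ⟨r, hr⟩)
  · have hN : (N : ℕ) < 2 * m + 1 := N.2.trans_le (by simp; omega)
    rw [e.sum_comp (fun r => c n r * ((r : ℤ) : ℂ) ^ (N : ℕ)),
      Finset.sum_coe_sort (Finset.Icc (-m : ℤ) m) (fun r => c n r * (r : ℂ) ^ (N : ℕ))]
    exact hc.sum_pow_eq_zero hn (by omega)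

end IsJacobiCuspCoeff

/-! ### Orders of vanishing of Fourier–Jacobi coefficients -/

section CoeffOrder

variable {j k : ℕ} {F : (Fin 2 → Fin 2 → ℂ) → (Fin (j + 1) → ℂ)}
  {a : ℤ → ℤ → ℤ → Fin (j + 1) → ℂ} {m : ℤ} {i : ℕ}

/-- Every Fourier coefficient of the Fourier–Jacobi coefficient `φₘ` is divisible by `x ^ i`, as a
binary form in `x` and `y`. -/
def CoeffOrderGE (a : ℤ → ℤ → ℤ → Fin (j + 1) → ℂ) (m : ℤ) (i : ℕ) : Prop :=
  ∀ n r, ∀ l : Fin (j + 1), j < l + i → a n r m l = 0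

lemma coeffOrderGE_zero (a : ℤ → ℤ → ℤ → Fin (j + 1) → ℂ) (m : ℤ) : CoeffOrderGE a m 0 :=
  fun _ _ l hl => absurd hl (by have := l.2; omega)

lemma CoeffOrderGE.eq_zero (ho : CoeffOrderGE a m i) (hi : j < i) (n r : ℤ) : a n r m = 0 :=
  funext fun l => ho n r l (by omega)

lemma CoeffOrderGE.symAct_apply (ho : CoeffOrderGE a m i) {l : Fin (j + 1)} (hl : (l : ℕ) + i = j)
    (b c d : ℂ) (n r : ℤ) :
    symAct j !![b, c; 0, d] (a n r m) l = b ^ i * d ^ (l : ℕ) * a n r m l := by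
  rw [symAct_upperTriangular b c d fun l' hl' => ho n r l' (by have : (l : ℕ) < l' := hl'; omega),
    show j - l = i by omega]

lemma IsFourierCoeff.jacobiCoeff_apply (ha : IsFourierCoeff F a) (l : Fin (j + 1)) (m : ℤ) {τ : ℂ}
    (hτ : 0 < τ.im) (z : ℂ) :
    jacobiCoeff a m τ z l = ∑' q : ℤ × ℤ, a q.1 q.2 m l * 𝐞 (q.1 * τ + q.2 * z) := by
  simpa [mul_comm] using (Pi.hasSum.1 (ha.hasSum_jacobiCoeff m hτ z) l).tsum_eq.symm

lemma IsFourierCoeff.summable_norm_jacobiCoeff (ha : IsFourierCoeff F a) (m : ℤ) (l : Fin (j + 1))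
    {y : ℝ} (hy : 0 < y) (R : ℝ) : Summable fun q : ℤ × ℤ =>
      ‖a q.1 q.2 m l‖ * Real.exp (-2 * Real.pi * (q.1 * y)) * Real.exp (R * |(q.2 : ℝ)|) := by
  have hexp (s : ℝ) : Summable fun q : ℤ × ℤ =>
      ‖a q.1 q.2 m l‖ * Real.exp (-2 * Real.pi * (q.1 * y)) * Real.exp (s * q.2) := by
    have h := (Pi.summable.1 (ha.hasSum_jacobiCoeff m (τ := y * I) (by simpa using hy)
      ((-s / (2 * Real.pi) : ℝ) * I)).summable l).norm
    refine h.congr fun q => ?_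
    have him : (q.1 * (y * I) + q.2 * ((-s / (2 * Real.pi) : ℝ) * I)).im =
      q.1 * y + q.2 * (-s / (2 * Real.pi)) := by simp [-ofReal_div]
    rw [Pi.smul_apply, norm_smul, norm_expTwoPiI, him, mul_comm, mul_assoc ‖_‖, ← Real.exp_add]
    congr 2
    field_simp
    ring
  refine .of_nonneg_of_le (fun _ => by positivity) (fun q => ?_) ((hexp R).add (hexp (-R)))
  rw [← mul_add]
  gcongr
  rcases abs_cases (q.2 : ℝ) with ⟨h, -⟩ | ⟨h, -⟩ <;> rw [h]
  · exact le_add_of_nonneg_right (Real.exp_pos _).le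
  · rw [← neg_mul_comm]
    exact le_add_of_nonneg_left (Real.exp_pos _).le

lemma IsFourierCoeff.symAct_unipotent (ha : IsFourierCoeff F a)
    (hF : IsSiegelCuspForm j k Sp4Z (fun _ => 1) F) {γ δ : ℤ} (hδ : δ ^ 2 = 1) (n r m : ℤ) :
    (δ : ℂ) ^ k • a (n + r * γ + m * γ ^ 2) (r * δ + 2 * m * γ * δ) m =
      symAct j !![1, γ; 0, δ] (a n r m) := by
  refine eq_of_binForm_eq fun x y => ?_
  have h := ha.binForm_subst hF (α := 1) (β := 0) (γ := γ) (δ := δ) (e := δ) (by ring) hδ n r m x y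
  rw [map_smul, binForm_symAct, smul_eq_mul]
  simpa [hδ] using h

lemma CoeffOrderGE.apply_unipotent (ho : CoeffOrderGE a m i) (ha : IsFourierCoeff F a)
    (hF : IsSiegelCuspForm j k Sp4Z (fun _ => 1) F) {l : Fin (j + 1)} (hl : (l : ℕ) + i = j)
    {γ δ : ℤ} (hδ : δ ^ 2 = 1) (n r : ℤ) :
    (δ : ℂ) ^ k * a (n + r * γ + m * γ ^ 2) (r * δ + 2 * m * γ * δ) m l =
      δ ^ (l : ℕ) * a n r m l := by
  have h := congrFun (ha.symAct_unipotent hF (γ := γ) hδ n r m) l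
  rwa [ho.symAct_apply hl, one_pow, one_mul] at h

theorem CoeffOrderGE.isJacobiCuspCoeff {m : ℕ} (ho : CoeffOrderGE a m i) (ha : IsFourierCoeff F a)
    (hF : IsSiegelCuspForm j k Sp4Z (fun _ => 1) F) (hj : Even j) {l : Fin (j + 1)}
    (hl : (l : ℕ) + i = j) : IsJacobiCuspCoeff (fun n r => a n r m l) (k + i) m where
  summable_norm y hy R _ := ha.summable_norm_jacobiCoeff m l hy R
  neg_inv τ hτ z := by
    have h := congrFun (ha.jacobiCoeff_neg_inv hF m hτ z) l
    have hlead : symAct j !![τ, z; 0, 1] (jacobiCoeff a m τ z) l =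
        τ ^ i * jacobiCoeff a m τ z l := by
      rw [symAct_upperTriangular, one_pow, mul_one, show j - l = i by omega]
      intro l' hl'
      have hj : j < l' + i := by
        rw [Fin.lt_def] at hl'
        omega
      simp [ha.jacobiCoeff_apply l' m hτ z, ho _ _ l' hj]
    rw [Pi.smul_apply, hlead, ha.jacobiCoeff_apply l m hτ,
      ha.jacobiCoeff_apply l m (im_neg_inv_pos hτ)] at h
    rw [h, pow_add, zpow_natCast, smul_eq_mul]
    push_cast
    ring
  lt_of_ne_zero n r h := (ha.pos_of_ne_zero hF fun h0 => h (congrFun h0 l)).2.2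
  neg n r := by
    have h : (-1) ^ k * a n (-r) m l = (-1) ^ (l : ℕ) * a n r m l := by
      simpa using ho.apply_unipotent ha hF hl (γ := 0) (δ := -1) (by norm_num) n r
    have hsign : (-1 : ℂ) ^ (l : ℕ) = (-1) ^ i := by
      have := hj.neg_one_pow (α := ℂ)
      rw [← hl, pow_add] at this
      exact mul_right_cancel₀ (pow_ne_zero i (by norm_num : (-1 : ℂ) ≠ 0))
        (this.trans (by rw [← mul_pow]; norm_num))
    have hk : (-1 : ℂ) ^ k * (-1) ^ k = 1 := by rw [← mul_pow]; norm_num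
    rw [hsign] at h
    rw [pow_add]
    linear_combination (-1 : ℂ) ^ k * h - a n (-r) m l * hk
  translate n r := by
    have h := ho.apply_unipotent ha hF hl (γ := -1) (δ := 1) (by norm_num) n r
    simp only [Int.cast_one, one_pow, one_mul] at h
    rw [← h]
    congr 2 <;> ring

lemma CoeffOrderGE.succ (ho : CoeffOrderGE a m i) (ha : IsFourierCoeff F a)
    (hF : IsSiegelCuspForm j k Sp4Z (fun _ => 1) F)
    (hstep : ∀ l : Fin (j + 1), (l : ℕ) + i = j → ∀ n : ℕ, 0 < n →
      (∀ n' < (n : ℤ), ∀ r, a n' r m l = 0) → ∀ r, a n r m l = 0) :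
    CoeffOrderGE a m (i + 1) := by
  intro n r l hl
  rcases (show j ≤ l + i by omega).lt_or_eq with hlt | heq
  · exact ho n r l hlt
  have hnonpos (n : ℤ) (hn : n ≤ 0) (r : ℤ) : a n r m l = 0 := by
    by_contra hne
    exact hn.not_gt (ha.pos_of_ne_zero hF fun h0 => hne (congrFun h0 l)).2.1
  have hnat (n : ℕ) : ∀ r, a n r m l = 0 := by
    induction n using Nat.strong_induction_on with
    | _ n ih =>
      rcases n.eq_zero_or_pos with rfl | hn
      · exact hnonpos _ le_rfl
      refine hstep l heq.symm n hn fun n' hn' => ?_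
      obtain ⟨b, rfl | rfl⟩ := n'.eq_nat_or_neg
      · exact ih b (by omega)
      · exact hnonpos _ (by omega)
  obtain ⟨b, rfl | rfl⟩ := n.eq_nat_or_neg
  · exact hnat b r
  · exact hnonpos _ (by omega) r

theorem coeffOrderGE_of_rows_eq_zero {m s : ℕ} (ha : IsFourierCoeff F a)
    (hF : IsSiegelCuspForm j k Sp4Z (fun _ => 1) F) (hj : Even j)
    (hrows : ∀ n < (s : ℤ), ∀ r, a n r m = 0) (hi : k + i + 2 * m ≤ 12 * s) :
    CoeffOrderGE a m i := by
  induction i with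
  | zero => exact coeffOrderGE_zero a m
  | succ i ih =>
    have ho := ih (by omega)
    refine ho.succ ha hF fun l hl n _ hn r => ?_
    by_cases hs : n < s
    · exact congrFun (hrows n (by exact_mod_cast hs) r) l
    · exact (ho.isJacobiCuspCoeff ha hF hj hl).first_row_eq_zero_of_lt hn (by omega) r

end CoeffOrder

/-! ### Integer elimination -/

section Elimination

variable {M : Type*} [AddCommGroup M]

/-- The linear form with coefficients `r`, evaluated at the vector `x`. -/
def linearForm (r : List ℤ) (x : List M) : M := (List.zipWith (· • ·) r x).sum

/-- The combination `p • r - h • s` of integer rows, padded with zeros to the same length. -/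
def combineRows (p h : ℤ) (r s : List ℤ) : List ℤ :=
  List.zipWithAll (fun a b => p * a.getD 0 - h * b.getD 0) r s

/-- The greatest common divisor of the entries of a row. -/
def rowContent (r : List ℤ) : ℤ := r.foldr (fun a g => Int.gcd a g) 0

/-- The row divided by the greatest common divisor of its entries; without this the numbers in the
elimination would grow exponentially. -/
def primitiveRow (r : List ℤ) : List ℤ := r.map (· / rowContent r)

/-- Eliminates the first column from a row, using the pivot row `pivot`. -/
def reduceRow (pivot r : List ℤ) : List ℤ :=
  if r.headI = 0 then r.tail else
    primitiveRow (combineRows pivot.headI r.headI r.tail pivot.tail)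

/-- Gaussian elimination, checking that an integer system in `n` unknowns has only the zero
solution. -/
def hasTrivialKernel : ℕ → List (List ℤ) → Bool
  | 0, _ => true
  | n + 1, R => match R.find? (·.headI ≠ 0) with
    | none => false
    | some pivot => hasTrivialKernel n (R.map (reduceRow pivot))

lemma linearForm_cons (r : List ℤ) (x : M) (xs : List M) :
    linearForm r (x :: xs) = r.headI • x + linearForm r.tail xs := by
  cases r <;> simp [linearForm]

lemma linearForm_nil (r : List ℤ) : linearForm r ([] : List M) = 0 := by simp [linearForm]

lemma linearForm_replicate_zero (r : List ℤ) (n : ℕ) :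
    linearForm r (List.replicate n (0 : M)) = 0 := by
  induction n generalizing r with
  | zero => exact linearForm_nil r
  | succ n ih => rw [List.replicate_succ, linearForm_cons, ih, smul_zero, add_zero]

lemma linearForm_combineRows (p h : ℤ) (r s : List ℤ) (x : List M) :
    linearForm (combineRows p h r s) x = p • linearForm r x - h • linearForm s x := by
  induction x generalizing r s with
  | nil => simp [linearForm_nil]
  | cons x xs ih =>
    have hhead : (combineRows p h r s).headI = p * r.headI - h * s.headI := by
      cases r <;> cases s <;> simp [combineRows]
    have htail : (combineRows p h r s).tail = combineRows p h r.tail s.tail := by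
      cases r <;> cases s <;> simp [combineRows]
    rw [linearForm_cons, linearForm_cons, linearForm_cons, hhead, htail, ih]
    module

lemma smul_linearForm_map_ediv {g : ℤ} {r : List ℤ} (hg : ∀ a ∈ r, g ∣ a) (x : List M) :
    g • linearForm (r.map (· / g)) x = linearForm r x := by
  induction r generalizing x with
  | nil => simp [linearForm]
  | cons a r ih =>
    rw [List.forall_mem_cons] at hg
    cases x with
    | nil => simp [linearForm_nil]
    | cons x xs =>
      simp only [List.map_cons, linearForm_cons, List.headI_cons, List.tail_cons, smul_add, ih hg.2,
        smul_smul, Int.mul_ediv_cancel' hg.1]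

lemma rowContent_dvd (r : List ℤ) : ∀ a ∈ r, rowContent r ∣ a := by
  induction r with
  | nil => simp
  | cons a r ih =>
    rw [rowContent, List.foldr_cons, List.forall_mem_cons]
    exact ⟨Int.gcd_dvd_left .., fun b hb => (Int.gcd_dvd_right ..).trans (ih b hb)⟩

variable [IsAddTorsionFree M]

lemma linearForm_primitiveRow {r : List ℤ} {x : List M} (h : linearForm r x = 0) :
    linearForm (primitiveRow r) x = 0 := by
  rcases eq_or_ne (rowContent r) 0 with hg | hg
  · have hid : primitiveRow r = r := (List.map_congr_left fun a ha => by
      simp [zero_dvd_iff.1 (hg ▸ rowContent_dvd r a ha)]).trans r.map_id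
    rwa [hid]
  · rw [← smul_linearForm_map_ediv (rowContent_dvd r)] at h
    exact (smul_eq_zero.1 h).resolve_left hg

lemma linearForm_reduceRow {pivot r : List ℤ} {x : M} {xs : List M}
    (hpivot : linearForm pivot (x :: xs) = 0) (hr : linearForm r (x :: xs) = 0) :
    linearForm (reduceRow pivot r) xs = 0 := by
  rw [linearForm_cons] at hpivot hr
  unfold reduceRow
  split_ifs with h
  · simpa [h] using hr
  · refine linearForm_primitiveRow ?_
    rw [linearForm_combineRows, eq_neg_of_add_eq_zero_right hpivot, eq_neg_of_add_eq_zero_right hr]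
    module

theorem eq_replicate_zero_of_hasTrivialKernel {n : ℕ} {R : List (List ℤ)}
    (h : hasTrivialKernel n R) {x : List M} (hx : x.length = n)
    (hR : ∀ r ∈ R, linearForm r x = 0) : x = List.replicate n 0 := by
  induction n generalizing R x with
  | zero => exact List.length_eq_zero_iff.1 hx
  | succ n ih =>
    obtain ⟨x, xs, rfl⟩ := List.exists_cons_of_length_eq_add_one hx
    rw [hasTrivialKernel] at h
    cases hp : R.find? (·.headI ≠ 0) with
    | none => simp only [hp, Bool.false_eq_true] at h
    | some pivot =>
      simp only [hp] at h
      have hpivot := hR pivot (List.mem_of_find?_eq_some hp)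
      have hxs : xs = List.replicate n 0 := by
        refine ih h (by simpa using hx) fun r hr => ?_
        obtain ⟨r', hr', rfl⟩ := List.mem_map.1 hr
        exact linearForm_reduceRow hpivot (hR r' hr')
      rw [hxs, linearForm_cons, linearForm_replicate_zero, add_zero] at hpivot
      rw [hxs, (smul_eq_zero.1 hpivot).resolve_left (by simpa using List.find?_some hp),
        List.replicate_succ]

end Elimination

section OrderCheck

/-- The rows `r ↦ heatPoly m r N` for `L` consecutive values of `N`, each labelled by `N`. The state
consists of triples `(r, heatPoly m r N, heatPoly m r (N + 1))`. -/
def heatRowsFrom (m : ℤ) : ℕ → ℕ → List (ℤ × ℤ × ℤ) → List (ℕ × List ℤ)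
  | 0, _, _ => []
  | L + 1, N, S => (N, S.map fun q => q.2.1) :: heatRowsFrom m L (N + 1)
      (S.map fun q => (q.1, q.2.2, 6 * q.1 * q.2.2 - 6 * m * (N + 1) * q.2.1))

/-- The rows `r ↦ heatPoly m r N` for `r` in `rs` and `N < L`, each labelled by `N`. -/
def heatRows (m : ℤ) (rs : List ℕ) (L : ℕ) : List (ℕ × List ℤ) :=
  heatRowsFrom m L 0 (rs.map fun r : ℕ => ((r : ℤ), 1, 6 * (r : ℤ)))

lemma mem_heatRowsFrom {m : ℤ} {rs : List ℕ} {L N : ℕ} {p : ℕ × List ℤ}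
    (hp : p ∈ heatRowsFrom m L N
      (rs.map fun r : ℕ => ((r : ℤ), heatPoly m r N, heatPoly m r (N + 1)))) :
    p.2 = rs.map fun r : ℕ => heatPoly m r p.1 := by
  induction L generalizing N with
  | zero => simp [heatRowsFrom] at hp
  | succ L ih =>
    rw [heatRowsFrom, List.map_map, List.map_map, List.mem_cons] at hp
    rcases hp with rfl | hp
    · rfl
    · exact ih hp

lemma mem_heatRows {m : ℤ} {rs : List ℕ} {L : ℕ} {p : ℕ × List ℤ} (hp : p ∈ heatRows m rs L) :
    p.2 = rs.map fun r : ℕ => heatPoly m r p.1 := mem_heatRowsFrom (N := 0) hp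

/-- The row with the entries at odd `r` negated. -/
def signRow (rs : List ℕ) (row : List ℤ) : List ℤ :=
  List.zipWith (fun r b => if Even r then b else -b) rs row

lemma signRow_map (rs : List ℕ) (f : ℕ → ℤ) :
    signRow rs (rs.map f) = rs.map fun r => (-1) ^ r * f r := by
  rw [signRow, List.zipWith_map_right, List.zipWith_self]
  refine List.map_congr_left fun r _ => ?_
  rcases r.even_or_odd with h | h
  · simp [h]
  · simp [h.neg_one_pow, Nat.not_even_iff_odd.2 h]

/-- The linear equations satisfied by the entries `r ∈ rs` of the first non-zero row, if that is the
row `n`, of a Jacobi cusp form of weight `k` and index `m`. -/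
def rowEquations (n k m : ℕ) (rs : List ℕ) : List (List ℤ) :=
  (heatRows m rs (12 * n + 3 - k)).flatMap fun p =>
    if Even (k + p.1) then
      (if k + p.1 < 12 * n ∨ k + p.1 = 12 * n + 2 then [p.2] else []) ++
      (if k + p.1 < 4 * n + 2 * (if Even m then 2 else 1) then [signRow rs p.2] else [])
    else []

/-- The entries `0 ≤ r ≤ m` of the first row that can be non-zero, when those with `4nm - r² < D`
are known to vanish. -/
def freeEntries (D n k m : ℕ) : List ℕ :=
  (List.range (m + 1)).filter fun r => (Even k ∨ r ≠ 0 ∧ r ≠ m) ∧ D + r * r ≤ 4 * n * m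

/-- The row `n` of a Jacobi cusp form is forced to vanish if the previous ones do. -/
def rowForcedZero (D n k m : ℕ) : Bool :=
  let rs := freeEntries D n k m
  hasTrivialKernel rs.length (rowEquations n k m rs)

/-- The numerical criterion for the Fourier–Jacobi coefficient of index `m` of a Siegel cusp form to
have order at least `i`, when the coefficients at the forms `[n, r, m]` with `n = 1` or `m = 1`
and `4nm - r² < D` are known to vanish. The rows `n > (k + i' + 2m) / 12` need no check. -/
def orderCheck (D k m i : ℕ) : Bool :=
  decide (∀ i' < i, ∀ n < (k + i' + 2 * m) / 12,
    rowForcedZero (if n = 0 ∨ m = 1 then D else 1) (n + 1) (k + i') m)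

lemma linearForm_map_filter {M : Type*} [AddCommGroup M] {N : ℕ} {p : ℕ → Bool} {f : ℕ → ℤ}
    {g : ℕ → M} (hg : ∀ r < N, p r = false → g r = 0) :
    linearForm (((List.range N).filter p).map f) (((List.range N).filter p).map g) =
      ∑ r ∈ Finset.range N, f r • g r := by
  rw [linearForm, List.zipWith_map, List.zipWith_self,
    ← List.sum_toFinset _ (List.nodup_range.filter p), List.toFinset_filter, List.toFinset_range,
    Finset.sum_filter]
  refine Finset.sum_congr rfl fun r hr => ite_eq_left_iff.2 fun h => ?_
  rw [hg r (Finset.mem_range.1 hr) (by simpa using h), smul_zero]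

namespace IsJacobiCuspCoeff

variable {c : ℤ → ℤ → ℂ} {k m n : ℕ}

lemma linearForm_rowEquations (hc : IsJacobiCuspCoeff c k m)
    (hn : ∀ n' < (n : ℤ), ∀ r, c n' r = 0) (hm : 0 < m) {p : ℕ → Bool}
    (hp : ∀ r < m + 1, p r = false → c n r = 0) {row : List ℤ}
    (hrow : row ∈ rowEquations n k m ((List.range (m + 1)).filter p)) :
    linearForm row (((List.range (m + 1)).filter p).map fun r : ℕ =>
      reflectionWeight r * c n r) = 0 := by
  have hg (r : ℕ) (hr : r < m + 1) (h : p r = false) : reflectionWeight r * c n r = 0 := by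
    rw [hp r hr h, mul_zero]
  obtain ⟨q, hq, hrow⟩ := List.mem_flatMap.1 hrow
  rw [mem_heatRows hq, signRow_map, List.mem_ite_nil_right, List.mem_append,
    List.mem_ite_nil_right, List.mem_ite_nil_right, List.mem_singleton,
    List.mem_singleton] at hrow
  obtain ⟨hN, ⟨hlt, rfl⟩ | ⟨hlt, rfl⟩⟩ := hrow <;> rw [linearForm_map_filter hg]
  · simpa using hc.sum_heatPoly_eq_zero hn hN hlt
  · have he : (if Even m then 2 else 1) = 1 ∨ (if Even m then 2 else 1) = 2 ∧ Even m := by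
      split_ifs with h <;> simp [h]
    simpa using hc.sum_neg_one_pow_mul_heatPoly_eq_zero hn hm hN he hlt

theorem eq_zero_of_rowForcedZero (hc : IsJacobiCuspCoeff c k m)
    (hn : ∀ n' < (n : ℤ), ∀ r, c n' r = 0) (hm : 0 < m) {D : ℕ}
    (hD : ∀ r : ℤ, 4 * n * m - r ^ 2 < D → c n r = 0) (h : rowForcedZero D n k m) (r : ℤ) :
    c n r = 0 := by
  refine hc.eq_zero_of_forall_le hn (fun r hr => ?_) r
  set p : ℕ → Bool := fun r => (Even k ∨ r ≠ 0 ∧ r ≠ m) ∧ D + r * r ≤ 4 * n * m with hp_def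
  have hp (r : ℕ) (_ : r < m + 1) (h : p r = false) : c n r = 0 := by
    simp only [hp_def, decide_eq_false_iff_not, not_and_or, not_le] at h
    rcases h with h | h
    · rw [not_or, not_and_or, not_not, not_not, Nat.not_even_iff_odd] at h
      exact hc.eq_zero_of_odd h.1 (by exact_mod_cast h.2)
    · refine hD r ?_
      zify at h
      linarith [sq (r : ℤ)]
  cases hpr : p r with
  | false => exact hp r (by omega) hpr
  | true =>
    have hzero := eq_replicate_zero_of_hasTrivialKernel h (List.length_map ..)
      fun row hrow => hc.linearForm_rowEquations hn hm hp hrow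
    have hmem : r ∈ (List.range (m + 1)).filter p :=
      List.mem_filter.2 ⟨List.mem_range.2 (by omega), hpr⟩
    exact (mul_eq_zero.1 (List.eq_of_mem_replicate (hzero ▸ List.mem_map_of_mem hmem))).resolve_left
      (reflectionWeight_ne_zero r)

end IsJacobiCuspCoeff

variable {j k : ℕ} {F : (Fin 2 → Fin 2 → ℂ) → (Fin (j + 1) → ℂ)}
  {a : ℤ → ℤ → ℤ → Fin (j + 1) → ℂ}

/-- The Fourier coefficients at the forms `[n, r, m]` with `n = 1` or `m = 1` and `4nm - r² < D`
vanish. -/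
def UnitDiscriminantGE (a : ℤ → ℤ → ℤ → Fin (j + 1) → ℂ) (D : ℕ) : Prop :=
  ∀ n r m : ℤ, n = 1 ∨ m = 1 → 4 * n * m - r ^ 2 < D → a n r m = 0

theorem UnitDiscriminantGE.coeffOrderGE {D m i : ℕ} (hD : UnitDiscriminantGE a D)
    (ha : IsFourierCoeff F a) (hF : IsSiegelCuspForm j k Sp4Z (fun _ => 1) F) (hj : Even j)
    (hm : 0 < m) (h : orderCheck D k m i) : CoeffOrderGE a m i := by
  have h := of_decide_eq_true h
  suffices ∀ i' ≤ i, CoeffOrderGE a m i' from this i le_rfl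
  intro i' hi'
  induction i' with
  | zero => exact coeffOrderGE_zero a m
  | succ i' ih =>
    have ho := ih (by omega)
    refine ho.succ ha hF fun l hl n hn hrows => ?_
    have hc := ho.isJacobiCuspCoeff ha hF hj hl
    by_cases hbig : k + i' + 2 * m < 12 * n
    · exact hc.first_row_eq_zero_of_lt hrows hbig
    have hforced := h i' (by omega) (n - 1) (by omega)
    rw [show n - 1 + 1 = n by omega] at hforced
    refine hc.eq_zero_of_rowForcedZero hrows hm (fun r hr => ?_) hforced
    split_ifs at hr with hunit
    · exact congrFun (hD n r m (by omega) hr) l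
    · by_contra hne
      have := hc.lt_of_ne_zero n r hne
      push_cast at hr
      omega

end OrderCheck

/-! ### Zeros of the Fourier coefficients -/

section FormOrder

variable {j e : ℕ} {v : Fin (j + 1) → ℂ}

/-- The polynomial `v(t, 1 + it)`. On this chart of the projective line the rational points are all
at finite distance: `(b : d)` is the point `t = b / (d - ib)`. -/
def chart (v : Fin (j + 1) → ℂ) : Polynomial ℂ := dehomogenize (symAct j !![0, 1; 1, I] v)

lemma eval_chart (v : Fin (j + 1) → ℂ) (t : ℂ) : (chart v).eval t = binForm t (1 + I * t) v := by
  simp [chart, eval_dehomogenize, binForm_symAct]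

lemma natDegree_dehomogenize_le (v : Fin (j + 1) → ℂ) : (dehomogenize v).natDegree ≤ j := by
  unfold dehomogenize
  exact Polynomial.natDegree_sum_le_of_forall_le _ _ fun l _ =>
    (Polynomial.natDegree_monomial_le _).trans (Nat.lt_succ_iff.1 l.2)

lemma eq_zero_of_chart_eq_zero (h : chart v = 0) : v = 0 := by
  have hsymm : symAct j !![0, 1; 1, I] v = 0 := funext fun l => by
    rw [← coeff_dehomogenize (symAct j !![0, 1; 1, I] v) l]
    exact congrArg (Polynomial.coeff · l) h
  refine eq_zero_of_binForm_eq_zero fun x y => ?_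
  have hxy := binForm_symAct !![0, 1; 1, I] v (y - I * x) x
  rw [hsymm, map_zero] at hxy
  simpa using hxy.symm

/-- The parameter of the point `(p.1 : p.2)` on `chart`. -/
def chartPoint (p : ℤ × ℤ) : ℂ := p.1 / (p.2 - I * p.1)

lemma sub_I_mul_ne_zero {p : ℤ × ℤ} (hp : IsCoprime p.1 p.2) : (p.2 - I * p.1 : ℂ) ≠ 0 := by
  intro h
  have hre := congrArg Complex.re h
  have him := congrArg Complex.im h
  simp only [sub_re, sub_im, mul_re, mul_im, I_re, I_im, intCast_re, intCast_im, zero_re, zero_im,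
    zero_mul, one_mul, mul_zero, sub_zero, zero_add, zero_sub, neg_eq_zero,
    Int.cast_eq_zero] at hre him
  rw [hre, him] at hp
  exact not_isCoprime_zero_zero hp

/-- The normalized representatives `(b, d)` of the rational points of the projective line. -/
def IsPrimitivePoint (p : ℤ × ℤ) : Prop := Int.gcd p.1 p.2 = 1 ∧ (0 < p.1 ∨ p.1 = 0 ∧ p.2 = 1)

instance : DecidablePred IsPrimitivePoint := fun p =>
  inferInstanceAs (Decidable (Int.gcd p.1 p.2 = 1 ∧ (0 < p.1 ∨ p.1 = 0 ∧ p.2 = 1)))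

lemma IsPrimitivePoint.isCoprime {p : ℤ × ℤ} (hp : IsPrimitivePoint p) : IsCoprime p.1 p.2 :=
  Int.isCoprime_iff_gcd_eq_one.2 hp.1

lemma IsPrimitivePoint.eq_of_mul_eq_mul {p q : ℤ × ℤ} (hp : IsPrimitivePoint p)
    (hq : IsPrimitivePoint q) (h : p.1 * q.2 = q.1 * p.2) : p = q := by
  have hpq : p.1 ∣ q.1 := hp.isCoprime.dvd_of_dvd_mul_right ⟨q.2, h.symm⟩
  have hqp : q.1 ∣ p.1 := hq.isCoprime.dvd_of_dvd_mul_right ⟨p.2, h⟩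
  have hfst : p.1 = q.1 := Int.dvd_antisymm (by rcases hp.2 with h | h <;> omega)
    (by rcases hq.2 with h | h <;> omega) hpq hqp
  refine Prod.ext hfst ?_
  rcases hp.2 with h0 | h0
  · rw [← hfst] at h
    exact (mul_left_cancel₀ h0.ne' h).symm
  · rw [h0.2]
    rcases hq.2 with h1 | h1 <;> omega

lemma chartPoint_injOn : Set.InjOn chartPoint {p | IsPrimitivePoint p} := by
  intro p hp q hq h
  rw [chartPoint, chartPoint, div_eq_div_iff (sub_I_mul_ne_zero hp.isCoprime)
    (sub_I_mul_ne_zero hq.isCoprime)] at h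
  refine hp.eq_of_mul_eq_mul hq ?_
  have hC : (p.1 * q.2 : ℂ) = q.1 * p.2 := by linear_combination h
  exact_mod_cast hC

/-- The binary form attached to `v` vanishes to order at least `e` at the point `(p.1 : p.2)`. -/
def FormOrderGE (v : Fin (j + 1) → ℂ) (p : ℤ × ℤ) (e : ℕ) : Prop :=
  (Polynomial.X - Polynomial.C (chartPoint p)) ^ e ∣ chart v

theorem eq_zero_of_lt_sum_formOrder {s : Finset (ℤ × ℤ)} (hs : ∀ p ∈ s, IsPrimitivePoint p)
    {e : ℤ × ℤ → ℕ} (he : ∀ p ∈ s, FormOrderGE v p (e p)) (hj : j < ∑ p ∈ s, e p) : v = 0 := by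
  refine eq_zero_of_chart_eq_zero (by_contra fun hne => ?_)
  have hdvd : ∏ p ∈ s, (Polynomial.X - Polynomial.C (chartPoint p)) ^ e p ∣ chart v := by
    refine Finset.prod_dvd_of_coprime (fun p hp q hq hpq => IsCoprime.pow ?_) he
    exact Polynomial.isCoprime_X_sub_C_of_isUnit_sub
      (sub_ne_zero.2 fun h => hpq (chartPoint_injOn (hs p hp) (hs q hq) h)).isUnit
  have hdeg := Polynomial.natDegree_le_of_dvd hdvd hne
  rw [Polynomial.natDegree_prod_of_monic _ _ fun p _ => (Polynomial.monic_X_sub_C _).pow _] at hdeg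
  simp only [Polynomial.natDegree_pow, Polynomial.natDegree_X_sub_C, mul_one] at hdeg
  have hle : (chart v).natDegree ≤ j := natDegree_dehomogenize_le _
  omega

lemma formOrderGE_one {p : ℤ × ℤ} (hp : IsCoprime p.1 p.2) (h : binForm p.1 p.2 v = 0) :
    FormOrderGE v p 1 := by
  have hne := sub_I_mul_ne_zero hp
  have hfst : chartPoint p = (p.2 - I * p.1 : ℂ)⁻¹ * p.1 := by rw [chartPoint]; field_simp
  have hsnd : 1 + I * chartPoint p = (p.2 - I * p.1 : ℂ)⁻¹ * p.2 := by
    rw [chartPoint]; field_simp; ring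
  rw [FormOrderGE, pow_one, Polynomial.dvd_iff_isRoot, Polynomial.IsRoot, eval_chart, hsnd, hfst,
    binForm_mul_mul, h, mul_zero]

lemma formOrderGE_of_subst {p : ℤ × ℤ} {u w : ℤ} (hp : u * p.1 + w * p.2 = 1)
    {v' : Fin (j + 1) → ℂ}
    (h : ∀ x y, binForm x y v' = binForm (w * x + p.1 * y) (-u * x + p.2 * y) v)
    (hv' : ∀ l : Fin (j + 1), j < l + e → v' l = 0) : FormOrderGE v p e := by
  have hne : (p.2 - I * p.1 : ℂ) ≠ 0 := sub_I_mul_ne_zero ⟨u, w, hp⟩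
  have hpC : (u * p.1 + w * p.2 : ℂ) = 1 := by exact_mod_cast hp
  let L : Polynomial ℂ := Polynomial.X - Polynomial.C (chartPoint p)
  let M : Polynomial ℂ := Polynomial.C (w : ℂ) + Polynomial.C (u + I * w : ℂ) * Polynomial.X
  have hL (t : ℂ) : (p.2 - I * p.1) * L.eval t = p.2 * t - p.1 * (1 + I * t) := by
    simp only [L, chartPoint, Polynomial.eval_sub, Polynomial.eval_X, Polynomial.eval_C]
    field_simp
    ring
  have hchart : chart v = ∑ l : Fin (j + 1), Polynomial.C (v' l * (p.2 - I * p.1) ^ (j - (l : ℕ))) *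
      (L ^ (j - (l : ℕ)) * M ^ (l : ℕ)) := by
    refine Polynomial.funext fun t => ?_
    have hM : M.eval t = u * t + w * (1 + I * t) := by simp [M]; ring
    have ht := h (p.2 * t - p.1 * (1 + I * t)) (M.eval t)
    rw [hM, show w * (p.2 * t - p.1 * (1 + I * t)) + p.1 * (u * t + w * (1 + I * t)) = t by
      linear_combination t * hpC, show -u * (p.2 * t - p.1 * (1 + I * t)) +
      p.2 * (u * t + w * (1 + I * t)) = 1 + I * t by linear_combination (1 + I * t) * hpC, ← hM,
      ← hL] at ht
    rw [eval_chart, ← ht, binForm_apply, Polynomial.eval_finsetSum]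
    simp only [Polynomial.eval_mul, Polynomial.eval_pow, Polynomial.eval_C, mul_pow, mul_assoc]
  rw [FormOrderGE, hchart]
  refine Finset.dvd_sum fun l _ => ?_
  by_cases hl : j < l + e
  · simp [hv' l hl]
  · exact ((pow_dvd_pow L (by omega)).mul_right _).mul_left _

end FormOrder

section FormOrderFourier

variable {j : ℕ} {F : (Fin 2 → Fin 2 → ℂ) → (Fin (j + 1) → ℂ)}
  {a : ℤ → ℤ → ℤ → Fin (j + 1) → ℂ} {n r m : ℤ}

/-- The value at the point `p` of the binary quadratic form `[n, r, m]`. -/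
def quadValue (n r m : ℤ) (p : ℤ × ℤ) : ℤ := n * p.1 ^ 2 + r * p.1 * p.2 + m * p.2 ^ 2

variable {k : ℤ}

lemma IsFourierCoeff.formOrderGE (ha : IsFourierCoeff F a)
    (hF : IsSiegelCuspForm j k Sp4Z (fun _ => 1) F) {p : ℤ × ℤ} (hp : IsCoprime p.1 p.2) {i : ℕ}
    (ho : CoeffOrderGE a (quadValue n r m p) i) : FormOrderGE (a n r m) p i := by
  obtain ⟨u, w, huw⟩ := hp
  have hsubst := ha.binForm_subst hF (α := w) (β := p.1) (γ := -u) (δ := p.2) (e := 1)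
    (by linear_combination huw) (by norm_num) n r m
  simp only [Int.cast_one, _root_.one_zpow, one_mul, Int.cast_neg] at hsubst
  exact formOrderGE_of_subst huw hsubst fun l hl => ho _ _ l hl

lemma IsFourierCoeff.coeffOrderGE_of_nonpos (ha : IsFourierCoeff F a)
    (hF : IsSiegelCuspForm j k Sp4Z (fun _ => 1) F) (hm : m ≤ 0) (i : ℕ) :
    CoeffOrderGE a m i := by
  refine fun n r l _ => by_contra fun hne => hm.not_gt (ha.pos_of_ne_zero hF (n := n) (r := r) ?_).1
  exact fun h => hne (congrFun h l)

/-- The normalized points with both coordinates at most `B` in absolute value. -/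
def primitivePoints (B : ℕ) : Finset (ℤ × ℤ) :=
  (Finset.Icc 0 (B : ℤ) ×ˢ Finset.Icc (-B : ℤ) B).filter IsPrimitivePoint

lemma isPrimitivePoint_of_mem {B : ℕ} {p : ℤ × ℤ} (hp : p ∈ primitivePoints B) :
    IsPrimitivePoint p := (Finset.mem_filter.1 hp).2

lemma IsFourierCoeff.formOrderGE_toNat (ha : IsFourierCoeff F a)
    (hF : IsSiegelCuspForm j k Sp4Z (fun _ => 1) F) {o : ℕ → ℕ}
    (ho : ∀ N : ℕ, CoeffOrderGE a N (o N)) {p : ℤ × ℤ} (hp : IsPrimitivePoint p) :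
    FormOrderGE (a n r m) p (o (quadValue n r m p).toNat) := by
  refine ha.formOrderGE hF hp.isCoprime ?_
  rcases le_or_gt (quadValue n r m p) 0 with h | h
  · exact ha.coeffOrderGE_of_nonpos hF h _
  · have := ho (quadValue n r m p).toNat
    rwa [Int.toNat_of_nonneg h.le] at this

theorem IsFourierCoeff.eq_zero_of_lt_sum (ha : IsFourierCoeff F a)
    (hF : IsSiegelCuspForm j k Sp4Z (fun _ => 1) F) {o : ℕ → ℕ}
    (ho : ∀ N : ℕ, CoeffOrderGE a N (o N)) {s : Finset (ℤ × ℤ)} (hs : ∀ p ∈ s, IsPrimitivePoint p)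
    (hj : j < ∑ p ∈ s, o (quadValue n r m p).toNat) : a n r m = 0 :=
  eq_zero_of_lt_sum_formOrder hs (fun p hp => ha.formOrderGE_toNat hF ho (hs p hp)) hj

end FormOrderFourier

/-! ### Vanishing of all Fourier coefficients -/

section Vanishing

variable {j : ℕ} {k : ℤ} {F : (Fin 2 → Fin 2 → ℂ) → (Fin (j + 1) → ℂ)}
  {a : ℤ → ℤ → ℤ → Fin (j + 1) → ℂ} {n r m : ℤ} {D : ℕ}

lemma IsFourierCoeff.eq_zero_of_swap (ha : IsFourierCoeff F a)
    (hF : IsSiegelCuspForm j k Sp4Z (fun _ => 1) F) (h : a m r n = 0) : a n r m = 0 :=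
  ha.eq_zero_of_subst hF (α := 0) (β := 1) (γ := 1) (δ := 0) (by norm_num) (by simpa using h)

lemma IsFourierCoeff.eq_zero_of_add_eq_zero (ha : IsFourierCoeff F a)
    (hF : IsSiegelCuspForm j k Sp4Z (fun _ => 1) F) (s : ℤ)
    (h : a (n + r * s + m * s ^ 2) (r + 2 * m * s) m = 0) : a n r m = 0 :=
  ha.eq_zero_of_subst hF (α := 1) (β := 0) (γ := s) (δ := 1) (by norm_num)
    (by simpa [mul_right_comm] using h)

lemma unitDiscriminantGE_one (ha : IsFourierCoeff F a)
    (hF : IsSiegelCuspForm j k Sp4Z (fun _ => 1) F) : UnitDiscriminantGE a 1 := by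
  intro n r m _ hlt
  by_contra hne
  have := (ha.pos_of_ne_zero hF hne).2.2
  push_cast at hlt
  omega

/-- The forms of discriminant `-D` representing `1` are all equivalent to
`[(D + 1) / 4, D % 2, 1]`. -/
lemma UnitDiscriminantGE.succ (hD : UnitDiscriminantGE a D) (ha : IsFourierCoeff F a)
    (hF : IsSiegelCuspForm j k Sp4Z (fun _ => 1) F)
    (h : D % 4 = 0 ∨ D % 4 = 3 → a ((D + 1) / 4 : ℕ) (D % 2 : ℕ) 1 = 0) :
    UnitDiscriminantGE a (D + 1) := by
  have hreduced (n r : ℤ) (hr : 4 * n - r ^ 2 = D) : a n r 1 = 0 := by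
    refine ha.eq_zero_of_add_eq_zero hF (-(r / 2)) ?_
    obtain ⟨q, e, he, rfl⟩ : ∃ q e : ℤ, (e = 0 ∨ e = 1) ∧ r = 2 * q + e :=
      ⟨r / 2, r % 2, by omega, by omega⟩
    have hq : (2 * q + e) / 2 = q := by omega
    have hn : 4 * (n - q ^ 2 - q * e) = D + e := by
      rcases he with rfl | rfl <;> linear_combination hr
    rw [hq, show n + (2 * q + e) * -q + 1 * (-q) ^ 2 = n - q ^ 2 - q * e by ring,
      show 2 * q + e + 2 * 1 * -q = e by ring]
    generalize n - q ^ 2 - q * e = n' at hn ⊢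
    have h' := h (by omega)
    rwa [show (((D + 1) / 4 : ℕ) : ℤ) = n' by omega, show ((D % 2 : ℕ) : ℤ) = e by omega] at h'
  intro n r m hnm hlt
  rcases lt_or_ge (4 * n * m - r ^ 2) (D : ℤ) with hlt' | hge
  · exact hD n r m hnm hlt'
  have heq : 4 * n * m - r ^ 2 = D := by push_cast at hlt; omega
  rcases hnm with rfl | rfl
  · exact ha.eq_zero_of_swap hF (hreduced m r (by linarith))
  · exact hreduced n r (by linarith)

lemma UnitDiscriminantGE.eq_zero_of_index_one {w : ℕ} {F : (Fin 2 → Fin 2 → ℂ) → (Fin (j + 1) → ℂ)}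
    (hD : UnitDiscriminantGE a D) (ha : IsFourierCoeff F a)
    (hF : IsSiegelCuspForm j w Sp4Z (fun _ => 1) F) (hj : Even j) {s : ℕ} (hs : 4 * s < D + 4)
    (hjs : w + j + 3 ≤ 12 * s) (n r : ℤ) : a n r 1 = 0 := by
  have hrows (n : ℤ) (hn : n < s) (r : ℤ) : a n r (1 : ℕ) = 0 := by
    have hnD : 4 * n < D := by omega
    refine hD n r _ (Or.inr rfl) ?_
    push_cast
    linarith [sq_nonneg r, hnD]
  have ho : CoeffOrderGE a (1 : ℕ) (j + 1) :=
    coeffOrderGE_of_rows_eq_zero ha hF hj hrows (by omega)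
  exact ho.eq_zero (Nat.lt_succ_self j) n r

end Vanishing

section WeightTwo

/-- Lower bounds for the orders of the Fourier–Jacobi coefficients of a Siegel cusp form of weight 2
(and arbitrary even `j`) with `UnitDiscriminantGE a D`: an entry `(m, i)` means order at least `i`
in index `m`. The entries were found by computer search and are certified by `orderCheck`. -/
def orderTable : ℕ → List (ℕ × ℕ)
  | 3 => [(1, 8), (3, 4), (7, 2), (13, 1)]
  | 4 => [(1, 14), (2, 6), (5, 3), (10, 2), (13, 2)]
  | 7 => [(1, 20), (2, 9), (4, 5), (7, 4), (8, 3), (11, 2), (14, 2)]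
  | 8 => [(1, 26), (2, 14), (3, 7), (6, 4), (9, 3)]
  | 11 => [(1, 32), (3, 10), (5, 6), (9, 3)]
  | 12 => [(1, 38), (3, 14), (4, 8)]
  | 15 => [(1, 44), (4, 10), (6, 6)]
  | 16 => [(1, 50), (4, 14), (5, 8)]
  | 19 => [(1, 56), (5, 10)]
  | 20 => [(1, 62), (5, 12)]
  | _ => []

/-- The bound recorded in `orderTable D` for index `N`, or `0`. -/
def tableOrder (D N : ℕ) : ℕ := ((orderTable D).lookup N).getD 0

lemma orderCheck_orderTable :
    ∀ D ∈ Finset.range 21, ∀ e ∈ orderTable D, 0 < e.1 ∧ orderCheck D 2 e.1 e.2 := by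
  decide +kernel

/-- The order in index `N` forced by weight 2, when all coefficients of index less than `μ` and
those at `[n, r, μ]` with `n < ν` vanish. -/
def frontierOrder (μ ν N : ℕ) : ℕ := if N = μ then 12 * ν - 2 * μ - 2 else 12 * μ - 2 * N - 2

lemma sixtyFive_le_sum_tableOrder : ∀ D ∈ Finset.Icc 4 20, D % 4 = 0 ∨ D % 4 = 3 →
    65 ≤ ∑ p ∈ primitivePoints 5,
      tableOrder D (quadValue ((D + 1) / 4 : ℕ) (D % 2 : ℕ) 1 p).toNat := by
  decide +kernel

lemma sixtyFive_le_sum_frontierOrder : ∀ μ : ℕ, μ ∈ Finset.Icc 2 3 →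
    ∀ ν ∈ Finset.Icc μ (6 - μ), ∀ r ∈ Finset.Icc (-μ : ℤ) μ,
    65 ≤ ∑ p ∈ primitivePoints 5, frontierOrder μ ν (quadValue ν r μ p).toNat := by
  decide +kernel

variable {j : ℕ} {F : (Fin 2 → Fin 2 → ℂ) → (Fin (j + 1) → ℂ)}
  {a : ℤ → ℤ → ℤ → Fin (j + 1) → ℂ} {D μ ν : ℕ}

lemma UnitDiscriminantGE.coeffOrderGE_tableOrder (hD : UnitDiscriminantGE a D)
    (ha : IsFourierCoeff F a) (hF : IsSiegelCuspForm j 2 Sp4Z (fun _ => 1) F) (hj : Even j)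
    (hD20 : D ≤ 20) (N : ℕ) : CoeffOrderGE a N (tableOrder D N) := by
  rw [tableOrder]
  cases hlookup : (orderTable D).lookup N with
  | none => exact coeffOrderGE_zero a N
  | some i =>
    obtain ⟨l₁, l₂, hl, -⟩ := List.lookup_eq_some_iff.1 hlookup
    have hmem : (N, i) ∈ orderTable D := hl ▸ List.mem_append_right l₁ List.mem_cons_self
    obtain ⟨hN, hcheck⟩ := orderCheck_orderTable D (Finset.mem_range.2 (by omega)) _ hmem
    exact hD.coeffOrderGE ha (k := 2) hF hj hN hcheck

theorem unitDiscriminantGE_of_coeff_eq_zero (ha : IsFourierCoeff F a)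
    (hF : IsSiegelCuspForm j 2 Sp4Z (fun _ => 1) F) (hj : Even j) (hj65 : j < 65)
    (h : a 1 1 1 = 0) (hD1 : 1 ≤ D) (hD : D ≤ 21) : UnitDiscriminantGE a D := by
  induction D, hD1 using Nat.le_induction with
  | base => exact unitDiscriminantGE_one ha hF
  | succ D hD1 ih =>
    have hD' := ih (by omega)
    refine hD'.succ ha hF fun hmod => ?_
    rcases Nat.lt_or_ge D 4 with hlt | hge
    · obtain rfl : D = 3 := by omega
      exact h
    · exact ha.eq_zero_of_lt_sum hF (hD'.coeffOrderGE_tableOrder ha hF hj (by omega))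
        (fun _ => isPrimitivePoint_of_mem)
        (hj65.trans_le (sixtyFive_le_sum_tableOrder D (Finset.mem_Icc.2 (by omega)) hmod))

lemma coeffOrderGE_frontierOrder (ha : IsFourierCoeff F a)
    (hF : IsSiegelCuspForm j 2 Sp4Z (fun _ => 1) F) (hj : Even j)
    (hlow : ∀ m < (μ : ℤ), ∀ n r, a n r m = 0) (hrows : ∀ n < (ν : ℤ), ∀ r, a n r μ = 0) (N : ℕ) :
    CoeffOrderGE a N (frontierOrder μ ν N) := by
  have hzero (s : ℕ) (h : ∀ n < (s : ℤ), ∀ r, a n r N = 0) :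
      CoeffOrderGE a N (12 * s - 2 * N - 2) := by
    rcases le_or_gt (2 * N + 2) (12 * s) with hle | hgt
    · exact coeffOrderGE_of_rows_eq_zero ha (k := 2) hF hj h (by omega)
    · rw [show 12 * s - 2 * N - 2 = 0 by omega]
      exact coeffOrderGE_zero a N
  rw [frontierOrder]
  split_ifs with hN
  · subst hN
    exact hzero ν hrows
  · exact hzero μ fun n hn r => ha.eq_zero_of_swap hF (hlow n hn N r)

lemma eq_zero_of_frontier (ha : IsFourierCoeff F a)
    (hF : IsSiegelCuspForm j 2 Sp4Z (fun _ => 1) F) (hj : Even j) (hj65 : j < 65) (hμ : 2 ≤ μ)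
    (hlow : ∀ m < (μ : ℤ), ∀ n r, a n r m = 0) (hrows : ∀ n < (ν : ℤ), ∀ r, a n r μ = 0)
    (hμν : μ ≤ ν) {r : ℤ} (hr : |r| ≤ μ) : a ν r μ = 0 := by
  have ho := coeffOrderGE_frontierOrder ha hF hj hlow hrows
  rcases le_or_gt 7 (μ + ν) with hlarge | hsmall
  · refine ha.eq_zero_of_lt_sum hF ho (s := {(0, 1), (1, 0)}) (by decide) ?_
    rw [Finset.sum_pair (by decide)]
    simp only [quadValue, frontierOrder]
    norm_num
    split_ifs <;> omega
  · refine ha.eq_zero_of_lt_sum hF ho (s := primitivePoints 5)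
      (fun _ => isPrimitivePoint_of_mem) (hj65.trans_le ?_)
    exact sixtyFive_le_sum_frontierOrder μ (Finset.mem_Icc.2 (by omega)) ν
      (Finset.mem_Icc.2 (by omega)) r (Finset.mem_Icc.2 (abs_le.1 hr))

lemma eq_zero_of_lower_index (ha : IsFourierCoeff F a)
    (hF : IsSiegelCuspForm j 2 Sp4Z (fun _ => 1) F) (hj : Even j) (hj65 : j < 65) (hμ : 2 ≤ μ)
    (hlow : ∀ m < (μ : ℤ), ∀ n r, a n r m = 0) (n r : ℤ) : a n r μ = 0 := by
  rcases lt_or_ge n (μ : ℤ) with hn | hn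
  · exact ha.eq_zero_of_swap hF (hlow n hn _ _)
  lift n to ℕ using by omega
  induction n using Nat.strong_induction_on generalizing r with
  | _ ν ih =>
    have hrows : ∀ n < (ν : ℤ), ∀ r, a n r μ = 0 := fun n hnν r => by
      rcases lt_or_ge n (μ : ℤ) with hn | hn
      · exact ha.eq_zero_of_swap hF (hlow n hn _ _)
      · lift n to ℕ using by omega
        exact ih n (by omega) r hn
    rcases le_or_gt |r| (μ : ℤ) with hr | hr
    · exact eq_zero_of_frontier ha hF hj hj65 hμ hlow hrows (by omega) hr
    rcases lt_abs.1 hr with hr | hr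
    · exact ha.eq_zero_of_add_eq_zero hF (-1) (hrows _ (by linarith) _)
    · exact ha.eq_zero_of_add_eq_zero hF 1 (hrows _ (by linarith) _)

theorem eq_zero_of_coeff_eq_zero (ha : IsFourierCoeff F a)
    (hF : IsSiegelCuspForm j 2 Sp4Z (fun _ => 1) F) (hj : Even j) (hj65 : j < 65)
    (h : a 1 1 1 = 0) : F = 0 := by
  have hD : UnitDiscriminantGE a 21 :=
    unitDiscriminantGE_of_coeff_eq_zero ha hF hj hj65 h (by norm_num) le_rfl
  refine ha.eq_zero hF fun n r m => ?_
  by_cases hm : m ≤ 0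
  · exact by_contra fun hne => hm.not_gt (ha.pos_of_ne_zero hF hne).1
  lift m to ℕ using by omega
  induction m using Nat.strong_induction_on generalizing n r with
  | _ μ ih =>
    rcases Nat.lt_or_ge μ 2 with hμ | hμ
    · obtain rfl : μ = 1 := by omega
      exact hD.eq_zero_of_index_one ha (w := 2) hF hj (s := 6) (by norm_num) (by omega) n r
    refine eq_zero_of_lower_index ha hF hj hj65 hμ (fun m hm n r => ?_) n r
    rcases le_or_gt m 0 with h0 | h0
    · exact by_contra fun hne => h0.not_gt (ha.pos_of_ne_zero hF hne).1
    · lift m to ℕ using h0.le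
      exact ih m (by omega) n r (by omega)

end WeightTwo

section Dimension

variable {j : ℕ}

/-- The orbit of the point `(1 : t)` under the automorphisms of `x² + xy + y²`. -/
def hexagonOrbit (t : ℤ) : Finset (ℤ × ℤ) :=
  {(1, t), (t, 1), (t, -(t + 1)), (t + 1, -t), (t + 1, -1), (1, -(t + 1))}

lemma IsFourierCoeff.binForm_eq_zero_of_mem_hexagonOrbit {k : ℤ}
    {F : (Fin 2 → Fin 2 → ℂ) → (Fin (j + 1) → ℂ)} {a : ℤ → ℤ → ℤ → Fin (j + 1) → ℂ}
    (ha : IsFourierCoeff F a) (hF : IsSiegelCuspForm j k Sp4Z (fun _ => 1) F) {t : ℤ}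
    (ht : binForm 1 t (a 1 1 1) = 0) {p : ℤ × ℤ} (hp : p ∈ hexagonOrbit t) :
    binForm p.1 p.2 (a 1 1 1) = 0 := by
  have hneg {x y : ℂ} (h : binForm x y (a 1 1 1) = 0) : binForm (-x) (-y) (a 1 1 1) = 0 := by
    rw [← neg_one_mul x, ← neg_one_mul y, binForm_mul_mul, h, mul_zero]
  have hswap {x y : ℂ} (h : binForm x y (a 1 1 1) = 0) : binForm y x (a 1 1 1) = 0 := by
    have hxy := ha.binForm_subst hF (α := 0) (β := 1) (γ := 1) (δ := 0) (e := -1) (by norm_num)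
      (by norm_num) 1 1 1 x y
    norm_num [h] at hxy
    exact hxy.symm
  have hrot {x y : ℂ} (h : binForm x y (a 1 1 1) = 0) : binForm (-y) (x + y) (a 1 1 1) = 0 := by
    have hxy := ha.binForm_subst hF (α := 0) (β := -1) (γ := 1) (δ := 1) (e := 1) (by norm_num)
      (by norm_num) 1 1 1 x y
    norm_num [h] at hxy
    exact hxy.symm
  have hrot₁ : binForm (-t) (1 + t) (a 1 1 1) = 0 := hrot ht
  have hrot₂ : binForm (-(1 + t)) 1 (a 1 1 1) = 0 := by simpa using hrot hrot₁
  have hneg₁ : binForm t (-(1 + t)) (a 1 1 1) = 0 := by simpa using hneg hrot₁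
  have hneg₂ : binForm (1 + t) (-1) (a 1 1 1) = 0 := by simpa using hneg hrot₂
  simp only [hexagonOrbit, Finset.mem_insert, Finset.mem_singleton] at hp
  rcases hp with rfl | rfl | rfl | rfl | rfl | rfl <;> push_cast [add_comm (t : ℂ) 1]
  exacts [ht, hswap ht, hneg₁, hswap hrot₁, hneg₂, hswap hrot₂]

/-- The points at which `a 1 1 1` is made to vanish: those of `primitivePoints 5`, where it vanishes
by `orderTable 3`, and the orbits of `(1 : 6), …, (1 : 5 + s)`, imposed by `s` linear conditions. -/
def evaluationPoints (s : ℕ) : Finset (ℤ × ℤ) :=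
  primitivePoints 5 ∪ (Finset.range s).biUnion fun i => hexagonOrbit (6 + i)

lemma isPrimitivePoint_of_mem_evaluationPoints :
    ∀ s ∈ Finset.range 3, ∀ p ∈ evaluationPoints s, IsPrimitivePoint p := by
  decide +kernel

/-- The vanishing order of `a 1 1 1` at `p` that `orderTable 3` or one linear condition forces. -/
def evaluationOrder (p : ℤ × ℤ) : ℕ :=
  if p ∈ primitivePoints 5 then tableOrder 3 (quadValue 1 1 1 p).toNat else 1

lemma le_sum_evaluationOrder :
    ∀ s ∈ Finset.range 3, 54 + 6 * s ≤ ∑ p ∈ evaluationPoints s, evaluationOrder p := by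
  decide +kernel

theorem coeff_eq_zero_of_binForm_eq_zero {F : (Fin 2 → Fin 2 → ℂ) → (Fin (j + 1) → ℂ)}
    {a : ℤ → ℤ → ℤ → Fin (j + 1) → ℂ} (ha : IsFourierCoeff F a)
    (hF : IsSiegelCuspForm j 2 Sp4Z (fun _ => 1) F) (hj : Even j) {s : ℕ} (hs : s ≤ 2)
    (hjs : j < 54 + 6 * s) (h : ∀ i < s, binForm 1 (6 + i : ℤ) (a 1 1 1) = 0) : a 1 1 1 = 0 := by
  have hmem : s ∈ Finset.range 3 := Finset.mem_range.2 (by omega)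
  have hprim := isPrimitivePoint_of_mem_evaluationPoints s hmem
  refine eq_zero_of_lt_sum_formOrder hprim (fun p hp => ?_)
    (hjs.trans_le (le_sum_evaluationOrder s hmem))
  rw [evaluationOrder]
  split_ifs with hp5
  · have hD : UnitDiscriminantGE a 3 := ((unitDiscriminantGE_one ha hF).succ ha hF (by omega)).succ
      ha hF (by omega)
    exact ha.formOrderGE_toNat hF (hD.coeffOrderGE_tableOrder ha hF hj (by norm_num)) (hprim p hp)
  · obtain ⟨i, hi, hpi⟩ := Finset.mem_biUnion.1 ((Finset.mem_union.1 hp).resolve_left hp5)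
    exact formOrderGE_one (hprim p hp).isCoprime
      (ha.binForm_eq_zero_of_mem_hexagonOrbit hF (h i (Finset.mem_range.1 hi)) hpi)

lemma IsFourierCoeff.add {F G : (Fin 2 → Fin 2 → ℂ) → (Fin (j + 1) → ℂ)}
    {a b : ℤ → ℤ → ℤ → Fin (j + 1) → ℂ} (ha : IsFourierCoeff F a) (hb : IsFourierCoeff G b) :
    IsFourierCoeff (F + G) (a + b) := fun p hp => by
  simpa only [Pi.add_apply, smul_add] using (ha p hp).add (hb p hp)

lemma IsFourierCoeff.const_smul {F : (Fin 2 → Fin 2 → ℂ) → (Fin (j + 1) → ℂ)}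
    {a : ℤ → ℤ → ℤ → Fin (j + 1) → ℂ} (ha : IsFourierCoeff F a) (c : ℂ) :
    IsFourierCoeff (c • F) (c • a) := fun p hp => by
  simpa only [Pi.smul_apply, smul_comm c] using (ha p hp).const_smul c

/-- The Fourier coefficients of a Siegel cusp form of level one. -/
def siegelCoeff {k : ℤ} (F : SiegelCusp j k Sp4Z (fun _ => 1)) : ℤ → ℤ → ℤ → Fin (j + 1) → ℂ :=
  Classical.choose F.2.exists_isFourierCoeff

lemma isFourierCoeff_siegelCoeff {k : ℤ} (F : SiegelCusp j k Sp4Z (fun _ => 1)) :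
    IsFourierCoeff F.1 (siegelCoeff F) := Classical.choose_spec F.2.exists_isFourierCoeff

/-- The `(n, r, m)`-th Fourier coefficient as a linear map of the form. -/
def siegelCoeffₗ (j : ℕ) (k n r m : ℤ) :
    SiegelCusp j k Sp4Z (fun _ => 1) →ₗ[ℂ] (Fin (j + 1) → ℂ) where
  toFun F := siegelCoeff F n r m
  map_add' F G := by
    rw [(isFourierCoeff_siegelCoeff (F + G)).unique
      ((isFourierCoeff_siegelCoeff F).add (isFourierCoeff_siegelCoeff G))]
    rfl
  map_smul' c F := by
    rw [(isFourierCoeff_siegelCoeff (c • F)).unique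
      ((isFourierCoeff_siegelCoeff F).const_smul c)]
    rfl

/-- The values of the coefficient at `[1, 1, 1]` at the points `(1 : 6), …, (1 : 5 + s)`. -/
def evaluationMap (j s : ℕ) : SiegelCusp j 2 Sp4Z (fun _ => 1) →ₗ[ℂ] (Fin s → ℂ) :=
  LinearMap.pi fun i => binForm 1 (6 + i : ℤ) ∘ₗ siegelCoeffₗ j 2 1 1 1

lemma evaluationMap_injective {s : ℕ} (hs : s ≤ 2) (hjs : j < 54 + 6 * s) :
    Function.Injective (evaluationMap j s) := by
  refine (injective_iff_map_eq_zero _).2 fun F hF => Subtype.ext ?_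
  have ha := isFourierCoeff_siegelCoeff F
  rcases Nat.even_or_odd j with hj | hj
  · refine eq_zero_of_coeff_eq_zero ha F.2 hj (by grind) ?_
    exact coeff_eq_zero_of_binForm_eq_zero ha F.2 hj hs hjs fun i hi => congrFun hF ⟨i, hi⟩
  · exact ha.eq_zero F.2 (ha.eq_zero_of_odd F.2 hj)

end Dimension

theorem dim_bounds_Sj2_level_one_general (s : ℕ) (hs : s ≤ 2) (j : ℕ) (hj : j < 54 + 6 * s) :
    Module.rank ℂ ↥(SiegelCusp j 2 Sp4Z (fun _ => 1)) ≤ s := by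
  simpa using LinearMap.rank_le_of_injective (evaluationMap j s) (evaluationMap_injective hs hj)

/-- For every integer `j` with `0 ≤ j < 54` one has `dim S_{j,2}(Γ₂) ≤ 1`, and for every
integer `j` with `0 ≤ j < 66` one has `dim S_{j,2}(Γ₂) ≤ 2`. -/
theorem dim_bounds_Sj2_level_one :
    (∀ j : ℕ, j < 54 → Module.rank ℂ ↥(SiegelCusp j 2 Sp4Z (fun _ => 1)) ≤ 1) ∧
    (∀ j : ℕ, j < 66 → Module.rank ℂ ↥(SiegelCusp j 2 Sp4Z (fun _ => 1)) ≤ 2) :=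
  ⟨fun j hj => by simpa using dim_bounds_Sj2_level_one_general 1 (by norm_num) j (by omega),
    fun j hj => by simpa using dim_bounds_Sj2_level_one_general 2 le_rfl j (by omega)⟩
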